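/- arXiv:2105.14084 — 2 statements merged into one kernel-verified Lean document; each statement's English description precedes it below -/
import Mathlib

section
/- Let (ε_n)_{n≥1} be a sequence of positive reals such that limsup_{n→∞} ε_n < 2 − c₁ for some c₁ > 0 and liminf_{n→∞} ε_n √(log n) > C₂ for some C₂ > 0 depending only on c₁. For each n, let (X, y) be an isotropic Gaussian sample of size n in dimension d_n with fixed labels y ∈ {−1,+1}ⁿ. Then the probability that support vector proliferation occurs for the ℓ₂-SVM converges, as n → ∞, to 0 if d_n = ⌈(2 − ε_n) n ln n⌉, and to 1 if d_n = ⌈(2 + ε_n) n ln n⌉. -/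
open MeasureTheory ProbabilityTheory Matrix Filter

noncomputable section

/-- Euclidean norm of a finite real vector. -/
def enorm2 {k : ℕ} (w : Fin k → ℝ) : ℝ := Real.sqrt (∑ j, (w j) ^ 2)

/-- Feasibility for the hard-margin ℓ₂-SVM problem. -/
def SVMfeas {n d : ℕ} (X : Matrix (Fin n) (Fin d) ℝ) (y : Fin n → ℝ) (w : Fin d → ℝ) : Prop :=
  ∀ i, 1 ≤ y i * (X i ⬝ᵥ w)

/-- Feasibility for the interpolation problem. -/
def Interpfeas {n d : ℕ} (X : Matrix (Fin n) (Fin d) ℝ) (y : Fin n → ℝ) (w : Fin d → ℝ) : Prop :=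
  ∀ i, y i * (X i ⬝ᵥ w) = 1

/-- Support vector proliferation: the ℓ₂-SVM problem and the minimum-ℓ₂-norm interpolation
problem have a common minimizer. -/
def SVPholds {n d : ℕ} (X : Matrix (Fin n) (Fin d) ℝ) (y : Fin n → ℝ) : Prop :=
  ∃ w : Fin d → ℝ,
    SVMfeas X y w ∧ (∀ w', SVMfeas X y w' → enorm2 w ≤ enorm2 w') ∧
    Interpfeas X y w ∧ (∀ w', Interpfeas X y w' → enorm2 w ≤ enorm2 w')

/-- `X` has i.i.d. standard Gaussian entries (equivalently, its rows are i.i.d. `N(0, I_d)`). -/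
structure IsGaussSample {Ω : Type*} [MeasurableSpace Ω] (μ : Measure Ω)
    {n d : ℕ} (X : Ω → Matrix (Fin n) (Fin d) ℝ) : Prop where
  meas : ∀ i j, Measurable fun ω => X ω i j
  indep : iIndepFun (fun (p : Fin n × Fin d) ω => X ω p.1 p.2) μ
  law : ∀ i j, Measure.map (fun ω => X ω i j) μ = gaussianReal 0 1

section PartA
open MeasureTheory ProbabilityTheory Matrix Filter
open scoped RealInnerProductSpace ENNReal

noncomputable section

theorem loo_le {ι X : Type*} [Fintype ι] [DecidableEq ι] [MeasurableSpace X] (μ : Measure X)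
    [IsProbabilityMeasure μ] (i : ι) {A B : Set (ι → X)} (hA : MeasurableSet A)
    (hB : MeasurableSet B) (κ : ℝ≥0∞)
    (h : ∀ x : ι → X, μ {z | Function.update x i z ∈ A} ≤ κ * μ {z | Function.update x i z ∈ B}) :
    Measure.pi (fun _ : ι => μ) A ≤ κ * Measure.pi (fun _ : ι => μ) B := by
  rw [← lintegral_indicator_one hA, ← lintegral_indicator_one hB, ← lintegral_const_mul _ (measurable_one.indicator hB)]
  refine lintegral_le_of_lmarginal_le {i} (measurable_one.indicator hA)
    ((measurable_one.indicator hB).const_mul _) ?_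
  intro x
  rw [lmarginal_singleton, lmarginal_singleton]
  have hu : Measurable (Function.update x i) := measurable_update x
  have e1 : ∀ C : Set (ι → X), MeasurableSet C → ∫⁻ z, C.indicator (1 : (ι → X) → ℝ≥0∞) (Function.update x i z) ∂μ =
      μ {z | Function.update x i z ∈ C} := by
    intro C hC
    have := lintegral_indicator_one (μ := μ) (hu hC)
    exact this
  have e2 : ∫⁻ z, κ * B.indicator (1 : (ι → X) → ℝ≥0∞) (Function.update x i z) ∂μ = κ * ∫⁻ z, B.indicator (1 : (ι → X) → ℝ≥0∞) (Function.update x i z) ∂μ :=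
    lintegral_const_mul _ ((measurable_one.indicator hB).comp hu)
  have h3 := h x
  rw [← e1 A hA, ← e1 B hB, ← e2] at h3
  exact h3

section gauss
variable {E : Type*} [NormedAddCommGroup E] [InnerProductSpace ℝ E] [FiniteDimensional ℝ E]
  [MeasurableSpace E] [BorelSpace E]

theorem g_map_inner (p : E) :
    (stdGaussian E).map (fun z => ⟪p, z⟫) = gaussianReal 0 (‖p‖₊ ^ 2) := by
  have h := IsGaussian.map_eq_gaussianReal (μ := stdGaussian E) (innerSL ℝ p)
  have h2 := variance_dual_stdGaussian (E := E) (innerSL ℝ p)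
  rw [h2] at h
  simp only [integral_strongDual_stdGaussian, innerSL_apply_norm] at h
  rw [show (‖p‖₊ ^ 2) = (‖p‖ ^ 2).toNNReal from ?_]
  · exact h
  · ext; simp

theorem g_tail (p : E) {v : ℝ} (hv : 0 < v) (hp : ‖p‖ ^ 2 ≤ v) :
    stdGaussian E {z | 1 ≤ ⟪p, z⟫} ≤ ENNReal.ofReal (Real.exp (-(1 / (2 * v)))) := by
  have h := measure_ge_le_exp_mul_mgf (μ := stdGaussian E) (X := fun z => ⟪p, z⟫) 1 (t := 1 / v)
    (by positivity) ?_
  · have hm : mgf (fun z => ⟪p, z⟫) (stdGaussian E) (1 / v) = Real.exp (‖p‖ ^ 2 * (1 / v) ^ 2 / 2) := by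
      have := mgf_gaussianReal (p := stdGaussian E) (g_map_inner p) (1 / v)
      rw [this]; simp
    rw [hm, ← Real.exp_add] at h
    rw [measureReal_def] at h
    rw [ENNReal.le_ofReal_iff_toReal_le (measure_ne_top _ _) (Real.exp_pos _).le]
    refine h.trans (Real.exp_le_exp.2 ?_)
    have : ‖p‖ ^ 2 * (1 / v) ^ 2 / 2 ≤ v * (1 / v) ^ 2 / 2 := by gcongr
    refine (add_le_add_right this _).trans (le_of_eq ?_)
    field_simp; ring
  · have := integrable_exp_mul_gaussianReal (μ := 0) (v := ‖p‖₊ ^ 2) (1 / v)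
    rw [← g_map_inner p, integrable_map_measure (by fun_prop) (by fun_prop)] at this
    exact this

theorem g_lower_real (v : NNReal) (hv : v ≠ 0) (t : ℝ) (ht : 0 ≤ t) :
    ENNReal.ofReal ((√(2 * Real.pi))⁻¹ * Real.exp (-((t / √v + 1) ^ 2 / 2))) ≤ gaussianReal 0 v (Set.Ioi t) := by
  have hv0 : (0 : ℝ) < v := by positivity
  have hs : 0 < √(v : ℝ) := by positivity
  rw [gaussianReal_apply 0 hv]
  calc _ = ∫⁻ x in Set.Ioc t (t + √v), ENNReal.ofReal ((√(2 * Real.pi * v))⁻¹ * Real.exp (-((t / √v + 1) ^ 2 / 2))) := by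
        rw [setLIntegral_const, Real.volume_Ioc, ← ENNReal.ofReal_mul (by positivity)]
        congr 1
        rw [Real.sqrt_mul (x := 2 * Real.pi) (by positivity)]
        field_simp
        ring
    _ ≤ ∫⁻ x in Set.Ioc t (t + √v), gaussianPDF 0 v x := by
        refine setLIntegral_mono' measurableSet_Ioc fun x hx => ?_
        rw [gaussianPDF]
        refine ENNReal.ofReal_le_ofReal ?_
        rw [gaussianPDFReal]
        gcongr
        rw [sub_zero, neg_div, neg_le_neg_iff]
        have : x ^ 2 ≤ (t + √v) ^ 2 := by
          have := hx.1; have := hx.2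
          gcongr; linarith
        calc x ^ 2 / (2 * v) ≤ (t + √v) ^ 2 / (2 * v) := by gcongr
          _ = (t / √v + 1) ^ 2 / 2 := by
            have h2 : (v : ℝ) = √v ^ 2 := (Real.sq_sqrt hv0.le).symm
            nth_rw 2 [h2]
            field_simp
    _ ≤ _ := lintegral_mono_set Set.Ioc_subset_Ioi_self

theorem g_lower (p : E) {v : ℝ} (hv : 0 < v) (hp : v ≤ ‖p‖ ^ 2) {t : ℝ} (ht : 0 ≤ t) :
    ENNReal.ofReal ((√(2 * Real.pi))⁻¹ * Real.exp (-((t / √v + 1) ^ 2 / 2))) ≤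
      stdGaussian E {z | t < ⟪p, z⟫} := by
  have hp0 : 0 < ‖p‖ := by
    by_contra hh
    have : ‖p‖ = 0 := le_antisymm (not_lt.1 hh) (norm_nonneg _)
    rw [this] at hp; norm_num at hp; linarith
  have h := g_lower_real (‖p‖₊ ^ 2) (by rw [Ne, sq_eq_zero_iff, nnnorm_eq_zero]; exact norm_pos_iff.1 hp0) t ht
  rw [← g_map_inner, Measure.map_apply (by fun_prop) measurableSet_Ioi] at h
  refine le_trans (ENNReal.ofReal_le_ofReal ?_) h
  gcongr
  simp only [NNReal.coe_pow, coe_nnnorm]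
  exact hp

theorem g_null (p : E) (hp : p ≠ 0) : stdGaussian E {z | ⟪p, z⟫ = 0} = 0 := by
  have : stdGaussian E {z | ⟪p, z⟫ = 0} = (stdGaussian E).map (fun z => ⟪p, z⟫) {0} := by
    rw [Measure.map_apply (by fun_prop) (measurableSet_singleton _)]; rfl
  rw [this, g_map_inner]
  have := nullSingletonClass_gaussianReal (μ := 0) (v := ‖p‖₊ ^ 2) (by simpa using hp)
  exact measure_singleton _

theorem g_sq (q : E) : ∫⁻ z, ENNReal.ofReal (⟪q, z⟫ ^ 2) ∂(stdGaussian E) = ENNReal.ofReal (‖q‖ ^ 2) := by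
  have h2 := variance_dual_stdGaussian (E := E) (innerSL ℝ q)
  have hm : MemLp (innerSL ℝ q) 2 (stdGaussian E) := IsGaussian.memLp_dual _ _ _ (by simp)
  rw [← ofReal_integral_eq_lintegral_ofReal]
  · rw [variance_eq_sub hm] at h2
    simp only [integral_strongDual_stdGaussian, innerSL_apply_norm] at h2
    congr 1
    simpa using h2
  · exact hm.integrable_sq
  · exact Filter.Eventually.of_forall fun z => sq_nonneg _

theorem g_indep (p q : E) (h : ⟪p, q⟫ = 0) :
    IndepFun (fun z : E => ⟪p, z⟫) (fun z => ⟪q, z⟫) (stdGaussian E) := by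
  have hG : HasGaussianLaw (fun z : E => ((innerSL ℝ p).prod (innerSL ℝ q)) z) (stdGaussian E) := by
    refine ⟨?_⟩
    infer_instance
  refine HasGaussianLaw.indepFun_of_covariance_eq_zero hG ?_
  have := covarianceBilin_stdGaussian (E := E)
  have h3 := congrArg (fun f => f p q) this
  rw [covarianceBilin_apply IsGaussian.memLp_two_id] at h3
  rw [innerSL_apply_apply, h] at h3
  rw [covariance]
  have e1 : ∀ a : E, ∫ z, ⟪a, z⟫ ∂(stdGaussian E) = 0 := fun a => integral_strongDual_stdGaussian (innerSL ℝ a)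
  simp only [ContinuousLinearMap.prod_apply, innerSL_apply_apply, e1]
  simpa using h3

theorem g_pair (p q : E) (h : ⟪p, q⟫ = 0) {δ κ : ℝ} (hδ : 0 < δ) (hκ : ‖q‖ ^ 2 ≤ κ * δ ^ 2)
    {B : Set ℝ} (hB : MeasurableSet B) :
    stdGaussian E {z | ⟪p, z⟫ ∈ B ∧ δ ≤ |⟪q, z⟫|} ≤ ENNReal.ofReal κ * stdGaussian E {z | ⟪p, z⟫ ∈ B} := by
  have hi := (g_indep p q h).measure_inter_preimage_eq_mul B {x | δ ≤ |x|} hB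
    (measurableSet_le measurable_const (by fun_prop))
  have : {z : E | ⟪p, z⟫ ∈ B ∧ δ ≤ |⟪q, z⟫|} = (fun z : E => ⟪p, z⟫) ⁻¹' B ∩ (fun z => ⟪q, z⟫) ⁻¹' {x | δ ≤ |x|} := rfl
  rw [this, hi, mul_comm]
  gcongr
  · have hm := mul_meas_ge_le_lintegral (μ := stdGaussian E) (f := fun z => ENNReal.ofReal (⟪q, z⟫ ^ 2)) (by fun_prop) (ENNReal.ofReal (δ ^ 2))
    rw [g_sq] at hm
    have hsub : (fun z : E => ⟪q, z⟫) ⁻¹' {x | δ ≤ |x|} ⊆ {z | ENNReal.ofReal (δ ^ 2) ≤ ENNReal.ofReal (⟪q, z⟫ ^ 2)} := by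
      intro z hz
      refine ENNReal.ofReal_le_ofReal ?_
      rw [← sq_abs ⟪q, z⟫]
      have : δ ≤ |⟪q, z⟫| := hz
      gcongr
    refine (measure_mono hsub).trans ?_
    have h4 := hm.trans (ENNReal.ofReal_le_ofReal hκ)
    rw [mul_comm κ, ENNReal.ofReal_mul (by positivity)] at h4
    rwa [ENNReal.mul_le_mul_iff_right (by simpa using hδ.ne') ENNReal.ofReal_ne_top] at h4
  · exact le_rfl

theorem g_proj (W : Submodule ℝ E) {s : ℝ} (hs : 0 < s) {k : ℕ} (hk : Module.finrank ℝ W ≤ k) :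
    stdGaussian E {z | s ≤ ‖W.starProjection z‖ ^ 2} ≤ ENNReal.ofReal (k / s) := by
  let b := stdOrthonormalBasis ℝ W
  have e : ∀ z, ‖W.starProjection z‖ ^ 2 = ∑ i, ⟪(b i : E), z⟫ ^ 2 := by
    intro z
    have h1 := b.sum_sq_norm_inner_right (W.orthogonalProjectionOnto z)
    have : ‖W.starProjection z‖ = ‖W.orthogonalProjectionOnto z‖ := by
      rw [Submodule.starProjection_apply]; rfl
    rw [this, ← h1]
    refine Finset.sum_congr rfl fun i _ => ?_
    rw [Real.norm_eq_abs, sq_abs, Submodule.coe_inner]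
    congr 1
    have := Submodule.starProjection_inner_eq_zero z (b i : E) (b i).2 (K := W)
    rw [inner_sub_left, sub_eq_zero, Submodule.starProjection_apply] at this
    rw [real_inner_comm, ← this, real_inner_comm]
  have hm := mul_meas_ge_le_lintegral (μ := stdGaussian E) (f := fun z => ENNReal.ofReal (‖W.starProjection z‖ ^ 2)) (by fun_prop) (ENNReal.ofReal s)
  have hlint : ∫⁻ z, ENNReal.ofReal (‖W.starProjection z‖ ^ 2) ∂(stdGaussian E) ≤ ENNReal.ofReal k := by
    simp_rw [e]
    simp_rw [ENNReal.ofReal_sum_of_nonneg (fun i _ => sq_nonneg _)]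
    rw [lintegral_finsetSum _ (by fun_prop)]
    simp_rw [g_sq]
    have : ∀ i, ‖(b i : E)‖ = 1 := fun i => b.orthonormal.1 i
    simp only [this]
    simpa using hk
  have hsub : {z : E | s ≤ ‖W.starProjection z‖ ^ 2} ⊆ {z | ENNReal.ofReal s ≤ ENNReal.ofReal (‖W.starProjection z‖ ^ 2)} :=
    fun z hz => ENNReal.ofReal_le_ofReal hz
  refine (measure_mono hsub).trans ?_
  have h4 := hm.trans hlint
  rwa [show (k : ℝ) = s * (k / s) by field_simp, ENNReal.ofReal_mul hs.le, ENNReal.mul_le_mul_iff_right (by simpa using hs) ENNReal.ofReal_ne_top] at h4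

end gauss

def Vc : ℝ := Var[fun x : ℝ => x ^ 2; gaussianReal 0 1]

theorem Vc_nonneg : 0 ≤ Vc := variance_nonneg _ _

theorem memLp_sq_g : MemLp (fun x : ℝ => x ^ 2) 2 (gaussianReal 0 1) := by
  have h : MemLp (id : ℝ → ℝ) 4 (gaussianReal 0 1) := memLp_id_gaussianReal' 4 (by simp)
  have := h.norm_rpow_div (q := 2)
  convert this using 1
  · ext x; simp
  · rw [ENNReal.div_eq_inv_mul]
    have : (4 : ℝ≥0∞) = 2 * 2 := by norm_num
    rw [this, ← mul_assoc, ENNReal.inv_mul_cancel (by simp) (by simp), one_mul]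

theorem int_sq_g : ∫ x : ℝ, x ^ 2 ∂(gaussianReal 0 1) = 1 := by
  have := variance_id_gaussianReal (μ := 0) (v := 1)
  rw [variance_eq_sub IsGaussian.memLp_two_id] at this
  simpa using this

theorem g_norm (d : ℕ) {t : ℝ} (ht : 0 < t) :
    stdGaussian (EuclideanSpace ℝ (Fin d)) {z | t ≤ |‖z‖ ^ 2 - d|} ≤ ENNReal.ofReal (Vc * d / t ^ 2) := by
  rw [← map_pi_eq_stdGaussian]
  have hms : MeasurableSet {z : EuclideanSpace ℝ (Fin d) | t ≤ |‖z‖ ^ 2 - d|} :=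
    measurableSet_le measurable_const (by fun_prop)
  rw [Measure.map_apply (by fun_prop) hms]
  let Y : (Fin d → ℝ) → ℝ := ∑ i, fun x => (x i) ^ 2
  have hY : MemLp Y 2 (Measure.pi (fun _ : Fin d => gaussianReal 0 1)) := by
    refine memLp_finsetSum' _ fun i _ => ?_
    exact memLp_sq_g.comp_measurePreserving (measurePreserving_eval (fun _ : Fin d => gaussianReal 0 1) i)
  have hE : ∫ x, Y x ∂(Measure.pi (fun _ : Fin d => gaussianReal 0 1)) = d := by
    simp only [Y, Finset.sum_apply]
    rw [integral_finsetSum]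
    · have : ∀ i : Fin d, ∫ x : Fin d → ℝ, (x i) ^ 2 ∂(Measure.pi (fun _ : Fin d => gaussianReal 0 1)) = 1 := by
        intro i
        rw [integral_comp_eval (μ := fun _ : Fin d => gaussianReal 0 1) (f := fun x : ℝ => x ^ 2) (by fun_prop), int_sq_g]
      simp [this]
    · intro i _
      exact (memLp_sq_g.comp_measurePreserving (measurePreserving_eval (fun _ : Fin d => gaussianReal 0 1) i)).integrable (by norm_num)
  have hV : Var[Y; Measure.pi (fun _ : Fin d => gaussianReal 0 1)] = Vc * d := by
    rw [variance_sum_pi (X := fun _ x => x ^ 2) (fun i => memLp_sq_g)]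
    simp [Vc, mul_comm]
  have h := meas_ge_le_variance_div_sq hY ht
  rw [hE, hV] at h
  refine le_trans (le_of_eq ?_) h
  congr 1
  ext x
  simp [Y, EuclideanSpace.norm_sq_eq]

end
end PartA

section PartB
open MeasureTheory ProbabilityTheory Matrix Filter
open scoped RealInnerProductSpace ENNReal

noncomputable section
section rot
variable {E : Type*} [NormedAddCommGroup E] [InnerProductSpace ℝ E] [FiniteDimensional ℝ E]
  [MeasurableSpace E] [BorelSpace E] {ι : Type*} [Fintype ι]

theorem map_pi_std : (Measure.pi (fun _ : ι => stdGaussian E)).map (WithLp.toLp 2) =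
    stdGaussian (PiLp 2 (fun _ : ι => E)) := by
  apply Measure.ext_of_charFun (E := PiLp 2 (fun _ : ι => E))
  ext t
  simp_rw [charFun_stdGaussian, charFun_pi, charFun_stdGaussian, ← Complex.exp_sum, ← Complex.ofReal_pow,
    PiLp.norm_sq_eq_of_L2]
  simp [Finset.sum_div, neg_div]

/-- a linear map that preserves the sum of squares of norms preserves the product Gaussian -/
theorem mp_of_isometry {F : Type*} [NormedAddCommGroup F] [InnerProductSpace ℝ F] [FiniteDimensional ℝ F]
    [MeasurableSpace F] [BorelSpace F] (f : F →ₗᵢ[ℝ] (PiLp 2 (fun _ : ι => E)))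
    (hd : Module.finrank ℝ F = Module.finrank ℝ (PiLp 2 (fun _ : ι => E))) :
    (stdGaussian F).map (fun z => WithLp.ofLp (f z)) = Measure.pi (fun _ : ι => stdGaussian E) := by
  have h := stdGaussian_map (f.toLinearIsometryEquiv hd)
  have e : (fun z => WithLp.ofLp (f z)) = WithLp.ofLp ∘ (f.toLinearIsometryEquiv hd) := rfl
  rw [e, ← Measure.map_map (by fun_prop) (f.toLinearIsometryEquiv hd).continuous.measurable, h, ← map_pi_std,
    Measure.map_map (by fun_prop) (by fun_prop)]
  have : (WithLp.ofLp ∘ WithLp.toLp 2 : (ι → E) → (ι → E)) = id := rfl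
  rw [this, Measure.map_id]

variable [DecidableEq ι]

def rotL (b : OrthonormalBasis ι ℝ (EuclideanSpace ℝ ι)) : (ι → E) →ₗ[ℝ] (ι → E) where
  toFun Z k := ∑ i, b k i • Z i
  map_add' x y := by ext k; simp [Finset.sum_add_distrib]
  map_smul' c x := by ext k; simp [Finset.smul_sum, smul_comm c]

theorem sum_cols (b : OrthonormalBasis ι ℝ (EuclideanSpace ℝ ι)) (α : EuclideanSpace ℝ ι) (i : ι) :
    ∑ k, ⟪b k, α⟫ * b k i = α i := by
  have := congrArg (fun v : EuclideanSpace ℝ ι => v i) (b.sum_repr' α)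
  simpa using this

theorem rot_sum (b : OrthonormalBasis ι ℝ (EuclideanSpace ℝ ι)) (α : EuclideanSpace ℝ ι) (Z : ι → E) :
    ∑ i, α i • Z i = ∑ k, ⟪b k, α⟫ • rotL b Z k := by
  simp only [rotL, LinearMap.coe_mk, AddHom.coe_mk, Finset.smul_sum, smul_smul]
  rw [Finset.sum_comm]
  refine Finset.sum_congr rfl fun i _ => ?_
  rw [← Finset.sum_smul, sum_cols]

theorem rot_norm (b : OrthonormalBasis ι ℝ (EuclideanSpace ℝ ι)) (Z : ι → E) :
    ∑ k, ‖rotL b Z k‖ ^ 2 = ∑ i, ‖Z i‖ ^ 2 := by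
  have h : ∀ i, Z i = ∑ k, b k i • rotL b Z k := by
    intro i
    have := rot_sum b (EuclideanSpace.single i 1) Z
    simpa [EuclideanSpace.inner_single_right] using this
  have h2 : ∀ k, ‖rotL b Z k‖ ^ 2 = ∑ i, b k i * ⟪Z i, rotL b Z k⟫ := by
    intro k
    rw [← real_inner_self_eq_norm_sq]
    nth_rw 1 [rotL]
    simp [sum_inner, real_inner_smul_left]
  have h3 : ∀ i, ‖Z i‖ ^ 2 = ∑ k, b k i * ⟪Z i, rotL b Z k⟫ := by
    intro i
    rw [← real_inner_self_eq_norm_sq]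
    nth_rw 2 [h i]
    simp [inner_sum, real_inner_smul_right]
  simp_rw [h2, h3]
  rw [Finset.sum_comm]

theorem rot_mp (b : OrthonormalBasis ι ℝ (EuclideanSpace ℝ ι)) :
    MeasurePreserving (fun Z : ι → E => rotL b Z) (Measure.pi (fun _ : ι => stdGaussian E))
      (Measure.pi (fun _ : ι => stdGaussian E)) := by
  have hc : Continuous (fun Z : ι → E => rotL b Z) := LinearMap.continuous_of_finiteDimensional _
  refine ⟨hc.measurable, ?_⟩
  let f : PiLp 2 (fun _ : ι => E) →ₗᵢ[ℝ] PiLp 2 (fun _ : ι => E) :=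
    { toLinearMap := (WithLp.linearEquiv 2 ℝ (ι → E)).symm.toLinearMap ∘ₗ rotL b ∘ₗ
        (WithLp.linearEquiv 2 ℝ (ι → E)).toLinearMap
      norm_map' := by
        intro Z
        rw [← sq_eq_sq₀ (norm_nonneg _) (norm_nonneg _), PiLp.norm_sq_eq_of_L2, PiLp.norm_sq_eq_of_L2]
        exact rot_norm b _ }
  have h := mp_of_isometry f rfl
  rw [← map_pi_std, Measure.map_map] at h
  · exact h
  · exact (by fun_prop : Measurable (WithLp.ofLp : PiLp 2 (fun _ : ι => E) → (ι → E))).comp f.continuous.measurable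
  · fun_prop

theorem exists_basis (u : EuclideanSpace ℝ ι) (hu : ‖u‖ = 1) (k : ι) :
    ∃ b : OrthonormalBasis ι ℝ (EuclideanSpace ℝ ι), b k = u := by
  obtain ⟨b, hb⟩ := Orthonormal.exists_orthonormalBasis_extension_of_card_eq (𝕜 := ℝ)
    (E := EuclideanSpace ℝ ι) (ι := ι) (by simp) (v := fun _ => u) (s := {k}) (by
      refine ⟨fun i => ?_, ?_⟩
      · simpa using hu
      · intro i j hij
        exact absurd (Subsingleton.elim i j) hij)
  exact ⟨b, hb k rfl⟩

theorem sum_mp [Nonempty ι] (u : EuclideanSpace ℝ ι) (hu : ‖u‖ = 1) :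
    MeasurePreserving (fun Z : ι → E => ∑ i, u i • Z i) (Measure.pi (fun _ : ι => stdGaussian E))
      (stdGaussian E) := by
  obtain ⟨k⟩ := ‹Nonempty ι›
  obtain ⟨b, hb⟩ := exists_basis u hu k
  have := (measurePreserving_eval (fun _ : ι => stdGaussian E) k).comp (rot_mp (E := E) b)
  convert this using 2
  simp [rotL, hb]

theorem projbound (k₀ : ι) {s : ℝ} (hs : 0 < s) :
    ∃ A : Set (ι → E), MeasurableSet A ∧ Measure.pi (fun _ : ι => stdGaussian E) A ≤ ENNReal.ofReal (Fintype.card ι / s) ∧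
      ∀ G ∉ A, ∀ β : ι → ℝ, (β k₀) ^ 2 * (‖G k₀‖ ^ 2 - s) ≤ ‖∑ k, β k • G k‖ ^ 2 := by
  let v : (ι → E) → (ι → ℝ) → E := fun G β => ∑ k ∈ Finset.univ.erase k₀, β k • G k
  let A : Set (ι → E) := {G | ∃ β : ι → ℝ, s < 2 * ⟪G k₀, v G β⟫ - ‖v G β‖ ^ 2}
  have hAo : IsOpen A := by
    have : A = ⋃ β : ι → ℝ, {G | s < 2 * ⟪G k₀, v G β⟫ - ‖v G β‖ ^ 2} := by ext; simp [A]
    rw [this]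
    refine isOpen_iUnion fun β => isOpen_lt continuous_const ?_
    have : Continuous fun G : ι → E => v G β := by simp only [v]; fun_prop
    fun_prop
  refine ⟨A, hAo.measurableSet, ?_, ?_⟩
  · have h := loo_le (stdGaussian E) k₀ hAo.measurableSet MeasurableSet.univ (ENNReal.ofReal (Fintype.card ι / s)) ?_
    · simpa using h
    intro x
    simp only [Set.mem_univ, Set.ofPred_true, measure_univ, mul_one]
    let W : Submodule ℝ E := Submodule.span ℝ (Set.range x)
    refine le_trans (measure_mono ?_) (g_proj W hs (finrank_range_le_card x))
    rintro z ⟨β, hβ⟩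
    have hv : v (Function.update x k₀ z) β = v x β := by
      refine Finset.sum_congr rfl fun k hk => ?_
      rw [Function.update_of_ne (Finset.ne_of_mem_erase hk)]
    rw [hv, Function.update_self] at hβ
    have hvW : v x β ∈ W := Submodule.sum_mem _ fun k _ => Submodule.smul_mem _ _ (Submodule.subset_span ⟨k, rfl⟩)
    have h0 := Submodule.starProjection_inner_eq_zero z (v x β) hvW (K := W)
    rw [inner_sub_left, sub_eq_zero] at h0
    rw [h0] at hβ
    have h1 := sq_nonneg ‖W.starProjection z - v x β‖
    rw [norm_sub_sq_real] at h1
    show s ≤ _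
    linarith
  · intro G hG β
    have hsum : ∑ k, β k • G k = β k₀ • G k₀ + v G β :=
      (Finset.add_sum_erase _ _ (Finset.mem_univ k₀)).symm
    rw [hsum]
    by_cases ha : β k₀ = 0
    · simp [ha]
    have hG' : ∀ β : ι → ℝ, 2 * ⟪G k₀, v G β⟫ - ‖v G β‖ ^ 2 ≤ s := by
      intro β; by_contra hc; exact hG ⟨β, not_le.1 hc⟩
    have h1 := hG' (fun k => -(β k₀)⁻¹ * β k)
    have h2 : v G β = -(β k₀) • v G (fun k => -(β k₀)⁻¹ * β k) := by
      simp only [v, Finset.smul_sum, smul_smul]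
      refine Finset.sum_congr rfl fun k _ => ?_
      congr 1; field_simp
    rw [h2, norm_add_sq_real]
    simp only [real_inner_smul_left, real_inner_smul_right, norm_smul, mul_pow, Real.norm_eq_abs, sq_abs]
    have := sq_nonneg (β k₀)
    nlinarith

theorem sumbound [Nonempty ι] {s : ℝ} (hs : 0 < s) :
    ∃ A : Set (ι → E), MeasurableSet A ∧ Measure.pi (fun _ : ι => stdGaussian E) A ≤ ENNReal.ofReal (Fintype.card ι / s) ∧
      ∀ Z ∉ A, ∀ α : ι → ℝ, (∑ i, α i) ^ 2 * (‖∑ i, (√(Fintype.card ι))⁻¹ • Z i‖ ^ 2 - s) ≤ Fintype.card ι * ‖∑ k, α k • Z k‖ ^ 2 := by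
  have hn : (0 : ℝ) < Fintype.card ι := by exact_mod_cast Fintype.card_pos
  obtain ⟨k⟩ := id ‹Nonempty ι›
  let u : EuclideanSpace ℝ ι := WithLp.toLp 2 fun _ => (√(Fintype.card ι))⁻¹
  have hu : ‖u‖ = 1 := by
    rw [← sq_eq_sq₀ (norm_nonneg _) zero_le_one, EuclideanSpace.norm_sq_eq]
    simp [u, hn.ne']
  obtain ⟨b, hb⟩ := exists_basis u hu k
  obtain ⟨A, hA, hA1, hA2⟩ := projbound (E := E) k hs
  refine ⟨(fun Z => rotL b Z) ⁻¹' A, (rot_mp b).measurable hA, ?_, ?_⟩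
  · rw [(rot_mp b).measure_preimage hA.nullMeasurableSet]; exact hA1
  · intro Z hZ α
    have h := hA2 _ hZ (fun k => ⟪b k, WithLp.toLp 2 α⟫)
    have e0 := rot_sum b (WithLp.toLp 2 α) Z
    beta_reduce at h
    rw [← e0] at h
    have e1 : ⟪b k, WithLp.toLp 2 α⟫ = (√(Fintype.card ι))⁻¹ * ∑ i, α i := by
      rw [hb, PiLp.inner_apply]
      simp only [u, Finset.mul_sum]
      refine Finset.sum_congr rfl fun i _ => ?_
      simp [mul_comm]
    have e2 : rotL b Z k = ∑ i, (√(Fintype.card ι))⁻¹ • Z i := by simp [rotL, hb, u]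
    rw [e1, e2, mul_pow, inv_pow, Real.sq_sqrt hn.le] at h
    have := mul_le_mul_of_nonneg_left h hn.le
    refine le_trans (le_of_eq ?_) this
    field_simp

end rot

abbrev EE (d : ℕ) := EuclideanSpace ℝ (Fin d)

abbrev PP (n d : ℕ) : Measure (Fin n → EE d) := Measure.pi (fun _ : Fin n => stdGaussian (EE d))

theorem wbound {n d : ℕ} (hn : 0 < n) {s t : ℝ} (hs : 0 < s) (ht : 0 < t) :
    ∃ A : Set (Fin n → EE d), MeasurableSet A ∧
      PP n d A ≤ ENNReal.ofReal (n / s) + ENNReal.ofReal (Vc * d / t ^ 2) ∧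
      ∀ Z ∉ A, ∀ α : Fin n → ℝ, (∑ i, α i) ^ 2 * (d - t - s) ≤ n * ‖∑ k, α k • Z k‖ ^ 2 := by
  have : Nonempty (Fin n) := ⟨⟨0, hn⟩⟩
  have hn' : (0 : ℝ) < n := by exact_mod_cast hn
  obtain ⟨A, hA, hA1, hA2⟩ := sumbound (E := EE d) (ι := Fin n) hs
  simp only [Fintype.card_fin] at hA1 hA2
  let u : EuclideanSpace ℝ (Fin n) := WithLp.toLp 2 fun _ => (√n)⁻¹
  have hu : ‖u‖ = 1 := by
    rw [← sq_eq_sq₀ (norm_nonneg _) zero_le_one, EuclideanSpace.norm_sq_eq]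
    simp [u, hn'.ne']
  have hm := sum_mp (E := EE d) u hu
  have hS : MeasurableSet {z : EE d | t ≤ |‖z‖ ^ 2 - d|} := measurableSet_le measurable_const (by fun_prop)
  refine ⟨A ∪ _, hA.union (hm.measurable hS), (measure_union_le _ _).trans (add_le_add hA1 ?_), ?_⟩
  · rw [hm.measure_preimage hS.nullMeasurableSet]; exact g_norm d ht
  · intro Z hZ α
    simp only [Set.mem_union, not_or] at hZ
    have h1 := hA2 Z hZ.1 α
    have h2 := hZ.2
    simp only [Set.mem_preimage, Set.mem_ofPred_eq, not_le, u] at h2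
    have h3 := (abs_lt.1 h2).1
    refine le_trans ?_ h1
    gcongr
    linarith

theorem rbound {n d : ℕ} (R : Finset (Fin n)) (hR : 0 < R.card) {t : ℝ} (ht : 0 < t) :
    ∃ A : Set (Fin n → EE d), MeasurableSet A ∧
      PP n d A ≤ ENNReal.ofReal (Vc * d / t ^ 2) ∧
      ∀ Z ∉ A, ‖∑ i ∈ R, Z i‖ ^ 2 ≤ R.card * (d + t) := by
  obtain ⟨i0, -⟩ := Finset.card_pos.1 hR
  have : Nonempty (Fin n) := ⟨i0⟩
  have hn' : (0 : ℝ) < R.card := by exact_mod_cast hR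
  let u : EuclideanSpace ℝ (Fin n) := WithLp.toLp 2 fun i => if i ∈ R then (√R.card)⁻¹ else 0
  have hu : ‖u‖ = 1 := by
    rw [← sq_eq_sq₀ (norm_nonneg _) zero_le_one, EuclideanSpace.norm_sq_eq]
    simp [u, hn'.ne', apply_ite, ite_pow]
  have hm := sum_mp (E := EE d) u hu
  have hS : MeasurableSet {z : EE d | t ≤ |‖z‖ ^ 2 - d|} := measurableSet_le measurable_const (by fun_prop)
  refine ⟨_, (hm.measurable hS), ?_, ?_⟩
  · rw [hm.measure_preimage hS.nullMeasurableSet]; exact g_norm d ht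
  · intro Z h2
    simp only [Set.mem_preimage, Set.mem_ofPred_eq, not_le] at h2
    have e : ∑ i, u i • Z i = (√R.card)⁻¹ • ∑ i ∈ R, Z i := by
      simp [u, ite_smul, Finset.smul_sum]
    have h3 := (abs_lt.1 h2).2
    rw [e, norm_smul, mul_pow, Real.norm_eq_abs, sq_abs, inv_pow, Real.sq_sqrt hn'.le, inv_mul_eq_div] at h3
    have : ‖∑ i ∈ R, Z i‖ ^ 2 / R.card ≤ d + t := by linarith
    rw [div_le_iff₀ hn'] at this
    linarith

end
end PartB

section PartC
open MeasureTheory ProbabilityTheory Matrix Filter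
open scoped RealInnerProductSpace ENNReal

noncomputable section

def wf {n d : ℕ} (J : Finset (Fin n)) (Z : Fin n → EE d) : EE d :=
  ∑ j : J, ((gram ℝ (fun j : J => Z j))⁻¹ *ᵥ 1) j • Z j

theorem cont_gram {n d : ℕ} (J : Finset (Fin n)) :
    Continuous fun Z : Fin n → EE d => gram ℝ (fun j : J => Z j) := by
  refine continuous_matrix fun i j => ?_
  simp only [gram_apply]
  fun_prop

theorem wf_meas {n d : ℕ} (J : Finset (Fin n)) : Measurable (wf (n := n) (d := d) J) := by
  unfold wf
  refine Finset.measurable_sum _ fun j _ => ?_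
  have hz : Measurable fun Z : Fin n → EE d => Z (j : Fin n) := measurable_pi_apply _
  suffices hc : Measurable fun Z : Fin n → EE d => ((gram ℝ (fun j : J => Z j))⁻¹ *ᵥ (1 : J → ℝ)) j from hc.smul hz
  simp only [Matrix.inv_def, Ring.inverse_eq_inv', smul_mulVec, Pi.smul_apply, smul_eq_mul]
  refine Measurable.mul ?_ ?_
  · exact ((cont_gram J).matrix_det.measurable).inv
  · have h : Continuous fun Z : Fin n → EE d => (gram ℝ (fun j : J => Z j)).adjugate *ᵥ (1 : J → ℝ) :=
      (cont_gram J).matrix_adjugate.matrix_mulVec continuous_const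
    exact ((continuous_apply j).comp h).measurable

theorem wf_congr {n d : ℕ} (J : Finset (Fin n)) {Z Z' : Fin n → EE d} (h : ∀ j ∈ J, Z j = Z' j) :
    wf J Z = wf J Z' := by
  have e : (fun j : J => Z j) = (fun j : J => Z' j) := funext fun j => h j j.2
  unfold wf
  rw [e]
  exact Finset.sum_congr rfl fun j _ => by rw [h j j.2]

theorem wf_update {n d : ℕ} {J : Finset (Fin n)} {i : Fin n} (hi : i ∉ J) (Z : Fin n → EE d) (z : EE d) :
    wf J (Function.update Z i z) = wf J Z :=
  wf_congr J fun j hj => Function.update_of_ne (ne_of_mem_of_not_mem hj hi) _ _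

theorem wf_inner {n d : ℕ} {Z : Fin n → EE d} (hZ : LinearIndependent ℝ Z) (J : Finset (Fin n))
    {j : Fin n} (hj : j ∈ J) : ⟪Z j, wf J Z⟫ = 1 := by
  have hli : LinearIndependent ℝ (fun j : J => Z j) := hZ.comp _ Subtype.val_injective
  have hdet := (det_gram_ne_zero_iff_linearIndependent (𝕜 := ℝ)).2 hli
  have h1 : gram ℝ (fun j : J => Z j) *ᵥ ((gram ℝ (fun j : J => Z j))⁻¹ *ᵥ 1) = 1 := by
    rw [mulVec_mulVec, mul_nonsing_inv _ (isUnit_iff_ne_zero.2 hdet), one_mulVec]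
  have h2 := congrFun h1 ⟨j, hj⟩
  rw [mulVec, dotProduct] at h2
  unfold wf
  rw [inner_sum, ← show (1 : J → ℝ) ⟨j, hj⟩ = (1 : ℝ) from rfl, ← h2]
  refine Finset.sum_congr rfl fun k _ => ?_
  rw [real_inner_smul_right, gram_apply, mul_comm]

theorem wf_repr {n d : ℕ} (Z : Fin n → EE d) (J : Finset (Fin n)) :
    ∃ a : Fin n → ℝ, wf J Z = ∑ j ∈ J, a j • Z j := by
  classical
  refine ⟨fun j => if h : j ∈ J then ((gram ℝ (fun j : J => Z j))⁻¹ *ᵥ 1) ⟨j, h⟩ else 0, ?_⟩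
  rw [← Finset.sum_coe_sort J]
  unfold wf
  refine Finset.sum_congr rfl fun j _ => by simp

theorem wf_orth {n d : ℕ} {Z : Fin n → EE d} (hZ : LinearIndependent ℝ Z) (J : Finset (Fin n))
    (u : EE d) (hu : ∀ j ∈ J, ⟪Z j, u⟫ = 1) : ⟪wf J Z, u⟫ = ‖wf J Z‖ ^ 2 := by
  obtain ⟨a, ha⟩ := wf_repr Z J
  have h : ∀ u : EE d, (∀ j ∈ J, ⟪Z j, u⟫ = 1) → ⟪wf J Z, u⟫ = ∑ j ∈ J, a j := by
    intro u hu
    rw [ha, sum_inner]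
    refine Finset.sum_congr rfl fun j hj => ?_
    rw [real_inner_smul_left, hu j hj, mul_one]
  rw [h u hu, ← real_inner_self_eq_norm_sq, h _ fun j hj => wf_inner hZ J hj]

theorem wf_sub {n d : ℕ} {Z : Fin n → EE d} (hZ : LinearIndependent ℝ Z) {J : Finset (Fin n)}
    {u : EE d} (hu : ∀ j ∈ J, ⟪Z j, u⟫ = 1) : ‖u - wf J Z‖ ^ 2 = ‖u‖ ^ 2 - ‖wf J Z‖ ^ 2 := by
  rw [norm_sub_sq_real, real_inner_comm, wf_orth hZ J u hu]; ring

theorem wf_le {n d : ℕ} {Z : Fin n → EE d} (hZ : LinearIndependent ℝ Z) {J : Finset (Fin n)}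
    {u : EE d} (hu : ∀ j ∈ J, ⟪Z j, u⟫ = 1) : ‖wf J Z‖ ^ 2 ≤ ‖u‖ ^ 2 := by
  have := wf_sub hZ hu
  have := sq_nonneg ‖u - wf J Z‖
  linarith

def SVPE {n d : ℕ} (Z : Fin n → EE d) : Prop :=
  ∃ w : EE d, (∀ i, 1 ≤ ⟪Z i, w⟫) ∧ (∀ w', (∀ i, 1 ≤ ⟪Z i, w'⟫) → ‖w‖ ≤ ‖w'‖) ∧
    (∀ i, ⟪Z i, w⟫ = 1) ∧ (∀ w', (∀ i, ⟪Z i, w'⟫ = 1) → ‖w‖ ≤ ‖w'‖)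

theorem svpe_of {n d : ℕ} {Z : Fin n → EE d} (hZ : LinearIndependent ℝ Z)
    (h : ∀ i, ⟪Z i, wf (Finset.univ.erase i) Z⟫ < 1) : SVPE Z := by
  set w := wf Finset.univ Z with hw
  have hw1 : ∀ i, ⟪Z i, w⟫ = 1 := fun i => wf_inner hZ _ (Finset.mem_univ i)
  obtain ⟨a, ha⟩ := wf_repr Z Finset.univ
  rw [← hw] at ha
  have hE : ∀ u : EE d, ⟪w, u⟫ = ∑ i, a i * ⟪Z i, u⟫ := by
    intro u; rw [ha, sum_inner]; simp [real_inner_smul_left]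
  have hww : ‖w‖ ^ 2 = ∑ i, a i := by
    rw [← real_inner_self_eq_norm_sq, hE]; simp [hw1]
  have hpos : ∀ i, 0 ≤ a i := by
    intro i
    by_contra hneg
    push Not at hneg
    set u := wf (Finset.univ.erase i) Z with hu
    have h1 : ⟪u, w⟫ = ‖u‖ ^ 2 := wf_orth hZ _ w fun j _ => hw1 j
    have h2 : ‖u‖ ^ 2 ≤ ‖w‖ ^ 2 := wf_le hZ fun j _ => hw1 j
    have h3 : ⟪w, u⟫ = ‖w‖ ^ 2 + a i * (⟪Z i, u⟫ - 1) := by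
      rw [hE, hww, ← Finset.add_sum_erase _ _ (Finset.mem_univ i), ← Finset.add_sum_erase _ a (Finset.mem_univ i)]
      have : ∑ j ∈ Finset.univ.erase i, a j * ⟪Z j, u⟫ = ∑ j ∈ Finset.univ.erase i, a j :=
        Finset.sum_congr rfl fun j hj => by rw [wf_inner hZ _ hj, mul_one]
      rw [this]; ring
    rw [real_inner_comm, h1] at h3
    have h4 := h i
    nlinarith
  have key : ∀ w', (∀ i, 1 ≤ ⟪Z i, w'⟫) → ‖w‖ ≤ ‖w'‖ := by
    intro w' hf
    have h1 : ‖w‖ ^ 2 ≤ ⟪w, w'⟫ := by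
      rw [hE, hww]
      refine Finset.sum_le_sum fun i _ => ?_
      nlinarith [hf i, hpos i]
    have h2 := real_inner_le_norm w w'
    by_contra hc
    push Not at hc
    nlinarith [norm_nonneg w, norm_nonneg w']
  exact ⟨w, fun i => (hw1 i).ge, key, hw1, fun w' hw' => key w' fun i => (hw' i).ge⟩

theorem svpe_imp {n d : ℕ} {Z : Fin n → EE d} (hZ : LinearIndependent ℝ Z) (h : SVPE Z) (i : Fin n) :
    ⟪Z i, wf (Finset.univ.erase i) Z⟫ ≤ 1 := by
  obtain ⟨w, -, h2, h3, -⟩ := h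
  by_contra hc
  push Not at hc
  set u := wf (Finset.univ.erase i) Z with hu
  have h4 : ‖w‖ ≤ ‖u‖ := by
    refine h2 u fun j => ?_
    by_cases hj : j = i
    · rw [hj]; exact hc.le
    · exact (wf_inner hZ _ (Finset.mem_erase.2 ⟨hj, Finset.mem_univ j⟩)).ge
  have h5 := wf_sub hZ (J := Finset.univ.erase i) (u := w) fun j _ => h3 j
  rw [← hu] at h5
  have h6 : ‖w‖ ^ 2 ≤ ‖u‖ ^ 2 := by gcongr
  have h7 : ‖w - u‖ = 0 := by nlinarith [norm_nonneg (w - u), sq_nonneg ‖w - u‖]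
  have h8 : w = u := sub_eq_zero.1 (norm_eq_zero.1 h7)
  rw [← h8, h3 i] at hc
  exact lt_irrefl _ hc

theorem meas_li {n d : ℕ} (J : Finset (Fin n)) :
    MeasurableSet {Z : Fin n → EE d | LinearIndependent ℝ (fun j : J => Z j)} := by
  have : {Z : Fin n → EE d | LinearIndependent ℝ (fun j : J => Z j)} =
      {Z | (gram ℝ (fun j : J => Z j)).det ≠ 0} := by
    ext Z; exact (det_gram_ne_zero_iff_linearIndependent (𝕜 := ℝ)).symm
  rw [this]
  exact ((cont_gram J).matrix_det.measurable) (measurableSet_singleton (0 : ℝ)).compl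

theorem li_null {n d : ℕ} (hnd : n ≤ d) (J : Finset (Fin n)) :
    PP n d {Z | ¬ LinearIndependent ℝ (fun j : J => Z j)} = 0 := by
  classical
  induction J using Finset.induction_on with
  | empty =>
    have : {Z : Fin n → EE d | ¬ LinearIndependent ℝ (fun j : (∅ : Finset (Fin n)) => Z j)} = ∅ := by
      ext Z
      simp
    rw [this]; simp
  | insert i J hi ih =>
    let A : Set (Fin n → EE d) := {Z | LinearIndependent ℝ (fun j : (insert i J : Finset (Fin n)) => Z j)}ᶜ ∩
      {Z | LinearIndependent ℝ (fun j : J => Z j)}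
    have hA : MeasurableSet A := (meas_li _).compl.inter (meas_li _)
    have h0 : PP n d A ≤ 0 * PP n d Set.univ := by
      refine loo_le _ i hA MeasurableSet.univ 0 fun x => ?_
      rw [zero_mul]
      let W : Submodule ℝ (EE d) := Submodule.span ℝ (x '' (J : Set (Fin n)))
      have hW : W ≠ ⊤ := by
        intro h
        have h1 : Module.finrank ℝ W ≤ J.card := by
          have e : x '' (J : Set (Fin n)) = ((J.image x : Finset (EE d)) : Set (EE d)) := by simp
          have := finrank_span_finset_le_card (R := ℝ) (J.image x)
          rw [← e] at this
          exact this.trans Finset.card_image_le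
        rw [h, finrank_top, finrank_euclideanSpace_fin] at h1
        have h2 : J.card < n := by
          have := Finset.card_lt_univ_of_notMem hi
          simpa using this
        omega
      have : Wᗮ ≠ ⊥ := fun h => hW ((Submodule.orthogonal_eq_bot_iff).1 h)
      obtain ⟨p, hp, hp0⟩ := Submodule.exists_mem_ne_zero_of_ne_bot this
      rw [← g_null p hp0]
      refine measure_mono ?_
      rintro z ⟨hz1, hz2⟩
      have hne : ∀ j ∈ J, Function.update x i z j = x j := fun j hj =>
        Function.update_of_ne (ne_of_mem_of_not_mem hj hi) _ _
      have hz3 : LinearIndepOn ℝ (Function.update x i z) (J : Set (Fin n)) := hz2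
      have hz4 : ¬ LinearIndepOn ℝ (Function.update x i z) ((insert i J : Finset (Fin n)) : Set (Fin n)) := hz1
      rw [Finset.coe_insert, linearIndepOn_insert (by simpa using hi)] at hz4
      have hz5 : z ∈ W := by
        by_contra hc
        refine hz4 ⟨hz3, ?_⟩
        rw [Function.update_self]
        have : Function.update x i z '' (J : Set (Fin n)) = x '' J := Set.image_congr fun j hj => hne j hj
        rw [this]
        exact hc
      exact (Submodule.mem_orthogonal' W p).1 hp z hz5
    rw [zero_mul] at h0
    refine le_antisymm ?_ bot_le
    calc _ ≤ PP n d (A ∪ {Z | ¬ LinearIndependent ℝ (fun j : J => Z j)}) := by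
          refine measure_mono fun Z hZ => ?_
          by_cases h : LinearIndependent ℝ (fun j : J => Z j)
          · exact Or.inl ⟨hZ, h⟩
          · exact Or.inr h
      _ ≤ 0 := (measure_union_le _ _).trans (by rw [ih, add_zero]; exact h0)

theorem li_null' {n d : ℕ} (hnd : n ≤ d) : PP n d {Z | ¬ LinearIndependent ℝ Z} = 0 := by
  have h := li_null hnd (Finset.univ : Finset (Fin n))
  refine measure_mono_null ?_ h
  intro Z hZ h
  refine hZ ?_
  exact (h.comp (fun i : Fin n => (⟨i, Finset.mem_univ i⟩ : (Finset.univ : Finset (Fin n)))) fun i j hij => by simpa using hij)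

theorem wf_univ_bound {n d : ℕ} {Z : Fin n → EE d} (hZ : LinearIndependent ℝ Z) {D v : ℝ} (hn : 0 < n)
    (hv : 0 < v) (hD : (n : ℝ) ≤ v * D)
    (h : ∀ α : Fin n → ℝ, (∑ i, α i) ^ 2 * D ≤ n * ‖∑ k, α k • Z k‖ ^ 2) :
    ‖wf Finset.univ Z‖ ^ 2 ≤ v := by
  obtain ⟨a, ha⟩ := wf_repr Z Finset.univ
  have hn' : (0 : ℝ) < n := by exact_mod_cast hn
  have hD0 : 0 < D := by
    by_contra hc; push Not at hc; nlinarith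
  have h1 := h a
  rw [← ha] at h1
  have h2 : ‖wf Finset.univ Z‖ ^ 2 = ∑ i, a i := by
    rw [← real_inner_self_eq_norm_sq]
    nth_rw 1 [ha]
    rw [sum_inner]
    refine Finset.sum_congr rfl fun i _ => ?_
    rw [real_inner_smul_left, wf_inner hZ _ (Finset.mem_univ i), mul_one]
  rw [← h2] at h1
  set q := ‖wf Finset.univ Z‖ ^ 2 with hq
  by_contra hc
  push Not at hc
  have hq0 : 0 < q := hv.trans hc
  have : q * D ≤ n := by
    have : q * (q * D) ≤ q * n := by nlinarith
    exact le_of_mul_le_mul_left this hq0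
  nlinarith

end
end PartC

section PartD
open MeasureTheory ProbabilityTheory Matrix Filter
open scoped RealInnerProductSpace ENNReal

noncomputable section

theorem meas_in {n d : ℕ} (J : Finset (Fin n)) (i : Fin n) :
    Measurable fun Z : Fin n → EE d => ⟪wf J Z, Z i⟫ := by
  have hz : Measurable fun Z : Fin n → EE d => Z i := measurable_pi_apply _
  exact (wf_meas J).inner hz

theorem meas_nm {n d : ℕ} (J : Finset (Fin n)) :
    Measurable fun Z : Fin n → EE d => ‖wf J Z‖ ^ 2 :=
  (wf_meas J).norm.pow_const 2

theorem f_up {n d : ℕ} (hn : 0 < n) (hnd : n ≤ d) {s t v : ℝ} (hs : 0 < s) (ht : 0 < t) (hv : 0 < v)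
    (h : (n : ℝ) ≤ v * (d - t - s)) :
    PP n d {Z | ¬ SVPE Z} ≤ ENNReal.ofReal (n / s) + ENNReal.ofReal (Vc * d / t ^ 2) +
      n * ENNReal.ofReal (Real.exp (-(1 / (2 * v)))) := by
  classical
  obtain ⟨A, hA, hA1, hA2⟩ := wbound (d := d) hn hs ht
  let M : Fin n → Set (Fin n → EE d) := fun i =>
    {Z | ‖wf (Finset.univ.erase i) Z‖ ^ 2 ≤ v ∧ 1 ≤ ⟪wf (Finset.univ.erase i) Z, Z i⟫}
  have hM : ∀ i, PP n d (M i) ≤ ENNReal.ofReal (Real.exp (-(1 / (2 * v)))) := by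
    intro i
    have hm : MeasurableSet (M i) :=
      (measurableSet_le (meas_nm _) measurable_const).inter (measurableSet_le measurable_const (meas_in _ i))
    have := loo_le (stdGaussian (EE d)) i hm MeasurableSet.univ (ENNReal.ofReal (Real.exp (-(1 / (2 * v))))) ?_
    · refine this.trans ?_
      simp
    · intro x
      have hu : ∀ z, wf (Finset.univ.erase i) (Function.update x i z) = wf (Finset.univ.erase i) x :=
        fun z => wf_update (by simp) x z
      simp only [M, Set.mem_ofPred_eq, hu, Function.update_self, Set.mem_univ, Set.ofPred_true, measure_univ, mul_one]
      by_cases hp : ‖wf (Finset.univ.erase i) x‖ ^ 2 ≤ v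
      · exact (measure_mono fun z hz => hz.2).trans (g_tail _ hv hp)
      · simp [hp]
  have hsub : {Z : Fin n → EE d | ¬ SVPE Z} ⊆ ({Z | ¬ LinearIndependent ℝ Z} ∪ A) ∪ ⋃ i, M i := by
    intro Z hZ
    by_contra hc
    simp only [Set.mem_union, not_or, Set.mem_iUnion, not_exists] at hc
    obtain ⟨⟨h1, h2⟩, h3⟩ := hc
    have h1 : LinearIndependent ℝ Z := not_not.1 h1
    refine hZ (svpe_of h1 fun i => ?_)
    have h4 := wf_univ_bound h1 hn hv h (hA2 Z h2)
    have h5 : ‖wf (Finset.univ.erase i) Z‖ ^ 2 ≤ v :=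
      (wf_le h1 fun j _ => wf_inner h1 _ (Finset.mem_univ j)).trans h4
    by_contra hc
    push Not at hc
    rw [real_inner_comm] at hc
    exact h3 i ⟨h5, hc⟩
  refine (measure_mono hsub).trans ((measure_union_le _ _).trans (add_le_add ?_ ?_))
  · refine (measure_union_le _ _).trans ?_
    rw [li_null' hnd, zero_add]; exact hA1
  · refine (measure_iUnion_fintype_le _ _).trans ((Finset.sum_le_sum fun i _ => hM i).trans ?_)
    simp

theorem D_bound {n d : ℕ} (R : Finset (Fin n)) {v δ : ℝ} (hv : 0 < v) (hδ : 0 ≤ δ) (S : Finset (Fin n))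
    (hS : ∀ i ∈ S, i ∉ R) :
    MeasurableSet {Z : Fin n → EE d | v ≤ ‖wf R Z‖ ^ 2 ∧ ∀ i ∈ S, ⟪wf R Z, Z i⟫ ≤ 1 + δ} ∧
    PP n d {Z | v ≤ ‖wf R Z‖ ^ 2 ∧ ∀ i ∈ S, ⟪wf R Z, Z i⟫ ≤ 1 + δ} ≤
      ENNReal.ofReal (1 - (Real.sqrt (2 * Real.pi))⁻¹ * Real.exp (-(((1 + δ) / Real.sqrt v + 1) ^ 2 / 2))) ^ S.card := by
  classical
  set ρ := (Real.sqrt (2 * Real.pi))⁻¹ * Real.exp (-(((1 + δ) / Real.sqrt v + 1) ^ 2 / 2)) with hρ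
  have hρ0 : 0 ≤ ρ := by positivity
  induction S using Finset.induction_on with
  | empty =>
    constructor
    · simpa using measurableSet_le measurable_const (meas_nm R)
    · simpa using prob_le_one
  | insert i S hi ih =>
    have ih := ih fun j hj => hS j (Finset.mem_insert_of_mem hj)
    have hiR := hS i (Finset.mem_insert_self _ _)
    have e : {Z : Fin n → EE d | v ≤ ‖wf R Z‖ ^ 2 ∧ ∀ j ∈ insert i S, ⟪wf R Z, Z j⟫ ≤ 1 + δ} =
        {Z | v ≤ ‖wf R Z‖ ^ 2 ∧ ∀ j ∈ S, ⟪wf R Z, Z j⟫ ≤ 1 + δ} ∩ {Z | ⟪wf R Z, Z i⟫ ≤ 1 + δ} := by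
      ext Z
      simp only [Set.mem_ofPred_eq, Set.mem_inter_iff, Finset.forall_mem_insert]
      tauto
    rw [e]
    have hm := ih.1.inter (measurableSet_le (meas_in (d := d) R i) (measurable_const (a := 1 + δ)))
    refine ⟨hm, ?_⟩
    rw [Finset.card_insert_of_notMem hi, pow_succ, mul_comm]
    refine (loo_le (stdGaussian (EE d)) i hm ih.1 (ENNReal.ofReal (1 - ρ)) ?_).trans (by gcongr; exact ih.2)
    intro x
    have hu : ∀ z, wf R (Function.update x i z) = wf R x := fun z => wf_update hiR x z
    have hj : ∀ z, ∀ j ∈ S, Function.update x i z j = x j := fun z j hj =>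
      Function.update_of_ne (ne_of_mem_of_not_mem hj hi) _ _
    by_cases hp : v ≤ ‖wf R x‖ ^ 2 ∧ ∀ j ∈ S, ⟪wf R x, x j⟫ ≤ 1 + δ
    · have h1 : {z | Function.update x i z ∈ {Z : Fin n → EE d | v ≤ ‖wf R Z‖ ^ 2 ∧ ∀ j ∈ S, ⟪wf R Z, Z j⟫ ≤ 1 + δ}} = Set.univ := by
        ext z
        simp only [Set.mem_ofPred_eq, hu, Set.mem_univ, iff_true]
        exact ⟨hp.1, fun j h => by rw [hj z j h]; exact hp.2 j h⟩
      rw [h1, measure_univ, mul_one]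
      have h2 : {z | Function.update x i z ∈ {Z : Fin n → EE d | v ≤ ‖wf R Z‖ ^ 2 ∧ ∀ j ∈ S, ⟪wf R Z, Z j⟫ ≤ 1 + δ} ∩ {Z | ⟪wf R Z, Z i⟫ ≤ 1 + δ}} ⊆
          {z | 1 + δ < ⟪wf R x, z⟫}ᶜ := by
        rintro z ⟨-, hz⟩
        simp only [Set.mem_ofPred_eq, hu, Function.update_self] at hz
        simpa using hz
      refine (measure_mono h2).trans ?_
      have hmz : MeasurableSet {z : EE d | 1 + δ < ⟪wf R x, z⟫} :=
        measurableSet_lt measurable_const (by fun_prop)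
      rw [prob_compl_eq_one_sub hmz, ENNReal.ofReal_sub _ hρ0, ENNReal.ofReal_one]
      exact tsub_le_tsub_left (g_lower _ hv hp.1 (by positivity)) _
    · have h1 : {z | Function.update x i z ∈ {Z : Fin n → EE d | v ≤ ‖wf R Z‖ ^ 2 ∧ ∀ j ∈ S, ⟪wf R Z, Z j⟫ ≤ 1 + δ} ∩ {Z | ⟪wf R Z, Z i⟫ ≤ 1 + δ}} = ∅ := by
        ext z
        simp only [Set.mem_ofPred_eq, hu, Set.mem_empty_iff_false, iff_false]
        rintro ⟨hz, -⟩
        refine hp ⟨?_, fun j h => ?_⟩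
        · simpa [hu] using hz.1
        · simpa [hu, hj z j h] using hz.2 j h
      rw [h1]; simp

theorem f_low {n d : ℕ} (hnd : n ≤ d) {s t v v' δ κ : ℝ} (hs : 0 < s) (ht : 0 < t) (hv : 0 < v)
    (h : (n : ℝ) ≤ v * (d - t - s)) (R : Finset (Fin n)) (hR : 0 < R.card) (hv' : v' = R.card / (d + t))
    (hδ : 0 < δ) (hκ : v - v' ≤ κ * δ ^ 2) :
    PP n d {Z | SVPE Z} ≤ ENNReal.ofReal (n / s) + ENNReal.ofReal (Vc * d / t ^ 2) + ENNReal.ofReal (Vc * d / t ^ 2) +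
      ENNReal.ofReal (1 - (Real.sqrt (2 * Real.pi))⁻¹ * Real.exp (-(((1 + δ) / Real.sqrt v' + 1) ^ 2 / 2))) ^ (n - R.card)
      + ENNReal.ofReal κ := by
  classical
  have hn : 0 < n := by
    obtain ⟨i, -⟩ := Finset.card_pos.1 hR
    exact i.pos
  have hr' : (0 : ℝ) < R.card := by exact_mod_cast hR
  have hdt : 0 < (d : ℝ) + t := by positivity
  have hv0 : 0 < v' := by rw [hv']; positivity
  obtain ⟨A, hA, hA1, hA2⟩ := wbound (d := d) hn hs ht
  obtain ⟨A', hA', hA1', hA2'⟩ := rbound (d := d) R hR ht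
  have hcard : n - R.card = (Rᶜ).card := by rw [Finset.card_compl, Fintype.card_fin]
  obtain ⟨-, hDb⟩ := D_bound (d := d) R hv0 hδ.le Rᶜ (fun i hi => by simpa using hi)
  rw [← hcard] at hDb
  let T : Fin n → Set (Fin n → EE d) := fun i =>
    {Z | ∀ j ∈ Rᶜ, j < i → ⟪wf R Z, Z j⟫ ≤ 1 + δ} ∩ {Z | 1 + δ < ⟪wf R Z, Z i⟫}
  have hTm : ∀ i, MeasurableSet (T i) := by
    intro i
    refine MeasurableSet.inter ?_ (measurableSet_lt measurable_const (meas_in R i))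
    simp only [Set.ofPred_forall]
    refine Finset.measurableSet_biInter _ fun j _ => MeasurableSet.iInter fun _ => ?_
    exact measurableSet_le (meas_in R j) measurable_const
  let c : Fin n → (Fin n → EE d) → EE d := fun i Z => wf (Finset.univ.erase i) Z - wf R Z
  have hcm : ∀ i, Measurable (c i) := fun i => (wf_meas _).sub (wf_meas _)
  let M : Fin n → Set (Fin n → EE d) := fun i =>
    T i ∩ ({Z | ⟪wf R Z, c i Z⟫ = 0} ∩ {Z | ‖c i Z‖ ^ 2 ≤ κ * δ ^ 2} ∩ {Z | δ ≤ |⟪c i Z, Z i⟫|})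
  have hMm : ∀ i, MeasurableSet (M i) := by
    intro i
    have hz : Measurable fun Z : Fin n → EE d => Z i := measurable_pi_apply _
    refine (hTm i).inter (MeasurableSet.inter (MeasurableSet.inter ?_ ?_) ?_)
    · exact measurableSet_eq_fun ((wf_meas R).inner (hcm i)) measurable_const
    · exact measurableSet_le ((hcm i).norm.pow_const 2) measurable_const
    · exact measurableSet_le measurable_const (Measurable.norm (Measurable.inner (𝕜 := ℝ) (hcm i) hz))
  have hMT : ∀ i ∈ Rᶜ, PP n d (M i) ≤ ENNReal.ofReal κ * PP n d (T i) := by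
    intro i hi
    have hiR : i ∉ R := by simpa using hi
    refine loo_le (stdGaussian (EE d)) i (hMm i) (hTm i) _ fun x => ?_
    have hu : ∀ z, wf R (Function.update x i z) = wf R x := fun z => wf_update hiR x z
    have hue : ∀ z, wf (Finset.univ.erase i) (Function.update x i z) = wf (Finset.univ.erase i) x :=
      fun z => wf_update (by simp) x z
    have hj : ∀ z, ∀ j, j < i → Function.update x i z j = x j := fun z j hj =>
      Function.update_of_ne hj.ne _ _
    have hcu : ∀ z, c i (Function.update x i z) = c i x := fun z => by simp only [c, hu, hue]
    by_cases hp : (∀ j ∈ Rᶜ, j < i → ⟪wf R x, x j⟫ ≤ 1 + δ) ∧ ⟪wf R x, c i x⟫ = 0 ∧ ‖c i x‖ ^ 2 ≤ κ * δ ^ 2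
    · have h1 : {z | Function.update x i z ∈ M i} ⊆ {z | ⟪wf R x, z⟫ ∈ Set.Ioi (1 + δ) ∧ δ ≤ |⟪c i x, z⟫|} := by
        rintro z ⟨⟨-, hz1⟩, -, hz2⟩
        simp only [Set.mem_ofPred_eq, hu, hcu, Function.update_self] at hz1 hz2
        exact ⟨hz1, hz2⟩
      have h2 : {z | ⟪wf R x, z⟫ ∈ Set.Ioi (1 + δ)} ⊆ {z | Function.update x i z ∈ T i} := by
        intro z hz
        refine ⟨fun j hjR hji => ?_, ?_⟩
        · rw [hu, hj z j hji]; exact hp.1 j hjR hji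
        · simp only [Set.mem_ofPred_eq, hu, Function.update_self]; exact hz
      refine (measure_mono h1).trans ((g_pair _ _ hp.2.1 hδ hp.2.2 measurableSet_Ioi).trans ?_)
      gcongr
    · have h1 : {z | Function.update x i z ∈ M i} = ∅ := by
        ext z
        simp only [Set.mem_ofPred_eq, Set.mem_empty_iff_false, iff_false]
        rintro ⟨⟨hz0, -⟩, ⟨hz1, hz2⟩, -⟩
        simp only [Set.mem_ofPred_eq, hu, hcu] at hz0 hz1 hz2
        exact hp ⟨fun j hjR hji => by rw [← hj z j hji]; exact hz0 j hjR hji, hz1, hz2⟩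
      rw [h1]; simp
  have hTs : ∑ i ∈ Rᶜ, PP n d (T i) ≤ 1 := by
    rw [← measure_biUnion_finset (μ := PP n d) (s := Rᶜ) (f := T) ?_ (fun i _ => hTm i)]
    · exact prob_le_one
    · have aux : ∀ i ∈ Rᶜ, ∀ j, i < j → Disjoint (T i) (T j) := by
        intro i hi j hij
        rw [Set.disjoint_left]
        rintro Z ⟨-, h1⟩ ⟨h2, -⟩
        exact absurd (h2 i hi hij) (not_le.2 h1)
      intro i hi j hj hij
      rcases lt_or_gt_of_ne hij with h | h
      · exact aux i hi j h
      · exact (aux j hj i h).symm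
  have hsub : {Z : Fin n → EE d | SVPE Z} ⊆ ((({Z | ¬ LinearIndependent ℝ Z} ∪ A) ∪ A') ∪
      {Z | v' ≤ ‖wf R Z‖ ^ 2 ∧ ∀ i ∈ Rᶜ, ⟪wf R Z, Z i⟫ ≤ 1 + δ}) ∪ ⋃ i ∈ Rᶜ, M i := by
    intro Z hZ
    by_contra hc
    simp only [Set.mem_union, not_or, Set.mem_iUnion, not_exists] at hc
    obtain ⟨⟨⟨⟨h1, h2⟩, h2'⟩, h3⟩, h4⟩ := hc
    have h1 : LinearIndependent ℝ Z := not_not.1 h1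
    have hq1 := wf_univ_bound h1 hn hv h (hA2 Z h2)
    have hq2 : v' ≤ ‖wf R Z‖ ^ 2 := by
      have e1 : ⟪∑ i ∈ R, Z i, wf R Z⟫ = R.card := by
        rw [sum_inner, Finset.sum_congr rfl fun i hi => wf_inner h1 R hi]; simp
      have e2 := real_inner_mul_inner_self_le (∑ i ∈ R, Z i) (wf R Z)
      rw [e1, real_inner_self_eq_norm_sq, real_inner_self_eq_norm_sq] at e2
      have e3 := hA2' Z h2'
      rw [hv', div_le_iff₀ hdt]
      have e4 : (R.card : ℝ) * R.card ≤ R.card * (‖wf R Z‖ ^ 2 * (d + t)) := by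
        calc _ ≤ _ := e2
          _ ≤ (R.card * (d + t)) * ‖wf R Z‖ ^ 2 := by gcongr
          _ = _ := by ring
      exact le_of_mul_le_mul_left e4 hr'
    have hex : ∃ i, i ∈ Rᶜ ∧ 1 + δ < ⟪wf R Z, Z i⟫ := by
      by_contra hcc
      push Not at hcc
      exact h3 ⟨hq2, hcc⟩
    let F : Finset (Fin n) := Finset.univ.filter fun i => i ∈ Rᶜ ∧ 1 + δ < ⟪wf R Z, Z i⟫
    have hF : F.Nonempty := by
      obtain ⟨i, hi⟩ := hex
      exact ⟨i, by simpa [F] using hi⟩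
    obtain ⟨hi1, hi2⟩ : F.min' hF ∈ Rᶜ ∧ 1 + δ < ⟪wf R Z, Z (F.min' hF)⟫ := by
      have := F.min'_mem hF
      simpa [F] using this
    have hmin : ∀ j ∈ Rᶜ, j < F.min' hF → ⟪wf R Z, Z j⟫ ≤ 1 + δ := by
      intro j hj hlt
      by_contra hcc
      push Not at hcc
      have : j ∈ F := by simp only [F, Finset.mem_filter, Finset.mem_univ, true_and]; exact ⟨hj, hcc⟩
      exact absurd (F.min'_le j this) (not_le.2 hlt)
    generalize F.min' hF = i at hi1 hi2 hmin
    refine h4 i hi1 ⟨⟨hmin, hi2⟩, ⟨?_, ?_⟩, ?_⟩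
    · have hiR : i ∉ R := by simpa using hi1
      have := wf_orth h1 R (wf (Finset.univ.erase i) Z) fun j hj =>
        wf_inner h1 _ (Finset.mem_erase.2 ⟨ne_of_mem_of_not_mem hj hiR, Finset.mem_univ j⟩)
      simp only [c, Set.mem_ofPred_eq, inner_sub_right, this, real_inner_self_eq_norm_sq, sub_self]
    · have hiR : i ∉ R := by simpa using hi1
      have e1 := wf_sub h1 (J := R) (u := wf (Finset.univ.erase i) Z) fun j hj =>
        wf_inner h1 _ (Finset.mem_erase.2 ⟨ne_of_mem_of_not_mem hj hiR, Finset.mem_univ j⟩)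
      have e2 : ‖wf (Finset.univ.erase i) Z‖ ^ 2 ≤ v :=
        (wf_le h1 fun j _ => wf_inner h1 _ (Finset.mem_univ j)).trans hq1
      show ‖wf (Finset.univ.erase i) Z - wf R Z‖ ^ 2 ≤ κ * δ ^ 2
      linarith
    · have e1 := svpe_imp h1 hZ i
      show δ ≤ |⟪wf (Finset.univ.erase i) Z - wf R Z, Z i⟫|
      rw [inner_sub_left, real_inner_comm]
      refine le_trans ?_ (neg_le_abs _)
      linarith
  refine (measure_mono hsub).trans ((measure_union_le _ _).trans (add_le_add ?_ ?_))
  · refine (measure_union_le _ _).trans (add_le_add ?_ hDb)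
    refine (measure_union_le _ _).trans (add_le_add ?_ hA1')
    refine (measure_union_le _ _).trans ?_
    rw [li_null' hnd, zero_add]; exact hA1
  · refine (measure_biUnion_finset_le _ _).trans ((Finset.sum_le_sum hMT).trans ?_)
    rw [← Finset.mul_sum]
    exact (mul_le_mul_right hTs _).trans (by simp)

end
end PartD

section PartE
open MeasureTheory ProbabilityTheory Matrix Filter
open scoped RealInnerProductSpace ENNReal

noncomputable section

def zf {n d : ℕ} (y : Fin n → ℝ) (X : Matrix (Fin n) (Fin d) ℝ) : Fin n → EE d :=
  fun i => WithLp.toLp 2 (fun j => y i * X i j)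

theorem zf_inner {n d : ℕ} (y : Fin n → ℝ) (X : Matrix (Fin n) (Fin d) ℝ) (i : Fin n) (w : EE d) :
    ⟪zf y X i, w⟫ = y i * (X i ⬝ᵥ WithLp.ofLp w) := by
  simp only [zf, PiLp.inner_apply, dotProduct, Finset.mul_sum, RCLike.inner_apply, conj_trivial]
  exact Finset.sum_congr rfl fun j _ => by ring

theorem enorm2_eq {d : ℕ} (w : EE d) : enorm2 (WithLp.ofLp w) = ‖w‖ := by
  rw [EuclideanSpace.norm_eq]
  simp [enorm2]

theorem svp_iff {n d : ℕ} (y : Fin n → ℝ) (X : Matrix (Fin n) (Fin d) ℝ) :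
    SVPholds X y ↔ SVPE (zf y X) := by
  unfold SVPholds SVPE SVMfeas Interpfeas
  simp only [zf_inner, ← enorm2_eq]
  constructor
  · rintro ⟨w, h1, h2, h3, h4⟩
    exact ⟨WithLp.toLp 2 w, h1, fun w' => h2 (WithLp.ofLp w'), h3, fun w' => h4 (WithLp.ofLp w')⟩
  · rintro ⟨w, h1, h2, h3, h4⟩
    exact ⟨WithLp.ofLp w, h1, fun w' => h2 (WithLp.toLp 2 w'), h3, fun w' => h4 (WithLp.toLp 2 w')⟩

theorem zf_law {n d : ℕ} {Ω : Type*} [MeasurableSpace Ω] (μ : Measure Ω) 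
    (X : Ω → Matrix (Fin n) (Fin d) ℝ) (hX : IsGaussSample μ X) (y : Fin n → ℝ)
    (hy : ∀ i, y i = 1 ∨ y i = -1) :
    Measurable (fun ω => zf y (X ω)) ∧ μ.map (fun ω => zf y (X ω)) = PP n d := by
  have hm : ∀ p : Fin n × Fin d, Measurable fun ω => X ω p.1 p.2 := fun p => hX.meas p.1 p.2
  have h1 := iIndepFun.map_fun_eq_pi_map (fun p => (hm p).aemeasurable) hX.indep
  have h1' : μ.map (fun ω (p : Fin n × Fin d) => X ω p.1 p.2) = Measure.pi fun _ => gaussianReal 0 1 := by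
    rw [h1]; congr 1; funext p; exact hX.law p.1 p.2
  have hm1 : Measurable (fun ω (p : Fin n × Fin d) => X ω p.1 p.2) := measurable_pi_lambda _ hm
  let f : EuclideanSpace ℝ (Fin n × Fin d) →ₗᵢ[ℝ] PiLp 2 (fun _ : Fin n => EE d) :=
    { toFun := fun x => WithLp.toLp 2 fun i => WithLp.toLp 2 fun j => y i * x (i, j)
      map_add' := by intro a b; ext i j; simp [mul_add]
      map_smul' := by intro c a; ext i j; simp; ring
      norm_map' := by
        intro x
        rw [← sq_eq_sq₀ (norm_nonneg _) (norm_nonneg _), PiLp.norm_sq_eq_of_L2, EuclideanSpace.real_norm_sq_eq]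
        simp only [LinearMap.coe_mk, AddHom.coe_mk, EuclideanSpace.real_norm_sq_eq, Fintype.sum_prod_type]
        refine Finset.sum_congr rfl fun i _ => Finset.sum_congr rfl fun j _ => ?_
        rcases hy i with h | h <;> simp [h] }
  have h2 := mp_of_isometry f (by
    rw [finrank_euclideanSpace, (WithLp.linearEquiv 2 ℝ (Fin n → EE d)).finrank_eq, Module.finrank_pi_fintype]
    simp)
  have hmf : Measurable fun z => WithLp.ofLp (f z) :=
    (by fun_prop : Measurable (WithLp.ofLp : PiLp 2 (fun _ : Fin n => EE d) → (Fin n → EE d))).comp f.continuous.measurable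
  have hmt : Measurable (WithLp.toLp 2 : (Fin n × Fin d → ℝ) → EuclideanSpace ℝ (Fin n × Fin d)) := by fun_prop
  have e : (fun ω => zf y (X ω)) = (fun z => WithLp.ofLp (f z)) ∘ (WithLp.toLp 2) ∘ (fun ω (p : Fin n × Fin d) => X ω p.1 p.2) := rfl
  constructor
  · rw [e]; exact hmf.comp (hmt.comp hm1)
  · rw [e, ← Measure.map_map hmf (hmt.comp hm1), ← Measure.map_map hmt hm1, h1', map_pi_eq_stdGaussian, h2]

theorem svp_le {n d : ℕ} {Ω : Type*} [MeasurableSpace Ω] (μ : Measure Ω)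
    (X : Ω → Matrix (Fin n) (Fin d) ℝ) (hX : IsGaussSample μ X) (y : Fin n → ℝ)
    (hy : ∀ i, y i = 1 ∨ y i = -1) :
    μ {ω | SVPholds (X ω) y} ≤ PP n d {Z | SVPE Z} ∧ μ {ω | ¬ SVPholds (X ω) y} ≤ PP n d {Z | ¬ SVPE Z} := by
  obtain ⟨h1, h2⟩ := zf_law μ X hX y hy
  rw [← h2]
  simp only [svp_iff]
  exact ⟨Measure.le_map_apply h1.aemeasurable _, Measure.le_map_apply h1.aemeasurable _⟩

end
end PartE

section PartG
open MeasureTheory ProbabilityTheory Matrix Filter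
open scoped RealInnerProductSpace ENNReal

noncomputable section

theorem exp_sq_ge {q : ℝ} (hq : 5 ≤ q) : q ^ 4 / 4 ≤ Real.exp (q ^ 2) ∧ 2 * q ^ 2 ≤ Real.exp (q ^ 2) := by
  have h := Real.add_one_le_exp (q ^ 2 / 2)
  have h2 : Real.exp (q ^ 2) = Real.exp (q ^ 2 / 2) ^ 2 := by
    rw [← Real.exp_nat_mul]; congr 1; push_cast; ring
  have h3 : (q ^ 2 / 2 + 1) ^ 2 ≤ Real.exp (q ^ 2) := by rw [h2]; gcongr
  constructor <;> nlinarith [sq_nonneg q, sq_nonneg (q ^ 2 - 4)]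

theorem vc_bound {q ε : ℝ} {n d : ℝ} (hq : 5 ≤ q) (hn : n = Real.exp (q ^ 2)) (hε : ε ≤ 4)
    (hd2 : d ≤ ε * n * q ^ 2 + 1) : Vc * d / n ^ 2 ≤ 20 * Vc / q := by
  have h0 : 0 < n := by rw [hn]; positivity
  have hq0 : 0 < q := by linarith
  obtain ⟨h1, h2⟩ := exp_sq_ge hq
  rw [← hn] at h1 h2
  have h3 : d ≤ 5 * n * q ^ 2 := by
    have : ε * (n * q ^ 2) ≤ 4 * (n * q ^ 2) := by gcongr
    have : 1 ≤ n * q ^ 2 := one_le_mul_of_one_le_of_one_le (by nlinarith) (by nlinarith)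
    linarith
  rw [div_le_div_iff₀ (by positivity) hq0]
  have h4 : d * q ≤ 20 * n ^ 2 := by
    have : d * q ≤ 5 * n * q ^ 2 * q := by gcongr
    have : q ^ 3 ≤ 4 * n := by nlinarith [pow_pos hq0 3]
    nlinarith
  have := mul_le_mul_of_nonneg_left h4 Vc_nonneg
  linarith

theorem det_up {n d : ℕ} {q ε : ℝ} (hq : 5 ≤ q) (hn : (n : ℝ) = Real.exp (q ^ 2)) (hε : 20 ≤ ε * q)
    (hε2 : ε ≤ 2) (hd1 : (2 + ε) * n * q ^ 2 ≤ d) (hd2 : (d : ℝ) ≤ (2 + ε) * n * q ^ 2 + 1) :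
    PP n d {Z | ¬ SVPE Z} ≤ ENNReal.ofReal (1 / q) + ENNReal.ofReal (20 * Vc / q) +
      ENNReal.ofReal (1 / q) := by
  have h0 : (0 : ℝ) < n := by rw [hn]; positivity
  have hq0 : 0 < q := by linarith
  have hε0 : 0 < ε := by
    by_contra hc; push Not at hc; nlinarith
  have hd3 : (2 + ε) * q ^ 2 * n ≤ d := by linarith
  have hnd : n ≤ d := by
    have : (n : ℝ) ≤ d := by
      refine le_trans ?_ hd3
      have : 1 ≤ (2 + ε) * q ^ 2 := by nlinarith
      nlinarith
    exact_mod_cast this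
  have hB : 0 < (2 + ε) * q ^ 2 - 1 - q := by nlinarith
  have hD : n * ((2 + ε) * q ^ 2 - 1 - q) ≤ (d : ℝ) - n - n * q := by nlinarith
  have hup := f_up (n := n) (d := d) (by exact_mod_cast h0) hnd (s := n * q) (t := n)
    (v := 1 / ((2 + ε) * q ^ 2 - 1 - q)) (by positivity) h0 (by positivity) (by
      rw [one_div, inv_mul_eq_div, le_div_iff₀ hB]; exact hD)
  refine hup.trans (add_le_add (add_le_add ?_ ?_) ?_)
  · apply ENNReal.ofReal_le_ofReal
    rw [div_mul_eq_div_div, div_self h0.ne']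
  · apply ENNReal.ofReal_le_ofReal
    exact vc_bound hq hn (by linarith) hd2
  · rw [← ENNReal.ofReal_natCast n, ← ENNReal.ofReal_mul h0.le]
    apply ENNReal.ofReal_le_ofReal
    rw [hn, ← Real.exp_add]
    have e1 : (1 / (2 * (1 / ((2 + ε) * q ^ 2 - 1 - q)))) = ((2 + ε) * q ^ 2 - 1 - q) / 2 := by
      field_simp
    rw [e1]
    have e2 : q ^ 2 + -(((2 + ε) * q ^ 2 - 1 - q) / 2) ≤ - q := by nlinarith
    refine (Real.exp_le_exp.2 e2).trans ?_
    rw [Real.exp_neg, one_div]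
    apply inv_anti₀ hq0
    have := Real.add_one_le_exp q
    linarith

set_option maxHeartbeats 1000000 in
theorem det_low {n d : ℕ} {q ε c : ℝ} (hq : 5 ≤ q) (hc : 0 < c) (hcq : 4 ≤ c * q)
    (hn : (n : ℝ) = Real.exp (q ^ 2)) (hε : 20 ≤ ε * q)
    (hε2 : ε ≤ 2 - c) (hd1 : (2 - ε) * n * q ^ 2 ≤ d) (hd2 : (d : ℝ) ≤ (2 - ε) * n * q ^ 2 + 1) :
    PP n d {Z | SVPE Z} ≤ ENNReal.ofReal (1 / q) + ENNReal.ofReal (20 * Vc / q) + ENNReal.ofReal (20 * Vc / q) +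
      ENNReal.ofReal (Real.exp (-((Real.sqrt (2 * Real.pi))⁻¹ / 2 * Real.exp (2 * q - 10))))
       + ENNReal.ofReal (4 / c ^ 2 / q) := by
  have h0 : (0 : ℝ) < n := by rw [hn]; positivity
  have hn0 : 0 < n := by exact_mod_cast h0
  have hq0 : 0 < q := by linarith
  have hε0 : 0 < ε := by
    by_contra hc; push Not at hc; nlinarith
  obtain ⟨hx1, hx2⟩ := exp_sq_ge hq
  rw [← hn] at hx1 hx2
  obtain ⟨a, ha⟩ : ∃ a : ℝ, (d : ℝ) = a * n := ⟨d / n, by field_simp⟩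
  have hn1 : (1 : ℝ) ≤ n := by exact_mod_cast hn0
  have ha1 : (2 - ε) * q ^ 2 ≤ a := by
    rw [ha] at hd1
    exact le_of_mul_le_mul_right (by linarith) h0
  have ha2 : a ≤ (2 - ε) * q ^ 2 + 1 := by
    rw [ha] at hd2
    exact le_of_mul_le_mul_right (by linarith) h0
  have ha3 : c * q ^ 2 ≤ a := by nlinarith [sq_nonneg q]
  have ha4 : 4 * q ≤ a := by nlinarith
  have ha5 : c * q ^ 2 / 2 ≤ a - 1 - q := by nlinarith
  have ha6 : a ≤ 3 * q ^ 2 := by nlinarith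
  have hnd : n ≤ d := by
    have : (n : ℝ) ≤ d := by rw [ha]; nlinarith
    exact_mod_cast this
  have hB : 0 < a - 1 - q := by linarith
  -- the size of the complement
  set m := ⌊(n : ℝ) / q ^ 2⌋₊ with hm
  have hm1 : (m : ℝ) ≤ n / q ^ 2 := Nat.floor_le (by positivity)
  have hm2 : (n : ℝ) / q ^ 2 < m + 1 := Nat.lt_floor_add_one _
  have hm3 : (n : ℝ) / (2 * q ^ 2) ≤ m := by
    have h1 : 1 ≤ (n : ℝ) / (2 * q ^ 2) := by rw [le_div_iff₀ (by positivity)]; linarith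
    have h2 : (n : ℝ) / q ^ 2 = 2 * (n / (2 * q ^ 2)) := by field_simp
    linarith
  have hq2 : 25 ≤ q ^ 2 := by nlinarith
  have hmn : (m : ℝ) < n := by
    refine lt_of_le_of_lt hm1 ?_
    rw [div_lt_iff₀ (by positivity)]
    nlinarith
  have hmn' : m < n := by exact_mod_cast hmn
  obtain ⟨R, -, hR⟩ := Finset.exists_subset_card_eq (s := (Finset.univ : Finset (Fin n))) (n := n - m) (by simp)
  have hRr : (R.card : ℝ) = n - m := by rw [hR, Nat.cast_sub hmn'.le]
  have hmR : n - R.card = m := by rw [hR]; omega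
  have hRpos : 0 < R.card := by rw [hR]; omega
  obtain ⟨b, hb⟩ : ∃ b : ℝ, (R.card : ℝ) = b * n := ⟨R.card / n, by field_simp⟩
  have hb1 : 1 - 1 / q ^ 2 ≤ b := by
    have : (1 - 1 / q ^ 2) * n ≤ b * n := by
      rw [← hb, hRr]
      have : 1 / q ^ 2 * n = n / q ^ 2 := by ring
      linarith
    exact le_of_mul_le_mul_right this h0
  have hiq : 1 / q ^ 2 ≤ 1 / 25 := one_div_le_one_div_of_le (by norm_num) hq2
  have hb0 : 0 < b := by linarith
  have hv'e : (R.card : ℝ) / (d + n) = b / (a + 1) := by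
    rw [hb, ha]
    have : a * n + n = (a + 1) * (n : ℝ) := by ring
    rw [this, mul_div_mul_right _ _ h0.ne']
  have ha0 : 0 < a + 1 := by linarith
  have hlow := f_low (n := n) (d := d) hnd (s := n * q) (t := n) (v := 1 / (a - 1 - q)) (v' := b / (a + 1))
    (δ := 1 / q) (κ := 4 / c ^ 2 / q) (by positivity) h0 (by positivity)
    (by rw [ha, one_div, inv_mul_eq_div, le_div_iff₀ hB]; linarith) R hRpos hv'e.symm (by positivity) (by
      have e1 : 1 / (a - 1 - q) - b / (a + 1) ≤ (5 + q) / ((a - 1 - q) * (a + 1)) := by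
        rw [div_sub_div _ _ hB.ne' ha0.ne']
        gcongr
        have e2 : (a - 1 - q) * (1 - 1 / q ^ 2) ≤ (a - 1 - q) * b := by gcongr
        have e3 : (a - 1 - q) * (1 / q ^ 2) ≤ 3 := by
          rw [mul_one_div, div_le_iff₀ (by positivity)]; linarith
        linarith
      refine e1.trans ?_
      have e4 : (c * q ^ 2 / 2) * (c * q ^ 2) ≤ (a - 1 - q) * (a + 1) := by
        apply mul_le_mul ha5 (by linarith) (by positivity) hB.le
      calc (5 + q) / ((a - 1 - q) * (a + 1)) ≤ (2 * q) / ((c * q ^ 2 / 2) * (c * q ^ 2)) := by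
            gcongr; linarith
        _ = 4 / c ^ 2 / q * (1 / q) ^ 2 := by field_simp; norm_num)
  rw [hmR] at hlow
  refine hlow.trans (add_le_add (add_le_add (add_le_add (add_le_add ?_ ?_) ?_) ?_) le_rfl)
  · apply ENNReal.ofReal_le_ofReal
    rw [div_mul_eq_div_div, div_self h0.ne']
  · apply ENNReal.ofReal_le_ofReal
    exact vc_bound hq hn (by linarith) hd2
  · apply ENNReal.ofReal_le_ofReal
    exact vc_bound hq hn (by linarith) hd2
  · set k := (Real.sqrt (2 * Real.pi))⁻¹ with hk
    have hk0 : 0 < k := by positivity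
    set Y := 1 / Real.sqrt (b / (a + 1)) with hY
    have hY0 : 0 ≤ Y := by positivity
    have hYsq : Y ^ 2 = (a + 1) / b := by
      rw [hY, div_pow, Real.sq_sqrt (by positivity)]; field_simp
    have hY2 : Y ^ 2 ≤ (2 - ε) * q ^ 2 + 10 := by
      rw [hYsq, div_le_iff₀ hb0]
      have e1 : ((2 - ε) * q ^ 2 + 10) * (1 - 1 / q ^ 2) ≤ ((2 - ε) * q ^ 2 + 10) * b := by
        apply mul_le_mul_of_nonneg_left hb1; nlinarith
      have e2 : ((2 - ε) * q ^ 2 + 10) * (1 - 1 / q ^ 2) = (2 - ε) * q ^ 2 + 10 - (2 - ε) - 10 * (1 / q ^ 2) := by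
        field_simp; ring
      linarith
    have hY3 : Y ≤ 2 * q := by
      have : Y ^ 2 ≤ (2 * q) ^ 2 := by nlinarith
      exact (sq_le_sq₀ hY0 (by positivity)).1 this
    have hXY : (1 + 1 / q) / Real.sqrt (b / (a + 1)) = Y + Y * (1 / q) := by rw [hY]; ring
    have hYq : Y * (1 / q) ≤ 2 := by rw [mul_one_div, div_le_iff₀ hq0]; linarith
    have hYq0 : 0 ≤ Y * (1 / q) := by positivity
    have hsq : ((1 + 1 / q) / Real.sqrt (b / (a + 1)) + 1) ^ 2 / 2 ≤ q ^ 2 - 4 * q + 10 := by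
      rw [hXY]
      have : (Y + Y * (1 / q) + 1) ^ 2 ≤ (Y + 3) ^ 2 :=
        pow_le_pow_left₀ (by positivity) (by linarith) 2
      have e2 : 20 * q ≤ ε * q * q := by gcongr
      have e3 : (Y + 3) ^ 2 = Y ^ 2 + 6 * Y + 9 := by ring
      have e4 : (2 - ε) * q ^ 2 = 2 * q ^ 2 - ε * q * q := by ring
      linarith
    set ρ := k * Real.exp (-(((1 + 1 / q) / Real.sqrt (b / (a + 1)) + 1) ^ 2 / 2)) with hρ
    have hρ1 : k * Real.exp (-(q ^ 2 - 4 * q + 10)) ≤ ρ := by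
      rw [hρ]; gcongr
    have hmρ : k / 2 * Real.exp (2 * q - 10) ≤ m * ρ := by
      calc k / 2 * Real.exp (2 * q - 10) ≤ (n / (2 * q ^ 2)) * (k * Real.exp (-(q ^ 2 - 4 * q + 10))) := by
            have e1 : Real.exp (-(q ^ 2 - 4 * q + 10)) = Real.exp (2 * q - 10) * Real.exp q ^ 2 * (n : ℝ)⁻¹ := by
              rw [hn, ← Real.exp_neg, ← Real.exp_nat_mul, ← Real.exp_add, ← Real.exp_add]
              congr 1; push_cast; ring
            have e2 : q ^ 2 ≤ Real.exp q ^ 2 := by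
              have := Real.add_one_le_exp q
              gcongr; linarith
            rw [e1]
            have e3 : (n / (2 * q ^ 2)) * (k * (Real.exp (2 * q - 10) * Real.exp q ^ 2 * (n : ℝ)⁻¹)) =
              k / 2 * Real.exp (2 * q - 10) * (Real.exp q ^ 2 / q ^ 2) := by field_simp
            rw [e3]
            refine le_mul_of_one_le_right (by positivity) ?_
            rw [le_div_iff₀ (by positivity)]; linarith
        _ ≤ m * ρ := by gcongr
    calc ENNReal.ofReal (1 - ρ) ^ m ≤ ENNReal.ofReal (Real.exp (-ρ)) ^ m := by
          gcongr
          have := Real.add_one_le_exp (-ρ)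
          linarith
      _ = ENNReal.ofReal (Real.exp (-(m * ρ))) := by
          rw [← ENNReal.ofReal_pow (by positivity), ← Real.exp_nat_mul]; congr 2; ring
      _ ≤ _ := by
          apply ENNReal.ofReal_le_ofReal
          gcongr

end
end PartG

section PartH
open MeasureTheory ProbabilityTheory Matrix Filter
open scoped RealInnerProductSpace ENNReal

noncomputable section

theorem q_tendsto : Tendsto (fun n : ℕ => Real.sqrt (Real.log n)) atTop atTop :=
  Real.tendsto_sqrt_atTop.comp (Real.tendsto_log_atTop.comp tendsto_natCast_atTop_atTop)

theorem q_sq {n : ℕ} (hq : 5 ≤ Real.sqrt (Real.log n)) :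
    Real.log n = Real.sqrt (Real.log n) ^ 2 ∧ (n : ℝ) = Real.exp (Real.sqrt (Real.log n) ^ 2) := by
  have h1 : 0 < Real.log n := Real.sqrt_pos.1 (by linarith)
  have h2 : Real.sqrt (Real.log n) ^ 2 = Real.log n := Real.sq_sqrt h1.le
  have h3 : (n : ℝ) ≠ 0 := by
    intro h; rw [h] at h1; simp at h1
  have h4 : (0 : ℝ) < n := lt_of_le_of_ne (Nat.cast_nonneg n) h3.symm
  exact ⟨h2.symm, by rw [h2, Real.exp_log h4]⟩

theorem tendsto_cq (c : ℝ) : Tendsto (fun n : ℕ => ENNReal.ofReal (c / Real.sqrt (Real.log n))) atTop (nhds 0) := by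
  have := ENNReal.tendsto_ofReal (q_tendsto.const_div_atTop c)
  simpa using this

theorem tendsto_ee (k : ℝ) (hk : 0 < k) : Tendsto (fun n : ℕ => ENNReal.ofReal
    (Real.exp (-(k * Real.exp (2 * Real.sqrt (Real.log n) - 10))))) atTop (nhds 0) := by
  have h1 : Tendsto (fun n : ℕ => 2 * Real.sqrt (Real.log n) - 10) atTop atTop :=
    tendsto_atTop_add_const_right _ (-10) (q_tendsto.const_mul_atTop (by norm_num : (0 : ℝ) < 2))
  have h2 := (Real.tendsto_exp_atTop.comp h1).const_mul_atTop hk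
  have h3 := ENNReal.tendsto_ofReal (Real.tendsto_exp_neg_atTop_nhds_zero.comp h2)
  simpa using h3

theorem final_low (c₁ : ℝ) (hc : 0 < c₁) (ε : ℕ → ℝ)
    (h1 : ∀ᶠ n in atTop, ε n ≤ 2 - c₁)
    (h2 : ∀ᶠ n : ℕ in atTop, 20 / Real.sqrt (Real.log n) ≤ ε n) :
    Tendsto (fun n : ℕ => PP n ⌈(2 - ε n) * n * Real.log n⌉₊ {Z | SVPE Z}) atTop (nhds 0) := by
  have hT := ((((tendsto_cq 1).add (tendsto_cq (20 * Vc))).add (tendsto_cq (20 * Vc))).add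
    (tendsto_ee ((Real.sqrt (2 * Real.pi))⁻¹ / 2) (by positivity))).add (tendsto_cq (4 / c₁ ^ 2))
  simp only [add_zero] at hT
  refine tendsto_of_tendsto_of_tendsto_of_le_of_le' tendsto_const_nhds hT
    (Eventually.of_forall fun _ => bot_le) ?_
  filter_upwards [h1, h2, q_tendsto.eventually_ge_atTop 5, q_tendsto.eventually_ge_atTop (4 / c₁)] with n h1 h2 h3 h4
  obtain ⟨e1, e2⟩ := q_sq h3
  rw [div_le_iff₀' hc] at h4
  rw [div_le_iff₀ (by linarith)] at h2
  have h5 : 0 ≤ (2 - ε n) * n * Real.log n := by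
    rw [e1]
    have : 0 ≤ 2 - ε n := by linarith
    positivity
  refine det_low h3 hc h4 e2 h2 h1 ?_ ?_
  · rw [← e1]; exact Nat.le_ceil _
  · rw [← e1]; exact (Nat.ceil_lt_add_one h5).le

theorem final_up (c₁ : ℝ) (hc : 0 < c₁) (ε : ℕ → ℝ)
    (h1 : ∀ᶠ n in atTop, ε n ≤ 2 - c₁)
    (h2 : ∀ᶠ n : ℕ in atTop, 20 / Real.sqrt (Real.log n) ≤ ε n) :
    Tendsto (fun n : ℕ => PP n ⌈(2 + ε n) * n * Real.log n⌉₊ {Z | ¬ SVPE Z}) atTop (nhds 0) := by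
  have hT := ((tendsto_cq 1).add (tendsto_cq (20 * Vc))).add (tendsto_cq 1)
  simp only [add_zero] at hT
  refine tendsto_of_tendsto_of_tendsto_of_le_of_le' tendsto_const_nhds hT
    (Eventually.of_forall fun _ => bot_le) ?_
  filter_upwards [h1, h2, q_tendsto.eventually_ge_atTop 5] with n h1 h2 h3
  obtain ⟨e1, e2⟩ := q_sq h3
  have h6 : 0 ≤ ε n := le_trans (by positivity) h2
  rw [div_le_iff₀ (by linarith)] at h2
  have h5 : 0 ≤ (2 + ε n) * n * Real.log n := by
    rw [e1]
    positivity
  refine det_up h3 e2 h2 (by linarith) ?_ ?_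
  · rw [← e1]; exact Nat.le_ceil _
  · rw [← e1]; exact (Nat.ceil_lt_add_one h5).le

end
end PartH

/-- Theorem 4: sharp phase transition for support vector proliferation at `d = 2 n ln n` for
isotropic Gaussian samples.  The conditions `limsup εₙ < 2 − c₁` and
`liminf εₙ √(log n) > C₂` are expressed in their eventual form, as used in the paper. -/
theorem stmt10 :
    ∀ c₁ > (0 : ℝ), ∃ C₂ > (0 : ℝ),
      ∀ ε : ℕ → ℝ, (∀ n, 0 < ε n) →
        (∀ᶠ n in atTop, ε n ≤ 2 - c₁) →
        (∀ᶠ n : ℕ in atTop, C₂ / Real.sqrt (Real.log n) ≤ ε n) →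
        (∀ (Ω : ℕ → Type*) [∀ n, MeasurableSpace (Ω n)] (μ : ∀ n, Measure (Ω n)),
            (∀ n, IsProbabilityMeasure (μ n)) →
            ∀ (X : ∀ n : ℕ, Ω n → Matrix (Fin n) (Fin ⌈(2 - ε n) * n * Real.log n⌉₊) ℝ)
              (y : ∀ n : ℕ, Fin n → ℝ),
            (∀ n i, y n i = 1 ∨ y n i = -1) →
            (∀ n, IsGaussSample (μ n) (X n)) →
            Tendsto (fun n => μ n {ω | SVPholds (X n ω) (y n)}) atTop (nhds 0)) ∧
        (∀ (Ω : ℕ → Type*) [∀ n, MeasurableSpace (Ω n)] (μ : ∀ n, Measure (Ω n)),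
            (∀ n, IsProbabilityMeasure (μ n)) →
            ∀ (X : ∀ n : ℕ, Ω n → Matrix (Fin n) (Fin ⌈(2 + ε n) * n * Real.log n⌉₊) ℝ)
              (y : ∀ n : ℕ, Fin n → ℝ),
            (∀ n i, y n i = 1 ∨ y n i = -1) →
            (∀ n, IsGaussSample (μ n) (X n)) →
            Tendsto (fun n => μ n {ω | SVPholds (X n ω) (y n)}) atTop (nhds 1)) := by
  intro c₁ hc
  refine ⟨20, by norm_num, fun ε _ h1 h2 => ⟨?_, ?_⟩⟩
  · intro Ω _ μ _ X y hy hX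
    refine tendsto_of_tendsto_of_tendsto_of_le_of_le tendsto_const_nhds (final_low c₁ hc ε h1 h2)
      (fun _ => bot_le) fun n => ?_
    exact (svp_le (μ n) (X n) (hX n) (y n) (hy n)).1
  · intro Ω _ μ hμ X y hy hX
    have hT := ENNReal.Tendsto.sub (tendsto_const_nhds (x := (1 : ENNReal))) (final_up c₁ hc ε h1 h2)
      (Or.inl ENNReal.one_ne_top)
    rw [tsub_zero] at hT
    refine tendsto_of_tendsto_of_tendsto_of_le_of_le hT tendsto_const_nhds (fun n => ?_) fun n => prob_le_one
    have hb := (svp_le (μ n) (X n) (hX n) (y n) (hy n)).2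
    have hone : 1 ≤ μ n {ω | SVPholds (X n ω) (y n)} + μ n {ω | ¬ SVPholds (X n ω) (y n)} := by
      rw [← measure_univ (μ := μ n)]
      refine (measure_mono fun ω _ => ?_).trans (measure_union_le _ _)
      exact Classical.em (SVPholds (X n ω) (y n))
    refine tsub_le_iff_right.2 (hone.trans ?_)
    gcongr


end
end

section
/- Fix a unit vector v ∈ ℝ^d. Let X ∈ ℝ^{n×d} be a random matrix whose rows x₁,…,xₙ are i.i.d. standard Gaussian N(0, I_d), and define random labels y_i = 1 if vᵀx_i > 0 and y_i = −1 otherwise. There exist absolute constants C₁, C₂, C₃ > 0 such that for any δ ∈ (0, 1/2), if n ≥ C₁ (log(1/δ))², d ≤ C₂ n log n, and d ≥ C₃ n log(1/δ), then the probability that support vector proliferation occurs for the ℓ₂-SVM on (X, y) is at most δ. -/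
open MeasureTheory ProbabilityTheory Matrix

noncomputable section

section helpers

lemma gauss_sq_int (t : ℝ) (ht : t < 1 / 2) :
    ∫ x, Real.exp (t * x ^ 2) ∂(gaussianReal 0 1) = Real.sqrt (1 / (1 - 2 * t)) := by
  rw [integral_gaussianReal_eq_integral_smul (by norm_num)]
  have h : ∀ x : ℝ, gaussianPDFReal 0 1 x • Real.exp (t * x ^ 2)
      = (Real.sqrt (2 * Real.pi))⁻¹ * Real.exp (-(1 / 2 - t) * x ^ 2) := by
    intro x
    simp only [gaussianPDFReal, smul_eq_mul, NNReal.coe_one, mul_one, sub_zero]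
    rw [mul_assoc, ← Real.exp_add]
    congr 2
    ring
  simp_rw [h]
  rw [integral_const_mul, integral_gaussian, ← Real.sqrt_inv, ← Real.sqrt_mul (by positivity)]
  congr 1
  have : (1 / 2 - t) ≠ 0 := by linarith
  have h2 : (1 - 2 * t) ≠ 0 := by linarith
  have h3 := Real.pi_pos.ne'
  field_simp
  

lemma std_sq_int {ι : Type*} [Fintype ι] (t : ℝ) (ht : t < 1 / 2) :
    ∫ x, Real.exp (t * ‖x‖ ^ 2) ∂(stdGaussian (EuclideanSpace ℝ ι))
      = Real.sqrt (1 / (1 - 2 * t)) ^ (Fintype.card ι) := by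
  rw [← map_pi_eq_stdGaussian, integral_map (by fun_prop) (by fun_prop)]
  rw [← gauss_sq_int t ht, ← integral_fintype_prod_eq_pow (fun x : ℝ => Real.exp (t * x ^ 2))]
  congr 1
  ext x
  rw [EuclideanSpace.real_norm_sq_eq, Finset.mul_sum, Real.exp_sum]

lemma std_sq_integrable {ι : Type*} [Fintype ι] (t : ℝ) (ht : t < 1 / 2) :
    Integrable (fun x => Real.exp (t * ‖x‖ ^ 2)) (stdGaussian (EuclideanSpace ℝ ι)) := by
  apply Integrable.of_integral_ne_zero
  rw [std_sq_int t ht]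
  have : 0 < 1 / (1 - 2 * t) := by apply one_div_pos.2; linarith
  positivity

lemma chi_upper {ι : Type*} [Fintype ι] :
    (stdGaussian (EuclideanSpace ℝ ι)).real {x | 4 * (Fintype.card ι : ℝ) ≤ ‖x‖ ^ 2}
      ≤ (Real.exp (-1) * Real.sqrt 2) ^ (Fintype.card ι) := by
  have h := measure_ge_le_exp_mul_mgf (μ := stdGaussian (EuclideanSpace ℝ ι))
    (X := fun x => ‖x‖ ^ 2) (t := 1 / 4) (4 * (Fintype.card ι : ℝ)) (by norm_num)
    (std_sq_integrable _ (by norm_num))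
  rw [mgf, std_sq_int _ (by norm_num)] at h
  refine h.trans (le_of_eq ?_)
  rw [mul_pow, ← Real.exp_nat_mul]
  congr 2
  · ring
  · norm_num

lemma chi_lower {ι : Type*} [Fintype ι] :
    (stdGaussian (EuclideanSpace ℝ ι)).real {x | ‖x‖ ^ 2 ≤ (Fintype.card ι : ℝ) / 4}
      ≤ (Real.exp (1 / 4) * Real.sqrt (1 / 3)) ^ (Fintype.card ι) := by
  have h := measure_le_le_exp_mul_mgf (μ := stdGaussian (EuclideanSpace ℝ ι))
    (X := fun x => ‖x‖ ^ 2) (t := -1) ((Fintype.card ι : ℝ) / 4) (by norm_num)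
    (std_sq_integrable _ (by norm_num))
  rw [mgf, std_sq_int _ (by norm_num)] at h
  refine h.trans (le_of_eq ?_)
  rw [mul_pow, ← Real.exp_nat_mul]
  congr 2
  · ring
  · norm_num

/-- one-dimensional lower bound -/
lemma gauss_Icc_lower (s : ℝ) (hs : 0 ≤ s) :
    (Real.sqrt (2 * Real.pi))⁻¹ * Real.exp (-(s + 1) ^ 2 / 2)
      ≤ (gaussianReal 0 1).real (Set.Icc s (s + 1)) := by
  rw [Measure.real, gaussianReal_apply_eq_integral _ (by norm_num), ENNReal.toReal_ofReal
    (integral_nonneg fun x => gaussianPDFReal_nonneg _ _ _)]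
  have : ∫ x in Set.Icc s (s+1), (Real.sqrt (2 * Real.pi))⁻¹ * Real.exp (-(s + 1) ^ 2 / 2)
      ≤ ∫ x in Set.Icc s (s+1), gaussianPDFReal 0 1 x := by
    apply setIntegral_mono_on
    · exact integrableOn_const (by simp)
    · exact (integrable_gaussianPDFReal 0 1).integrableOn
    · exact measurableSet_Icc
    · intro x hx
      simp only [gaussianPDFReal, NNReal.coe_one, mul_one, sub_zero]
      gcongr
      · linarith [hx.1]
      · exact hx.2
  simpa using this

variable {E : Type*} [NormedAddCommGroup E] [InnerProductSpace ℝ E] [FiniteDimensional ℝ E]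
  [MeasurableSpace E] [BorelSpace E]

lemma std_map_orthonormal {ι : Type*} [Fintype ι] (b : ι → E) (hb : Orthonormal ℝ b) :
    (stdGaussian E).map (fun x => WithLp.toLp 2 (fun i => inner ℝ (b i) x))
      = stdGaussian (EuclideanSpace ℝ ι) := by
  have hm : Measurable (fun x : E => (WithLp.toLp 2 (fun i => inner ℝ (b i) x) : EuclideanSpace ℝ ι)) := by
    fun_prop
  apply Measure.ext_of_charFun
  ext t
  rw [charFun_apply, integral_map hm.aemeasurable (by fun_prop)]
  have : ∀ x : E, inner ℝ (WithLp.toLp 2 (fun i => inner ℝ (b i) x) : EuclideanSpace ℝ ι) t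
      = inner ℝ x (∑ i, t i • b i) := by
    intro x
    simp [PiLp.inner_apply, inner_sum, inner_smul_right, real_inner_comm]
  simp_rw [this]
  rw [← charFun_apply, charFun_stdGaussian, charFun_stdGaussian]
  congr 3
  norm_cast
  rw [← real_inner_self_eq_norm_sq, hb.inner_sum, EuclideanSpace.real_norm_sq_eq]
  simp [pow_two]

lemma std_second_moment (u : E) :
    ∫⁻ x, ENNReal.ofReal ((inner ℝ u x) ^ 2) ∂(stdGaussian E) = ENNReal.ofReal (‖u‖ ^ 2) := by
  have h1 : Var[innerSL ℝ u; stdGaussian E] = ‖u‖ ^ 2 := by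
    rw [variance_dual_stdGaussian]; simp
  rw [variance_of_integral_eq_zero (by fun_prop) (integral_strongDual_stdGaussian _)] at h1
  rw [← h1, ← ofReal_integral_eq_lintegral_ofReal]
  · simp
  · have := (IsGaussian.memLp_dual (stdGaussian E) (innerSL ℝ u) 2 (by simp)).integrable_sq
    simpa using this
  · exact Filter.Eventually.of_forall fun x => sq_nonneg _

lemma std_norm_moment :
    ∫⁻ x, ENNReal.ofReal (‖x‖ ^ 2) ∂(stdGaussian E) = (Module.finrank ℝ E : ENNReal) := by
  have : ∀ x : E, ENNReal.ofReal (‖x‖ ^ 2)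
      = ∑ i, ENNReal.ofReal ((inner ℝ (stdOrthonormalBasis ℝ E i) x) ^ 2) := by
    intro x
    rw [← ENNReal.ofReal_sum_of_nonneg (fun _ _ => sq_nonneg _)]
    rw [(stdOrthonormalBasis ℝ E).sum_sq_inner_right]
  simp_rw [this]
  rw [lintegral_finsetSum _ (by fun_prop)]
  simp_rw [std_second_moment]
  simp

lemma std_sum {A : Type*} [Fintype A] [Nonempty A] (y : A → ℝ) (hy : ∀ i, y i ^ 2 = 1) :
    (Measure.pi (fun _ : A => stdGaussian E)).map
      (fun x => (Real.sqrt (Fintype.card A))⁻¹ • ∑ i, y i • x i) = stdGaussian E := by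
  apply Measure.ext_of_charFun
  ext t
  have hm : Measurable (fun x : A → E => (Real.sqrt (Fintype.card A))⁻¹ • ∑ i, y i • x i) := by
    refine Measurable.const_smul (Finset.measurable_sum _ fun i _ => ?_) _
    exact (measurable_pi_apply i).const_smul _
  rw [charFun_apply, integral_map hm.aemeasurable (by fun_prop)]
  have h1 : ∀ x : A → E, Complex.exp (((inner ℝ ((Real.sqrt (Fintype.card A))⁻¹ • ∑ i, y i • x i) t : ℝ) : ℂ) * Complex.I)
      = ∏ i, Complex.exp (((inner ℝ (x i) (((Real.sqrt (Fintype.card A))⁻¹ * y i) • t) : ℝ) : ℂ) * Complex.I) := by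
    intro x
    rw [← Complex.exp_sum, ← Finset.sum_mul, ← Complex.ofReal_sum]
    congr 3
    simp only [inner_smul_left, sum_inner, inner_smul_right, Finset.mul_sum]
    simp [mul_assoc]
  simp_rw [h1]
  rw [integral_fintype_prod_eq_prod (f := fun i x => Complex.exp (((inner ℝ x (((Real.sqrt (Fintype.card A))⁻¹ * y i) • t) : ℝ) : ℂ) * Complex.I))]
  simp_rw [← charFun_apply, charFun_stdGaussian]
  rw [← Complex.exp_sum]
  congr 1
  norm_cast
  simp_rw [norm_smul, mul_pow, Real.norm_eq_abs, sq_abs, mul_pow, hy]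
  have : (Fintype.card A : ℝ) ≠ 0 := by positivity
  simp [Finset.sum_const, inv_pow, Real.sq_sqrt]
  field_simp

lemma pair_lower (v e : E) (hb : Orthonormal ℝ ![v, e]) (s : ℝ) (hs : 0 ≤ s) :
    (2 * Real.pi)⁻¹ * Real.exp (-(s + 1) ^ 2)
      ≤ (stdGaussian E).real {x | inner ℝ v x ∈ Set.Icc s (s + 1) ∧
          inner ℝ e x ∈ Set.Icc s (s + 1)} := by
  have h := std_map_orthonormal _ hb
  rw [← map_pi_eq_stdGaussian] at h
  have hm : Measurable (fun x : E => (WithLp.toLp 2 (fun i => inner ℝ (![v, e] i) x) :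
      EuclideanSpace ℝ (Fin 2))) := by
    fun_prop
  set R : Set (EuclideanSpace ℝ (Fin 2)) := {z | ∀ i, z i ∈ Set.Icc s (s + 1)} with hR
  have hRm : MeasurableSet R := by
    rw [hR, Set.ofPred_forall]
    refine MeasurableSet.iInter fun i => ?_
    have : Measurable fun z : EuclideanSpace ℝ (Fin 2) => z i := by fun_prop
    exact this measurableSet_Icc
  have h1 : (stdGaussian E) {x | inner ℝ v x ∈ Set.Icc s (s + 1) ∧
          inner ℝ e x ∈ Set.Icc s (s + 1)} = (gaussianReal 0 1 (Set.Icc s (s + 1))) ^ 2 := by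
    have e1 : {x | inner ℝ v x ∈ Set.Icc s (s + 1) ∧ inner ℝ e x ∈ Set.Icc s (s + 1)}
        = (fun x : E => (WithLp.toLp 2 (fun i => inner ℝ (![v, e] i) x) :
      EuclideanSpace ℝ (Fin 2))) ⁻¹' R := by
      ext x
      simp [hR, Fin.forall_fin_two]
    rw [e1, ← Measure.map_apply hm hRm, h, Measure.map_apply (by fun_prop) hRm]
    have e2 : (WithLp.toLp 2 : (Fin 2 → ℝ) → EuclideanSpace ℝ (Fin 2)) ⁻¹' R
        = Set.univ.pi (fun _ => Set.Icc s (s + 1)) := by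
      ext x
      simp only [hR, Set.mem_preimage, Set.mem_univ_pi]
      rfl
    rw [e2, Measure.pi_pi]
    simp
  rw [Measure.real, h1, ENNReal.toReal_pow]
  have h2 := gauss_Icc_lower s hs
  have h3 : ((Real.sqrt (2 * Real.pi))⁻¹ * Real.exp (-(s + 1) ^ 2 / 2)) ^ 2
    = (2 * Real.pi)⁻¹ * Real.exp (-(s + 1) ^ 2) := by
    rw [mul_pow, inv_pow, Real.sq_sqrt (by positivity), ← Real.exp_nat_mul]
    congr 2
    push_cast; ring
  rw [← h3]
  exact pow_le_pow_left₀ (by positivity) h2 2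

lemma proj_lower (W : Submodule ℝ E) :
    (stdGaussian E).real {x | ‖W.starProjection x‖ ^ 2 ≤ (Module.finrank ℝ W : ℝ) / 4}
      ≤ (Real.exp (1 / 4) * Real.sqrt (1 / 3)) ^ (Module.finrank ℝ W) := by
  let b := stdOrthonormalBasis ℝ W
  have hb : Orthonormal ℝ (fun i => (b i : E)) :=
    b.orthonormal.comp_linearIsometry W.subtypeₗᵢ
  have h := std_map_orthonormal _ hb
  have hm : Measurable (fun x : E => (WithLp.toLp 2 (fun i => inner ℝ (b i : E) x) :
      EuclideanSpace ℝ (Fin (Module.finrank ℝ W)))) := by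
    fun_prop
  have hc := chi_lower (ι := Fin (Module.finrank ℝ W))
  rw [Fintype.card_fin] at hc
  rw [← h, Measure.real, Measure.map_apply hm] at hc
  · refine le_trans (le_of_eq ?_) hc
    rw [Measure.real]
    congr 2
    ext x
    simp only [Set.mem_ofPred_eq, Set.mem_preimage]
    have : ‖W.starProjection x‖ ^ 2 = ‖(WithLp.toLp 2 (fun i => inner ℝ (b i : E) x) :
      EuclideanSpace ℝ (Fin (Module.finrank ℝ W)))‖ ^ 2 := by
      rw [EuclideanSpace.real_norm_sq_eq, Submodule.starProjection_apply, ← Submodule.coe_norm,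
        ← b.sum_sq_inner_right]
      refine Finset.sum_congr rfl fun i _ => ?_
      congr 1
      rw [Submodule.coe_inner, ← Submodule.starProjection_apply,
        ← Submodule.inner_starProjection_left_eq_right]
      congr 1
      exact Submodule.starProjection_eq_self_iff.2 (b i).2
    rw [this]
  · have : Measurable fun x : EuclideanSpace ℝ (Fin (Module.finrank ℝ W)) => ‖x‖ ^ 2 := by fun_prop
    exact this measurableSet_Iic

section events
variable {B : Type*} [Fintype B]

lemma ev_one (S : Set E) (hS : MeasurableSet S) (q : ENNReal) (h : stdGaussian E S ≤ q) :
    (Measure.pi (fun _ : B => stdGaussian E)) {x | ∃ i, x i ∈ S} ≤ Fintype.card B * q := by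
  rw [Set.ofPred_exists]
  refine (measure_iUnion_fintype_le _ _).trans ?_
  calc _ ≤ ∑ i : B, q := by
        refine Finset.sum_le_sum fun i _ => ?_
        have := (measurePreserving_eval (fun _ : B => stdGaussian E) i).measure_preimage
          hS.nullMeasurableSet
        exact this.le.trans h
    _ = _ := by simp

lemma ev_all (S : Set E) :
    (Measure.pi (fun _ : B => stdGaussian E)) {x | ∀ i, x i ∈ S}
      = (stdGaussian E S) ^ (Fintype.card B) := by
  have : {x : B → E | ∀ i, x i ∈ S} = Set.univ.pi fun _ => S := by ext; simp
  rw [this, Measure.pi_pi]; simp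

lemma cheb_one (u : E) (c : ℝ) (hc : 0 < c) :
    stdGaussian E {x | c ≤ |inner ℝ u x|} ≤ ENNReal.ofReal (‖u‖ ^ 2 / c ^ 2) := by
  have h := meas_ge_le_lintegral_div (μ := stdGaussian E)
    (f := fun x => ENNReal.ofReal ((inner ℝ u x) ^ 2)) (by fun_prop)
    (ε := ENNReal.ofReal (c ^ 2)) (by simp; positivity) (by simp)
  rw [std_second_moment, ← ENNReal.ofReal_div_of_pos (by positivity)] at h
  refine (measure_mono ?_).trans h
  intro x hx
  simp only [Set.mem_ofPred_eq] at hx ⊢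
  apply ENNReal.ofReal_le_ofReal
  rw [← sq_abs (inner ℝ u x)]
  gcongr

lemma cheb_pair (T : E →L[ℝ] E) (hT : ∀ x, ‖T x‖ ≤ ‖x‖) (c : ℝ) (hc : 0 < c) (i j : B)
    (hij : i ≠ j) :
    (Measure.pi (fun _ : B => stdGaussian E)) {x | c ≤ |inner ℝ (T (x i)) (x j)|}
      ≤ ENNReal.ofReal (Module.finrank ℝ E / c ^ 2) := by
  have hind := (iIndepFun_pi (μ := fun _ : B => stdGaussian E) (X := fun _ (x : E) => x)
    (fun _ => by fun_prop)).indepFun hij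
  rw [indepFun_iff_map_prod_eq_prod_map_map (measurable_pi_apply i).aemeasurable
    (measurable_pi_apply j).aemeasurable] at hind
  have h1 : ∀ l : B, (Measure.pi (fun _ : B => stdGaussian E)).map (fun ω => ω l)
      = stdGaussian E := fun l => (measurePreserving_eval (fun _ : B => stdGaussian E) l).map_eq
  rw [h1, h1] at hind
  have hf : Measurable (fun p : E × E => ENNReal.ofReal ((inner ℝ (T p.1) p.2) ^ 2)) := by
    fun_prop
  have h := meas_ge_le_lintegral_div (μ := (stdGaussian E).prod (stdGaussian E))
    (f := fun p : E × E => ENNReal.ofReal ((inner ℝ (T p.1) p.2) ^ 2)) hf.aemeasurable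
    (ε := ENNReal.ofReal (c ^ 2)) (by simp; positivity) (by simp)
  rw [lintegral_prod _ hf.aemeasurable] at h
  simp_rw [std_second_moment] at h
  have h2 : ∫⁻ x, ENNReal.ofReal (‖T x‖ ^ 2) ∂(stdGaussian E) ≤ ENNReal.ofReal (Module.finrank ℝ E) := by
    have := std_norm_moment (E := E)
    rw [ENNReal.ofReal_natCast, ← this]
    refine lintegral_mono fun x => ?_
    apply ENNReal.ofReal_le_ofReal
    gcongr
    exact hT x
  rw [ENNReal.ofReal_div_of_pos (by positivity)]
  refine le_trans ?_ (h.trans (ENNReal.div_le_div_right h2 _))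
  rw [← hind, Measure.map_apply (by fun_prop)]
  · refine measure_mono ?_
    intro x hx
    simp only [Set.mem_ofPred_eq, Set.mem_preimage] at hx ⊢
    apply ENNReal.ofReal_le_ofReal
    rw [← sq_abs (inner ℝ _ (x j))]
    gcongr
  · exact hf measurableSet_Ici

end events

section det
variable {F : Type*} [NormedAddCommGroup F] [InnerProductSpace ℝ F] [FiniteDimensional ℝ F]
variable {A B : Type*} [Fintype A] [Fintype B]

lemma det_identities (zA : A → F) (zB : B → F) (aA : A → ℝ) (aB : B → ℝ) (w wA : F)
    (U : Submodule ℝ F)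
    (hw : w = ∑ i, aA i • zA i + ∑ i, aB i • zB i)
    (hA : ∀ i, inner ℝ (zA i) w = 1) (hB : ∀ i, inner ℝ (zB i) w = 1)
    (hU : U = Submodule.span ℝ (Set.range zA)) (hwU : wA ∈ U)
    (hwA : ∀ i, inner ℝ (zA i) wA = 1) :
    (∀ i, inner ℝ (zB i) wA + ∑ j, aB j * inner ℝ (Uᗮ.starProjection (zB i)) (zB j) = 1) ∧
    ‖w - wA‖ ^ 2 = ∑ j, aB j * (1 - inner ℝ (zB j) wA) := by
  have hzU : ∀ i, zA i ∈ U := fun i => hU ▸ Submodule.subset_span ⟨i, rfl⟩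
  have hu : w - wA ∈ Uᗮ := by
    rw [hU, Submodule.mem_orthogonal]
    intro x hx
    induction hx using Submodule.span_induction with
    | mem x hx =>
      obtain ⟨i, rfl⟩ := hx
      rw [inner_sub_right, hA, hwA, sub_self]
    | zero => simp
    | add x y _ _ hx hy => rw [inner_add_left, hx, hy, add_zero]
    | smul c x _ hx => rw [inner_smul_left, hx, mul_zero]
  have hPU : ∀ x ∈ U, Uᗮ.starProjection x = 0 := by
    intro x hx
    rw [Submodule.starProjection_apply_eq_zero_iff]
    exact U.le_orthogonal_orthogonal hx
  have hPu : Uᗮ.starProjection (w - wA) = w - wA := Submodule.starProjection_eq_self_iff.2 hu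
  have hPu2 : w - wA = ∑ j, aB j • Uᗮ.starProjection (zB j) := by
    rw [← hPu, map_sub, hPU _ hwU, sub_zero, hw, map_add, map_sum, map_sum]
    simp [map_smul, hPU _ (hzU _)]
  constructor
  · intro i
    have h1 : inner ℝ (zB i) (w - wA) = ∑ j, aB j * inner ℝ (Uᗮ.starProjection (zB i)) (zB j) := by
      rw [hPu2, inner_sum]
      refine Finset.sum_congr rfl fun j _ => ?_
      rw [inner_smul_right, Submodule.inner_starProjection_left_eq_right]
    rw [← h1, inner_sub_right, hB]
    ring
  · have h2 : inner ℝ wA (w - wA) = 0 := (Submodule.mem_orthogonal _ _).1 hu _ hwU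
    have h3 : ∀ i, inner ℝ (zA i) (w - wA) = 0 := fun i =>
      (Submodule.mem_orthogonal _ _).1 hu _ (hzU i)
    rw [← real_inner_self_eq_norm_sq]
    nth_rewrite 1 [inner_sub_left]
    rw [h2, sub_zero]
    nth_rewrite 1 [hw]
    rw [inner_add_left, sum_inner, sum_inner]
    have h4 : ∀ j, inner ℝ (zB j) (w - wA) = 1 - inner ℝ (zB j) wA := fun j => by
      rw [inner_sub_right, hB]
    simp only [inner_smul_left, h3, h4]
    simp

lemma det_bound [DecidableEq B] (M : B → B → ℝ) (a q : B → ℝ) (Δ η T : ℝ)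
    (ha : ∀ i, 0 ≤ a i) (hη : 0 ≤ η)
    (hM : ∀ i, Δ ≤ M i i) (hoff : ∀ i j, i ≠ j → |M i j| ≤ η)
    (hq : ∀ i, |q i| ≤ T) (heq : ∀ i, q i + ∑ j, a j * M i j = 1) 
    (hpos : 0 < Δ - Fintype.card B * η) :
    (∀ j, a j ≤ (1 + T) / (Δ - Fintype.card B * η)) ∧
    (∀ i, q i - 1 ≤ Fintype.card B * η * ((1 + T) / (Δ - Fintype.card B * η))) := by
  have key : ∀ i, ∀ m, (∀ j, a j ≤ m) → 0 ≤ m →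
      a i * M i i - Fintype.card B * η * m ≤ ∑ j, a j * M i j := by
    intro i m hm hm0
    rw [← Finset.add_sum_erase _ _ (Finset.mem_univ i)]
    have : -(Fintype.card B * η * m) ≤ ∑ j ∈ Finset.univ.erase i, a j * M i j := by
      have h1 : ∑ j ∈ Finset.univ.erase i, -(η * m) ≤ ∑ j ∈ Finset.univ.erase i, a j * M i j := by
        refine Finset.sum_le_sum fun j hj => ?_
        have h2 := hoff i j (Finset.ne_of_mem_erase hj).symm
        have h3 := (abs_le.1 h2).1
        have := ha j
        have := hm j
        nlinarith
      rw [Finset.sum_const, nsmul_eq_mul] at h1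
      have h4 : ((Finset.univ.erase i).card : ℝ) ≤ Fintype.card B := by
        exact_mod_cast Finset.card_le_univ _
      have : ((Finset.univ.erase i).card : ℝ) * (η * m) ≤ Fintype.card B * (η * m) := by gcongr
      linarith
    linarith
  have hmax : ∀ j, a j ≤ (1 + T) / (Δ - Fintype.card B * η) := by
    intro j
    obtain ⟨i, -, hi⟩ := Finset.exists_max_image Finset.univ a ⟨j, Finset.mem_univ j⟩
    refine (hi j (Finset.mem_univ j)).trans ?_
    rw [le_div_iff₀ hpos]
    have h1 := key i (a i) (fun j => hi j (Finset.mem_univ j)) (ha i)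
    have h2 := heq i
    have h3 := (abs_le.1 (hq i)).1
    have h4 := mul_le_mul_of_nonneg_left (hM i) (ha i)
    linarith
  refine ⟨hmax, fun i => ?_⟩
  have hT : 0 ≤ T := (abs_nonneg _).trans (hq i)
  have h1 := key i _ hmax (by positivity)
  have h2 := heq i
  have h4 : 0 ≤ a i * M i i := by
    refine mul_nonneg (ha i) (le_trans ?_ (hM i))
    have : 0 ≤ Fintype.card B * η := by positivity
    linarith
  linarith

end det

/-- the label function -/
noncomputable def lab (t : ℝ) : ℝ := if 0 < t then 1 else -1

lemma lab_sq (t : ℝ) : lab t ^ 2 = 1 := by unfold lab; split_ifs <;> norm_num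
lemma lab_abs (t : ℝ) : |lab t| = 1 := by unfold lab; split_ifs <;> norm_num
lemma lab_mul (t : ℝ) : 0 ≤ lab t * t := by unfold lab; split_ifs <;> linarith
lemma lab_pos {t : ℝ} (h : 0 < t) : lab t = 1 := by simp [lab, h]

lemma tau_lower (r s θ ρ g h : ℝ) (hr : 0 < r) (hs : 1 ≤ s) (hρ : 0 ≤ ρ) (hθ : -(r / 8) ≤ θ)
    (hr2 : r ^ 2 = θ ^ 2 + ρ ^ 2) (hg : g ∈ Set.Icc s (s + 1)) (hh : h ∈ Set.Icc s (s + 1)) :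
    r * s / 2 ≤ θ * g + ρ * h := by
  have h2 : ρ * s ≤ ρ * h := mul_le_mul_of_nonneg_left hh.1 hρ
  have hrs : 0 < r * s := by positivity
  have hrs1 : r * 1 ≤ r * s := by gcongr
  rcases le_or_gt 0 θ with h | h
  · have h1 : θ * s ≤ θ * g := mul_le_mul_of_nonneg_left hg.1 h
    have h3 : r ≤ θ + ρ := by
      apply abs_le_of_sq_le_sq' _ (by positivity) |>.2
      nlinarith [mul_nonneg h hρ]
    have h4 : r * s ≤ (θ + ρ) * s := by gcongr
    linarith
  · have h1 : θ * (s + 1) ≤ θ * g := mul_le_mul_of_nonpos_left hg.2 h.le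
    have h5 : θ ^ 2 ≤ (r / 8) ^ 2 := by
      apply sq_le_sq'
      · linarith
      · linarith
    have h3 : 3 / 4 * r ≤ ρ := by
      apply abs_le_of_sq_le_sq' _ hρ |>.2
      nlinarith
    have h4 : 3 / 4 * r * s ≤ ρ * s := by gcongr
    have h6 : -(r / 8) * (s + 1) ≤ θ * (s + 1) := by gcongr
    linarith

section det2
variable {F : Type*} [NormedAddCommGroup F] [InnerProductSpace ℝ F] [FiniteDimensional ℝ F]
variable {A B : Type*} [Fintype A] [Fintype B]

set_option maxHeartbeats 1000000 in
lemma det_main (xA : A → F) (xB : B → F) (aA : A → ℝ) (aB : B → ℝ) (w wA v e : F)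
    (U : Submodule ℝ F) (k : ℕ) (d s r θ ρ : ℝ)
    (hk : Fintype.card B = k) (hk1 : 1000 ≤ k) (hd : (k : ℝ) ^ 10 ≤ d)
    (hs : 1 ≤ s) (hsk : s ≤ k) (hr : r = ‖wA‖) (hrs : 4 ≤ r * s)
    (haA : ∀ i, 0 ≤ aA i) (haB : ∀ i, 0 ≤ aB i)
    (hw : w = ∑ i, aA i • (lab (inner ℝ v (xA i)) • xA i)
      + ∑ i, aB i • (lab (inner ℝ v (xB i)) • xB i))
    (hA : ∀ i, inner ℝ (lab (inner ℝ v (xA i)) • xA i) w = 1)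
    (hB : ∀ i, inner ℝ (lab (inner ℝ v (xB i)) • xB i) w = 1)
    (hU : U = Submodule.span ℝ (Set.range fun i => lab (inner ℝ v (xA i)) • xA i))
    (hwU : wA ∈ U)
    (hwA : ∀ i, inner ℝ (lab (inner ℝ v (xA i)) • xA i) wA = 1)
    (hv : ‖v‖ = 1) (he : ‖e‖ = 1) (hve : inner ℝ v e = 0) (hwe : wA = θ • v + ρ • e)
    (hρ : 0 ≤ ρ)
    (hoff : ∀ i j, i ≠ j → |inner ℝ (Uᗮ.starProjection (xB i)) (xB j)| ≤ d / k ^ 3)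
    (hdiag : ∀ i, d / 8 ≤ ‖Uᗮ.starProjection (xB i)‖ ^ 2)
    (hq : ∀ i, |inner ℝ wA (xB i)| ≤ k * r)
    (i₀ : B) (hv0 : inner ℝ v (xB i₀) ∈ Set.Icc s (s + 1))
    (he0 : inner ℝ e (xB i₀) ∈ Set.Icc s (s + 1)) : False := by
  classical
  obtain ⟨id1, id2⟩ := det_identities _ _ aA aB w wA U hw hA hB hU hwU hwA
  have hkR : (1000 : ℝ) ≤ k := by exact_mod_cast hk1
  have hk0 : (0 : ℝ) < k := by linarith
  have hd0 : 0 < d := lt_of_lt_of_le (by positivity) hd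
  have hr0 : 0 < r := by
    by_contra h
    push Not at h
    nlinarith
  have hkη : (Fintype.card B : ℝ) * (d / k ^ 3) = d / k ^ 2 := by
    rw [hk]; field_simp
  have hkη2 : d / (k : ℝ) ^ 2 ≤ d / 16 := by
    gcongr
    nlinarith
  have hposb : d / 16 ≤ d / 8 - Fintype.card B * (d / k ^ 3) := by
    rw [hkη]; linarith
  obtain ⟨b1, b2⟩ := det_bound
    (fun i j => inner ℝ (Uᗮ.starProjection (lab (inner ℝ v (xB i)) • xB i))
      (lab (inner ℝ v (xB j)) • xB j)) aB
    (fun i => inner ℝ (lab (inner ℝ v (xB i)) • xB i) wA) (d / 8) (d / k ^ 3) (k * r)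
    haB (by positivity)
    (by
      intro i
      have h1 : inner ℝ (Uᗮ.starProjection (lab (inner ℝ v (xB i)) • xB i))
          (lab (inner ℝ v (xB i)) • xB i) = ‖Uᗮ.starProjection (xB i)‖ ^ 2 := by
        rw [map_smul, inner_smul_left, inner_smul_right, ← real_inner_self_eq_norm_sq,
          Submodule.inner_starProjection_left_eq_right,
          Submodule.inner_starProjection_left_eq_right]
        rw [Submodule.starProjection_eq_self_iff.2 (Submodule.starProjection_apply_mem _ _)]
        have := lab_sq (inner ℝ v (xB i))
        simp only [conj_trivial]
        rw [← mul_assoc, ← pow_two, this, one_mul]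
      simp only [h1]
      exact hdiag i)
    (by
      intro i j hij
      simp only [map_smul, inner_smul_left, inner_smul_right, abs_mul, lab_abs, conj_trivial,
        one_mul]
      exact hoff i j hij)
    (by
      intro i
      simp only [inner_smul_left, abs_mul, lab_abs, conj_trivial, one_mul]
      rw [real_inner_comm]
      exact hq i)
    id1 (by linarith)
  have hkr : 1 ≤ k * r := by nlinarith
  have hα : (1 + k * r) / (d / 8 - Fintype.card B * (d / k ^ 3)) ≤ 32 * (k * r) / d := by
    rw [div_le_div_iff₀ (by linarith) hd0]
    have : (k * r) * (d / 16) ≤ (k * r) * (d / 8 - Fintype.card B * (d / k ^ 3)) := by gcongr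
    nlinarith
  have hα0 : 0 ≤ 32 * (k * r) / d := by positivity
  -- norm of w - wA
  have hnorm : ‖w - wA‖ ^ 2 ≤ (r / 8) ^ 2 := by
    rw [id2]
    have h1 : ∑ j, aB j * (1 - inner ℝ (lab (inner ℝ v (xB j)) • xB j) wA)
        ≤ ∑ j : B, 32 * (k * r) / d * (2 * (k * r)) := by
      refine Finset.sum_le_sum fun j _ => ?_
      have h2 : 1 - inner ℝ (lab (inner ℝ v (xB j)) • xB j) wA ≤ 2 * (k * r) := by
        have h3 : |inner ℝ (lab (inner ℝ v (xB j)) • xB j) wA| ≤ k * r := by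
          simp only [inner_smul_left, abs_mul, lab_abs, conj_trivial, one_mul]
          rw [real_inner_comm]
          exact hq j
        have := (abs_le.1 h3).1
        linarith
      calc _ ≤ aB j * (2 * (k * r)) := mul_le_mul_of_nonneg_left h2 (haB j)
        _ ≤ _ := mul_le_mul_of_nonneg_right ((b1 j).trans hα) (by positivity)
    refine h1.trans ?_
    rw [Finset.sum_const, nsmul_eq_mul, Finset.card_univ, hk]
    have h5 : (k : ℝ) * (32 * (k * r) / d * (2 * (k * r))) = 64 * k ^ 3 / d * r ^ 2 := by
      field_simp; ring
    have h6 : 64 * (k : ℝ) ^ 3 / d ≤ 1 / 64 := by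
      rw [div_le_div_iff₀ hd0 (by norm_num)]
      have h7 : (1000 : ℝ) ^ 7 ≤ k ^ 7 := by gcongr
      have h8 : (k : ℝ) ^ 10 = k ^ 3 * k ^ 7 := by ring
      have h9 : (k : ℝ) ^ 3 * 1000 ^ 7 ≤ k ^ 3 * k ^ 7 := by gcongr
      have : 0 < (k : ℝ) ^ 3 := by positivity
      linarith
    rw [h5]
    calc _ ≤ 1 / 64 * r ^ 2 := by gcongr
      _ = _ := by ring
  have hnorm' : ‖w - wA‖ ≤ r / 8 := abs_le_of_sq_le_sq' hnorm (by positivity) |>.2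
  have hvw : 0 ≤ inner ℝ v w := by
    rw [hw, inner_add_right, inner_sum, inner_sum]
    refine add_nonneg (Finset.sum_nonneg fun i _ => ?_) (Finset.sum_nonneg fun i _ => ?_)
    · rw [inner_smul_right, inner_smul_right]
      exact mul_nonneg (haA i) (lab_mul _)
    · rw [inner_smul_right, inner_smul_right]
      exact mul_nonneg (haB i) (lab_mul _)
  have hvv : inner ℝ v v = (1 : ℝ) := by rw [real_inner_self_eq_norm_sq, hv]; norm_num
  have hee : inner ℝ e e = (1 : ℝ) := by rw [real_inner_self_eq_norm_sq, he]; norm_num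
  have hev : inner ℝ e v = (0 : ℝ) := by rw [real_inner_comm, hve]
  have hθ : inner ℝ v wA = θ := by
    rw [hwe, inner_add_right, inner_smul_right, inner_smul_right, hvv, hve]; ring
  have hθ' : -(r / 8) ≤ θ := by
    have h1 : inner ℝ v (w - wA) ≤ r / 8 := by
      refine (real_inner_le_norm _ _).trans ?_
      rw [hv, one_mul]; exact hnorm'
    rw [inner_sub_right, hθ] at h1
    linarith
  have hr2 : r ^ 2 = θ ^ 2 + ρ ^ 2 := by
    rw [hr, ← real_inner_self_eq_norm_sq, hwe]
    simp only [inner_add_left, inner_add_right, inner_smul_left, inner_smul_right, hvv, hee, hve,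
      hev, conj_trivial]
    ring
  have hlab : lab (inner ℝ v (xB i₀)) = 1 := lab_pos (by linarith [hv0.1])
  have hq0 := b2 i₀
  have hval : inner ℝ (lab (inner ℝ v (xB i₀)) • xB i₀) wA
      = θ * inner ℝ v (xB i₀) + ρ * inner ℝ e (xB i₀) := by
    rw [hlab, one_smul, hwe, inner_add_right, inner_smul_right, inner_smul_right,
      real_inner_comm v, real_inner_comm e]
  have hτ : r * s / 2 ≤ θ * inner ℝ v (xB i₀) + ρ * inner ℝ e (xB i₀) :=
    tau_lower r s θ ρ _ _ hr0 hs hρ hθ' hr2 hv0 he0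
  have hfin : (Fintype.card B : ℝ) * (d / k ^ 3) *
      ((1 + k * r) / (d / 8 - Fintype.card B * (d / k ^ 3))) ≤ r / 8 := by
    calc _ ≤ (Fintype.card B : ℝ) * (d / k ^ 3) * (32 * (k * r) / d) := by gcongr
      _ = 32 * r / k := by rw [hkη]; field_simp
      _ ≤ r / 8 := by
        rw [div_le_div_iff₀ hk0 (by norm_num)]
        nlinarith
  simp only [hval] at hq0
  have h1 : r * 1 ≤ r * s := by gcongr
  linarith

end det2

section bbound
variable {A B : Type*} [Fintype A] [Fintype B]

/-- dual certificate of support vector proliferation -/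
def DualCert {F : Type*} [NormedAddCommGroup F] [InnerProductSpace ℝ F]
    (v : F) (xA : A → F) (xB : B → F) : Prop :=
  ∃ (aA : A → ℝ) (aB : B → ℝ) (w : F), (∀ i, 0 ≤ aA i) ∧ (∀ i, 0 ≤ aB i) ∧
    w = ∑ i, aA i • (lab (inner ℝ v (xA i)) • xA i)
      + ∑ i, aB i • (lab (inner ℝ v (xB i)) • xB i) ∧
    (∀ i, inner ℝ (lab (inner ℝ v (xA i)) • xA i) w = 1) ∧
    (∀ i, inner ℝ (lab (inner ℝ v (xB i)) • xB i) w = 1)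

lemma exists_decomp {F : Type*} [NormedAddCommGroup F] [InnerProductSpace ℝ F]
    [FiniteDimensional ℝ F] (hE : 2 ≤ Module.finrank ℝ F) (v wA : F) (hv : ‖v‖ = 1) :
    ∃ (e : F) (θ ρ : ℝ), ‖e‖ = 1 ∧ inner ℝ v e = 0 ∧ 0 ≤ ρ ∧ wA = θ • v + ρ • e := by
  have hvv : inner ℝ v v = (1 : ℝ) := by rw [real_inner_self_eq_norm_sq, hv]; norm_num
  set u := wA - (inner ℝ v wA : ℝ) • v with hu
  have huv : inner ℝ v u = 0 := by
    rw [hu, inner_sub_right, inner_smul_right, hvv]; ring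
  by_cases h0 : u = 0
  · have h1 : 0 < Module.finrank ℝ (ℝ ∙ v)ᗮ := by
      have h2 := Submodule.finrank_add_finrank_orthogonal (ℝ ∙ v)
      have h3 : Module.finrank ℝ (ℝ ∙ v) = 1 := finrank_span_singleton (by
        intro h; rw [h] at hv; simp at hv)
      omega
    have : Nontrivial (ℝ ∙ v)ᗮ := Module.finrank_pos_iff.1 h1
    obtain ⟨⟨f, hf⟩, hf0⟩ := exists_ne (0 : (ℝ ∙ v)ᗮ)
    have hf0' : f ≠ 0 := by
      intro h; apply hf0; ext; exact h
    rw [Submodule.mem_orthogonal_singleton_iff_inner_right] at hf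
    refine ⟨‖f‖⁻¹ • f, inner ℝ v wA, 0, ?_, ?_, le_rfl, ?_⟩
    · rw [norm_smul, norm_inv, norm_norm, inv_mul_cancel₀ (norm_ne_zero_iff.2 hf0')]
    · rw [inner_smul_right, hf, mul_zero]
    · rw [zero_smul, add_zero]; exact sub_eq_zero.1 h0
  · refine ⟨‖u‖⁻¹ • u, inner ℝ v wA, ‖u‖, ?_, ?_, norm_nonneg _, ?_⟩
    · rw [norm_smul, norm_inv, norm_norm, inv_mul_cancel₀ (norm_ne_zero_iff.2 h0)]
    · rw [inner_smul_right, huv, mul_zero]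
    · rw [smul_smul, mul_inv_cancel₀ (norm_ne_zero_iff.2 h0), one_smul, hu]; abel

lemma q_le : Real.exp (1 / 4) * Real.sqrt (1 / 3) ≤ 3 / 4 := by
  have h1 : Real.exp (1 / 4) ^ 4 = Real.exp 1 := by rw [← Real.exp_nat_mul]; norm_num
  have h2 : Real.sqrt (1 / 3) ^ 4 = 1 / 9 := by
    rw [show (4 : ℕ) = 2 * 2 from rfl, pow_mul, Real.sq_sqrt (by norm_num)]; norm_num
  have h3 := Real.exp_one_lt_d9
  refine le_of_pow_le_pow_left₀ (n := 4) (by norm_num) (by norm_num) ?_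
  rw [mul_pow, h1, h2]
  norm_num at h3 ⊢
  linarith

set_option maxHeartbeats 1000000 in
lemma B_bound [DecidableEq B] (v : E) (hv : ‖v‖ = 1) (xA : A → E) (k : ℕ) (s R : ℝ)
    (hk : Fintype.card B = k) (hk1 : 1000 ≤ k) (hd : k ^ 10 ≤ Module.finrank ℝ E)
    (hm : 2 * Fintype.card A ≤ Module.finrank ℝ E)
    (hs : 1 ≤ s) (hsk : s ≤ k)
    (hA : ‖∑ i, lab (inner ℝ v (xA i)) • xA i‖ ≤ R) (hR : 4 * R ≤ s * Fintype.card A)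
    (hR0 : 0 < R) :
    (Measure.pi (fun _ : B => stdGaussian E)) {xB | DualCert v xA xB}
      ≤ ENNReal.ofReal (3 / k + Real.exp (-(k * ((2 * Real.pi)⁻¹ * Real.exp (-(s + 1) ^ 2))))) := by
  by_cases hne : ∃ xB : B → E, DualCert v xA xB
  swap
  · have : {xB : B → E | DualCert v xA xB} = ∅ := by
      ext x; simp only [Set.mem_ofPred_eq, Set.mem_empty_iff_false, iff_false]
      exact fun h => hne ⟨x, h⟩
    rw [this]; simp
  set d := Module.finrank ℝ E with hdef
  have hkR : (1000 : ℝ) ≤ k := by exact_mod_cast hk1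
  have hk0 : (0 : ℝ) < k := by linarith
  have hdR : (k : ℝ) ^ 10 ≤ d := by exact_mod_cast hd
  have hd0 : (0 : ℝ) < d := lt_of_lt_of_le (by positivity) hdR
  have hkd : 2 * k ≤ d := by
    have : 2 * k ≤ k ^ 10 := by
      have h1 : 1000 ^ 9 ≤ k ^ 9 := Nat.pow_le_pow_left hk1 9
      have h2 : k ^ 10 = k * k ^ 9 := by ring
      rw [h2]
      nlinarith
    omega
  set U := Submodule.span ℝ (Set.range fun i => lab (inner ℝ v (xA i)) • xA i) with hU
  obtain ⟨wA, hwU, hwA⟩ : ∃ wA ∈ U, ∀ i, inner ℝ (lab (inner ℝ v (xA i)) • xA i) wA = 1 := by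
    obtain ⟨xB, aA, aB, w, -, -, -, h, -⟩ := hne
    refine ⟨U.starProjection w, Submodule.starProjection_apply_mem _ _, fun i => ?_⟩
    have hmem : lab (inner ℝ v (xA i)) • xA i ∈ U := Submodule.subset_span ⟨i, rfl⟩
    rw [← Submodule.inner_starProjection_left_eq_right,
      Submodule.starProjection_eq_self_iff.2 hmem, h]
  obtain ⟨e, θ, ρ, he, hve, hρ, hwe⟩ := exists_decomp (by omega) v wA hv
  have hrs : 4 ≤ ‖wA‖ * s := by
    have h1 : inner ℝ (∑ i, lab (inner ℝ v (xA i)) • xA i) wA = Fintype.card A := by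
      rw [sum_inner]; simp [hwA]
    have h2 : (Fintype.card A : ℝ) ≤ R * ‖wA‖ := by
      rw [← h1]
      exact (real_inner_le_norm _ _).trans (by gcongr)
    have h3 : 4 * R ≤ s * (R * ‖wA‖) := hR.trans (by gcongr)
    have h4 : 4 * R ≤ (‖wA‖ * s) * R := by linarith
    exact le_of_mul_le_mul_right h4 hR0
  have hr0 : 0 < ‖wA‖ := by
    rcases (norm_nonneg wA).eq_or_lt with h | h
    · rw [← h] at hrs; linarith
    · exact h
  have hW : Module.finrank ℝ U + Module.finrank ℝ Uᗮ = d :=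
    Submodule.finrank_add_finrank_orthogonal U
  have hUm : Module.finrank ℝ U ≤ Fintype.card A := finrank_range_le_card _
  set W := Uᗮ with hWdef
  let E1 : Set (B → E) := ⋃ p : B × B, {x | p.1 ≠ p.2 ∧
    (d : ℝ) / k ^ 3 ≤ |inner ℝ (W.starProjection (x p.1)) (x p.2)|}
  let S2 : Set E := {x | ‖W.starProjection x‖ ^ 2 ≤ (Module.finrank ℝ W : ℝ) / 4}
  let S3 : Set E := {x | k * ‖wA‖ ≤ |inner ℝ wA x|}
  let S4 : Set E := {x | inner ℝ v x ∈ Set.Icc s (s + 1) ∧ inner ℝ e x ∈ Set.Icc s (s + 1)}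
  have hS2m : MeasurableSet S2 := by
    have : Measurable fun x : E => ‖W.starProjection x‖ ^ 2 := by fun_prop
    exact this measurableSet_Iic
  have hS3m : MeasurableSet S3 := by
    have : Measurable fun x : E => |(inner ℝ wA x : ℝ)| := by fun_prop
    exact this measurableSet_Ici
  have hS4m : MeasurableSet S4 := by
    have h1 : Measurable fun x : E => (inner ℝ v x : ℝ) := by fun_prop
    have h2 : Measurable fun x : E => (inner ℝ e x : ℝ) := by fun_prop
    exact (h1 measurableSet_Icc).inter (h2 measurableSet_Icc)
  have hsub : {xB | DualCert v xA xB} ⊆ ((E1 ∪ {x | ∃ i, x i ∈ S2}) ∪ {x | ∃ i, x i ∈ S3})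
      ∪ {x | ∀ i, x i ∈ S4ᶜ} := by
    rintro xB ⟨aA, aB, w, haA, haB, hw, hA1, hB1⟩
    by_contra hcon
    simp only [Set.mem_union, not_or] at hcon
    obtain ⟨⟨⟨c1, c2⟩, c3⟩, c4⟩ := hcon
    simp only [Set.mem_ofPred_eq, not_exists] at c2 c3
    simp only [Set.mem_ofPred_eq, not_forall, Set.mem_compl_iff, not_not] at c4
    obtain ⟨i₀, hv0, he0⟩ := c4
    refine det_main xA xB aA aB w wA v e U k d s ‖wA‖ θ ρ hk hk1 hdR hs hsk rfl hrs haA haB hw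
      hA1 hB1 hU hwU hwA hv he hve hwe hρ ?_ ?_ ?_ i₀ hv0 he0
    · intro i j hij
      by_contra h
      push Not at h
      exact c1 (Set.mem_iUnion.2 ⟨(i, j), hij, h.le⟩)
    · intro i
      have h1 := c2 i
      simp only [S2, Set.mem_ofPred_eq, not_le] at h1
      refine le_trans ?_ h1.le
      have h2 : d ≤ 2 * Module.finrank ℝ W := by omega
      have h3 : (d : ℝ) ≤ 2 * Module.finrank ℝ W := by exact_mod_cast h2
      linarith
    · intro i
      have h1 := c3 i
      simp only [S3, Set.mem_ofPred_eq, not_le] at h1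
      exact h1.le
  have p1 : (Measure.pi (fun _ : B => stdGaussian E)) E1 ≤ ENNReal.ofReal (1 / k) := by
    refine (measure_iUnion_fintype_le _ _).trans ?_
    calc _ ≤ ∑ p : B × B, ENNReal.ofReal (d / (d / k ^ 3) ^ 2) := by
          refine Finset.sum_le_sum fun p _ => ?_
          by_cases hp : p.1 = p.2
          · simp [hp]
          · refine le_trans (measure_mono ?_) (cheb_pair W.starProjection
              (fun x => Submodule.norm_starProjection_apply_le _ _) ((d : ℝ) / k ^ 3)
              (by positivity) p.1 p.2 hp)
            exact fun x hx => hx.2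
      _ = ENNReal.ofReal (k * k * (d / (d / k ^ 3) ^ 2)) := by
          rw [Finset.sum_const, Finset.card_univ, Fintype.card_prod, hk, nsmul_eq_mul,
            ← ENNReal.ofReal_natCast, ← ENNReal.ofReal_mul (by positivity)]
          push_cast; rfl
      _ ≤ _ := by
          apply ENNReal.ofReal_le_ofReal
          have h1 : (k : ℝ) * k * (d / (d / k ^ 3) ^ 2) = k ^ 8 / d := by field_simp
          rw [h1, div_le_div_iff₀ hd0 hk0]
          have h2 : (k : ℝ) ^ 10 = k ^ 8 * k * k := by ring
          have h3 : (k : ℝ) ^ 8 * k * 1 ≤ k ^ 8 * k * k := by gcongr; linarith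
          linarith
  have p2 : (Measure.pi (fun _ : B => stdGaussian E)) {x | ∃ i, x i ∈ S2}
      ≤ ENNReal.ofReal (1 / k) := by
    have h1 := proj_lower W
    have h2 : (Real.exp (1 / 4) * Real.sqrt (1 / 3)) ^ (Module.finrank ℝ W) ≤ (3 / 4) ^ k := by
      calc _ ≤ (3 / 4 : ℝ) ^ (Module.finrank ℝ W) := by
            gcongr
            exact q_le
        _ ≤ _ := pow_le_pow_of_le_one (by norm_num) (by norm_num) (by omega)
    have h3 : stdGaussian E S2 ≤ ENNReal.ofReal ((3 / 4) ^ k) := by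
      rw [← ENNReal.ofReal_toReal (measure_ne_top (stdGaussian E) S2)]
      exact ENNReal.ofReal_le_ofReal (h1.trans h2)
    refine (ev_one S2 hS2m _ h3).trans ?_
    rw [hk, ← ENNReal.ofReal_natCast, ← ENNReal.ofReal_mul (by positivity)]
    apply ENNReal.ofReal_le_ofReal
    rw [le_div_iff₀ hk0]
    have h4 : (3 / 4 : ℝ) ^ k ≤ Real.exp (-(k / 4)) := by
      have : (3 / 4 : ℝ) ≤ Real.exp (-(1 / 4)) := by
        have := Real.add_one_le_exp (-(1 / 4) : ℝ); linarith
      calc _ ≤ Real.exp (-(1 / 4)) ^ k := by gcongr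
        _ = _ := by rw [← Real.exp_nat_mul]; congr 1; ring
    have h5 : (k : ℝ) ^ 2 ≤ Real.exp (k / 4) := by
      have := Real.pow_div_factorial_le_exp ((k : ℝ) / 4) (by positivity) 3
      have h6 : ((Nat.factorial 3 : ℕ) : ℝ) = 6 := by norm_num [Nat.factorial]
      rw [h6] at this
      refine le_trans ?_ this
      nlinarith [sq_nonneg (k : ℝ)]
    calc (k : ℝ) * (3 / 4) ^ k * k ≤ k * Real.exp (-(k / 4)) * k := by gcongr
      _ = k ^ 2 * Real.exp (-(k / 4)) := by ring
      _ ≤ Real.exp (k / 4) * Real.exp (-(k / 4)) := by gcongr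
      _ = 1 := by rw [← Real.exp_add]; simp
  have p3 : (Measure.pi (fun _ : B => stdGaussian E)) {x | ∃ i, x i ∈ S3}
      ≤ ENNReal.ofReal (1 / k) := by
    refine (ev_one S3 hS3m _ (cheb_one wA (k * ‖wA‖) (by positivity))).trans ?_
    rw [hk, ← ENNReal.ofReal_natCast, ← ENNReal.ofReal_mul (by positivity)]
    apply ENNReal.ofReal_le_ofReal
    apply le_of_eq
    field_simp
  have p4 : (Measure.pi (fun _ : B => stdGaussian E)) {x | ∀ i, x i ∈ S4ᶜ}
      ≤ ENNReal.ofReal (Real.exp (-(k * ((2 * Real.pi)⁻¹ * Real.exp (-(s + 1) ^ 2))))) := by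
    rw [ev_all, hk]
    have hon : Orthonormal ℝ ![v, e] := by
      rw [orthonormal_iff_ite]
      have hvv : inner ℝ v v = (1 : ℝ) := by rw [real_inner_self_eq_norm_sq, hv]; norm_num
      have hee : inner ℝ e e = (1 : ℝ) := by rw [real_inner_self_eq_norm_sq, he]; norm_num
      have hev : inner ℝ e v = (0 : ℝ) := by rw [real_inner_comm, hve]
      intro i j
      fin_cases i <;> fin_cases j <;> simp [hvv, hee, hve, hev, -inner_self_eq_norm_sq_to_K]
    have h1 := pair_lower v e hon s (by linarith)
    have h2 : stdGaussian E S4ᶜ = ENNReal.ofReal ((stdGaussian E).real S4ᶜ) :=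
      (ENNReal.ofReal_toReal (measure_ne_top _ _)).symm
    rw [h2, ← ENNReal.ofReal_pow measureReal_nonneg]
    apply ENNReal.ofReal_le_ofReal
    rw [probReal_compl_eq_one_sub hS4m]
    set p0 := (2 * Real.pi)⁻¹ * Real.exp (-(s + 1) ^ 2) with hp0
    have h3 : 1 - (stdGaussian E).real S4 ≤ Real.exp (-p0) := by
      have := Real.add_one_le_exp (-p0)
      have h4 : p0 ≤ (stdGaussian E).real S4 := h1
      linarith
    calc _ ≤ Real.exp (-p0) ^ k := by
          have : (stdGaussian E).real S4 ≤ 1 := measureReal_le_one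
          gcongr
      _ = _ := by rw [← Real.exp_nat_mul]; congr 1; ring
  refine (measure_mono hsub).trans ?_
  refine (measure_union_le _ _).trans ?_
  rw [ENNReal.ofReal_add (by positivity) (by positivity)]
  refine add_le_add ?_ p4
  refine (measure_union_le _ _).trans ?_
  rw [show (3 : ℝ) / k = 1 / k + 1 / k + 1 / k by ring, ENNReal.ofReal_add (by positivity)
    (by positivity), ENNReal.ofReal_add (by positivity) (by positivity)]
  refine add_le_add ?_ p3
  exact (measure_union_le _ _).trans (add_le_add p1 p2)

end bbound

section kkt
variable {ι : Type*} [Fintype ι] {F : Type*} [NormedAddCommGroup F] [InnerProductSpace ℝ F]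
  [FiniteDimensional ℝ F]

lemma conic_caratheodory (z : ι → F) (x : F) (a : ι → ℝ) (ha : ∀ i, 0 ≤ a i)
    (hx : x = ∑ i, a i • z i) :
    ∃ s : Finset ι, LinearIndependent ℝ (fun i : s => z i) ∧
      ∃ b : s → ℝ, (∀ i, 0 ≤ b i) ∧ x = ∑ i, b i • z i := by
  classical
  let P : ℕ → Prop := fun N => ∃ a : ι → ℝ, (∀ i, 0 ≤ a i) ∧ x = ∑ i, a i • z i ∧
    (Finset.univ.filter (fun i => a i ≠ 0)).card = N
  have hP : ∃ N, P N := ⟨_, a, ha, hx, rfl⟩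
  obtain ⟨a, ha, hx, hN⟩ := Nat.find_spec hP
  set s := Finset.univ.filter (fun i => a i ≠ 0) with hs
  have hxs : x = ∑ i : s, a i • z i := by
    rw [hx, Finset.sum_coe_sort s (fun i => a i • z i)]
    symm
    apply Finset.sum_subset (Finset.subset_univ s)
    intro i _ hi
    have : a i = 0 := by simpa [hs] using hi
    simp [this]
  refine ⟨s, ?_, fun i => a i, fun i => ha i, hxs⟩
  by_contra hli
  rw [Fintype.linearIndependent_iff] at hli
  push Not at hli
  obtain ⟨g, hg, i₁, hi₁⟩ := hli
  -- extend
  obtain ⟨c, hc0, hcs, j, hj⟩ : ∃ c : ι → ℝ, ∑ i, c i • z i = 0 ∧ (∀ i ∉ s, c i = 0) ∧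
      ∃ j, 0 < c j := by
    let c0 : ι → ℝ := fun i => if h : i ∈ s then g ⟨i, h⟩ else 0
    have hc0s : ∀ i ∉ s, c0 i = 0 := fun i hi => by simp [c0, hi]
    have hc0 : ∑ i, c0 i • z i = 0 := by
      rw [← hg, ← Finset.sum_subset (Finset.subset_univ s), ← Finset.sum_coe_sort s]
      · refine Finset.sum_congr rfl fun i _ => ?_
        simp [c0]
      · intro i _ hi
        simp [hc0s i hi]
    have hc1 : c0 i₁ = g i₁ := by simp [c0]
    rcases lt_or_gt_of_ne hi₁ with h | h
    · refine ⟨fun i => - c0 i, by simp [hc0], fun i hi => by simp [hc0s i hi], i₁, ?_⟩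
      show 0 < - c0 i₁
      rw [hc1]; linarith
    · exact ⟨c0, hc0, hc0s, i₁, by rw [hc1]; exact h⟩
  let T := Finset.univ.filter (fun i => 0 < c i)
  obtain ⟨m, hmT, hm⟩ := T.exists_min_image (fun i => a i / c i) ⟨j, by simp [T, hj]⟩
  have hcm : 0 < c m := by simpa [T] using hmT
  have hms : m ∈ s := by
    by_contra h
    rw [hcs m h] at hcm; exact lt_irrefl _ hcm
  set t := a m / c m with ht
  have ht0 : 0 ≤ t := div_nonneg (ha m) hcm.le
  have hb : ∀ i, 0 ≤ a i - t * c i := by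
    intro i
    rcases le_or_gt (c i) 0 with h | h
    · have := mul_nonneg ht0 (neg_nonneg.2 h)
      have := ha i
      linarith
    · have h1 := hm i (by simp [T, h])
      have : t * c i ≤ a i := (le_div_iff₀ h).1 h1
      linarith
  refine Nat.find_min hP (m := (Finset.univ.filter (fun i => a i - t * c i ≠ 0)).card) ?_
    ⟨fun i => a i - t * c i, hb, ?_, rfl⟩
  · rw [← hN]
    apply Finset.card_lt_card
    rw [Finset.ssubset_iff_of_subset]
    · refine ⟨m, hms, ?_⟩
      simp only [Finset.mem_filter, Finset.mem_univ, true_and, not_not]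
      rw [ht]; field_simp; ring
    · intro i hi
      by_contra h
      have h1 : a i = 0 := by simpa [hs] using h
      simp [h1, hcs i h] at hi
  · simp only [sub_smul, mul_smul, Finset.sum_sub_distrib, ← Finset.smul_sum, hc0, smul_zero,
      sub_zero]
    exact hx

lemma cone_closed (z : ι → F) :
    IsClosed {x : F | ∃ a : ι → ℝ, (∀ i, 0 ≤ a i) ∧ x = ∑ i, a i • z i} := by
  classical
  have : {x : F | ∃ a : ι → ℝ, (∀ i, 0 ≤ a i) ∧ x = ∑ i, a i • z i} =
      ⋃ s : {s : Finset ι // LinearIndependent ℝ (fun i : s => z i)},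
        (Fintype.linearCombination ℝ (fun i : s.1 => z i)) '' {b | ∀ i, 0 ≤ b i} := by
    ext x
    simp only [Set.mem_ofPred_eq, Set.mem_iUnion, Set.mem_image, Fintype.linearCombination_apply]
    constructor
    · rintro ⟨a, ha, hx⟩
      obtain ⟨s, hs, b, hb, hxb⟩ := conic_caratheodory z x a ha hx
      exact ⟨⟨s, hs⟩, b, hb, hxb.symm⟩
    · rintro ⟨⟨s, hs⟩, b, hb, rfl⟩
      refine ⟨fun i => if h : i ∈ s then b ⟨i, h⟩ else 0, fun i => ?_, ?_⟩
      · by_cases h : i ∈ s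
        · simp [h, hb]
        · simp [h]
      · rw [← Finset.sum_subset (Finset.subset_univ s), ← Finset.sum_coe_sort s]
        · refine Finset.sum_congr rfl fun i _ => ?_
          simp
        · intro i _ hi
          simp [hi]
  rw [this]
  apply isClosed_iUnion_of_finite
  rintro ⟨s, hs⟩
  have hinj : Function.Injective (Fintype.linearCombination ℝ (fun i : s => z i)) :=
    hs.fintypeLinearCombination_injective
  apply ((Fintype.linearCombination ℝ (fun i : s => z i)).isClosedEmbedding_of_injective
    (LinearMap.ker_eq_bot.2 hinj)).isClosedMap
  simp only [Set.ofPred_forall]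
  exact isClosed_iInter fun i => isClosed_le continuous_const (continuous_apply i)

lemma kkt (z : ι → F) (w : F) (hw : ∀ i, inner ℝ (z i) w = 1)
    (hmin : ∀ w' : F, (∀ i, 1 ≤ inner ℝ (z i) w') → ‖w‖ ≤ ‖w'‖) :
    ∃ a : ι → ℝ, (∀ i, 0 ≤ a i) ∧ w = ∑ i, a i • z i := by
  classical
  by_contra hcon
  let C : ProperCone ℝ F :=
    { carrier := {x : F | ∃ a : ι → ℝ, (∀ i, 0 ≤ a i) ∧ x = ∑ i, a i • z i}
      add_mem' := by
        rintro x y ⟨a, ha, rfl⟩ ⟨b, hb, rfl⟩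
        exact ⟨fun i => a i + b i, fun i => add_nonneg (ha i) (hb i), by
          simp [add_smul, Finset.sum_add_distrib]⟩
      zero_mem' := ⟨0, fun i => le_rfl, by simp⟩
      smul_mem' := by
        rintro c x ⟨a, ha, rfl⟩
        refine ⟨fun i => (c : ℝ) * a i, fun i => mul_nonneg c.2 (ha i), ?_⟩
        rw [Finset.smul_sum]
        refine Finset.sum_congr rfl fun i _ => ?_
        rw [mul_smul]; rfl
      isClosed' := cone_closed z }
  have hC : w ∉ C := hcon
  obtain ⟨h, h1, h2⟩ := ProperCone.hyperplane_separation' C hC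
  have hz : ∀ i, 0 ≤ inner ℝ (z i) h := fun i => h1 (z i)
    ⟨fun j => if j = i then 1 else 0, fun j => by dsimp only; split_ifs <;> norm_num, by simp⟩
  have hh : h ≠ 0 := by rintro rfl; simp at h2
  have hhn : 0 < ‖h‖ ^ 2 := by have := norm_pos_iff.2 hh; positivity
  set p := inner ℝ w h with hp
  set t := -p / ‖h‖ ^ 2 with ht
  have ht0 : 0 < t := div_pos (by linarith) hhn
  have h3 := hmin (w + t • h) (fun i => by
    rw [inner_add_right, hw, inner_smul_right]
    have := mul_nonneg ht0.le (hz i)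
    linarith)
  have h4 : ‖w + t • h‖ ^ 2 = ‖w‖ ^ 2 + 2 * (t * p) + t ^ 2 * ‖h‖ ^ 2 := by
    rw [norm_add_sq_real, inner_smul_right, norm_smul, mul_pow, Real.norm_eq_abs, sq_abs]
  have h5 : ‖w‖ ^ 2 ≤ ‖w + t • h‖ ^ 2 := by gcongr
  have h6 : t * ‖h‖ ^ 2 = -p := by rw [ht]; field_simp
  have h7 : t * p < 0 := mul_neg_of_pos_of_neg ht0 h2
  have h8 : t ^ 2 * ‖h‖ ^ 2 = -(t * p) := by rw [pow_two, mul_assoc, h6]; ring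
  linarith

end kkt

section measA
variable {A B : Type*} [Fintype A] [Fintype B]

/-- sign vector attached to a Boolean vector -/
def sgn (b : Bool) : ℝ := if b then 1 else -1

lemma sgn_sq (b : Bool) : sgn b ^ 2 = 1 := by cases b <;> simp [sgn]

lemma lab_sgn (t : ℝ) : ∃ b, lab t = sgn b := by
  by_cases h : 0 < t
  · exact ⟨true, by simp [lab, sgn, h]⟩
  · exact ⟨false, by simp [lab, sgn, h]⟩

/-- the bad event on the first block -/
def badA (A : Type*) [Fintype A] (d : ℕ) : Set (A → EuclideanSpace ℝ (Fin d)) :=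
  ⋃ b : A → Bool, {x | 4 * (Fintype.card A : ℝ) * d ≤ ‖∑ i, sgn (b i) • x i‖ ^ 2}

lemma badA_meas (d : ℕ) : MeasurableSet (badA A d) := by
  classical
  refine MeasurableSet.iUnion fun b => IsClosed.measurableSet ?_
  exact isClosed_le continuous_const (by fun_prop)

lemma badA_bound [Nonempty A] (d : ℕ) :
    (Measure.pi (fun _ : A => stdGaussian (EuclideanSpace ℝ (Fin d)))) (badA A d)
      ≤ ENNReal.ofReal (2 ^ (Fintype.card A) * (Real.exp (-1) * √2) ^ d) := by
  classical
  refine (measure_iUnion_fintype_le _ _).trans ?_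
  have hm : (0 : ℝ) < Fintype.card A := by exact_mod_cast Fintype.card_pos
  have key : ∀ b : A → Bool, (Measure.pi (fun _ : A => stdGaussian (EuclideanSpace ℝ (Fin d))))
      {x | 4 * (Fintype.card A : ℝ) * d ≤ ‖∑ i, sgn (b i) • x i‖ ^ 2}
      ≤ ENNReal.ofReal ((Real.exp (-1) * √2) ^ d) := by
    intro b
    have h1 := std_sum (E := EuclideanSpace ℝ (Fin d)) (fun i => sgn (b i)) (fun i => sgn_sq _)
    have h2 := chi_upper (ι := Fin d)
    rw [Fintype.card_fin] at h2
    have hmeas : Measurable (fun x : A → EuclideanSpace ℝ (Fin d) =>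
        (√(Fintype.card A))⁻¹ • ∑ i, sgn (b i) • x i) := by
      have : Continuous (fun x : A → EuclideanSpace ℝ (Fin d) =>
        (√(Fintype.card A))⁻¹ • ∑ i, sgn (b i) • x i) := by fun_prop
      exact this.measurable
    have hS : MeasurableSet {x : EuclideanSpace ℝ (Fin d) | 4 * (d : ℝ) ≤ ‖x‖ ^ 2} :=
      (isClosed_le continuous_const (by fun_prop)).measurableSet
    have h3 : stdGaussian (EuclideanSpace ℝ (Fin d)) {x | 4 * (d : ℝ) ≤ ‖x‖ ^ 2}
        ≤ ENNReal.ofReal ((Real.exp (-1) * √2) ^ d) := by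
      rw [← ENNReal.ofReal_toReal (measure_ne_top (stdGaussian (EuclideanSpace ℝ (Fin d))) _)]
      exact ENNReal.ofReal_le_ofReal h2
    rw [← h1, Measure.map_apply hmeas hS] at h3
    refine le_trans (measure_mono ?_) h3
    intro x hx
    simp only [Set.mem_preimage, Set.mem_ofPred_eq] at hx ⊢
    rw [norm_smul, mul_pow, norm_inv, inv_pow, Real.norm_eq_abs, sq_abs, Real.sq_sqrt hm.le]
    rw [inv_mul_eq_div, le_div_iff₀ hm]
    linarith
  refine (Finset.sum_le_sum fun b _ => key b).trans ?_
  rw [Finset.sum_const, Finset.card_univ, Fintype.card_fun, Fintype.card_bool, nsmul_eq_mul,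
    ENNReal.ofReal_mul (by positivity)]
  gcongr
  rw [← ENNReal.ofReal_natCast]
  push_cast; rfl

lemma not_badA {d : ℕ} (v : EuclideanSpace ℝ (Fin d)) (x : A → EuclideanSpace ℝ (Fin d))
    (hx : x ∉ badA A d) :
    ‖∑ i, lab (inner ℝ v (x i)) • x i‖ ≤ √(4 * (Fintype.card A : ℝ) * d) := by
  choose b hb using fun i => lab_sgn (inner ℝ v (x i))
  simp only [badA, Set.mem_iUnion, not_exists, Set.mem_ofPred_eq, not_le] at hx
  apply Real.le_sqrt_of_sq_le
  have := hx b
  simp only [hb]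
  exact this.le

lemma cert_meas {F : Type*} [NormedAddCommGroup F] [InnerProductSpace ℝ F]
    [FiniteDimensional ℝ F] [MeasurableSpace F] [BorelSpace F] (v : F) :
    MeasurableSet {p : (A → F) × (B → F) | DualCert v p.1 p.2} := by
  classical
  have : ProperSpace F := FiniteDimensional.proper ℝ F
  let T : (A → Bool) → (B → Bool) → Set (((A → ℝ) × (B → ℝ) × F) × ((A → F) × (B → F))) :=
    fun b c => {q | (∀ i, 0 ≤ q.1.1 i) ∧ (∀ i, 0 ≤ q.1.2.1 i) ∧
      q.1.2.2 = ∑ i, q.1.1 i • (sgn (b i) • q.2.1 i) + ∑ i, q.1.2.1 i • (sgn (c i) • q.2.2 i) ∧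
      (∀ i, inner ℝ (sgn (b i) • q.2.1 i) q.1.2.2 = 1) ∧
      (∀ i, inner ℝ (sgn (c i) • q.2.2 i) q.1.2.2 = 1)}
  have hT : ∀ b c, IsClosed (T b c) := by
    intro b c
    refine IsClosed.and ?_ (IsClosed.and ?_ (IsClosed.and ?_ (IsClosed.and ?_ ?_)))
    · simp only [Set.ofPred_forall]
      exact isClosed_iInter fun i => isClosed_le continuous_const (by fun_prop)
    · simp only [Set.ofPred_forall]
      exact isClosed_iInter fun i => isClosed_le continuous_const (by fun_prop)
    · exact isClosed_eq (by fun_prop) (by fun_prop)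
    · simp only [Set.ofPred_forall]
      exact isClosed_iInter fun i => isClosed_eq (by fun_prop) continuous_const
    · simp only [Set.ofPred_forall]
      exact isClosed_iInter fun i => isClosed_eq (by fun_prop) continuous_const
  have hTm : ∀ b c, MeasurableSet (Prod.snd '' T b c) := by
    intro b c
    have h1 : IsSigmaCompact (Prod.snd '' T b c) :=
      (isSigmaCompact_univ.of_isClosed_subset (hT b c) (Set.subset_univ _)).image continuous_snd
    obtain ⟨K, hK, hKU⟩ := h1
    rw [← hKU]
    exact MeasurableSet.iUnion fun n => (hK n).measurableSet
  have heq : {p : (A → F) × (B → F) | DualCert v p.1 p.2} =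
      ⋃ b : A → Bool, ⋃ c : B → Bool, ({p | (∀ i, lab (inner ℝ v (p.1 i)) = sgn (b i))} ∩
        {p | (∀ i, lab (inner ℝ v (p.2 i)) = sgn (c i))}) ∩ Prod.snd '' T b c := by
    ext ⟨xA, xB⟩
    simp only [Set.mem_iUnion, Set.mem_inter_iff, Set.mem_ofPred_eq]
    constructor
    · rintro ⟨aA, aB, w, h⟩
      choose b hb using fun i => lab_sgn (inner ℝ v (xA i))
      choose c hc using fun i => lab_sgn (inner ℝ v (xB i))
      refine ⟨b, c, ⟨hb, hc⟩, ((aA, aB, w), (xA, xB)), ?_, rfl⟩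
      simp only [hb, hc] at h
      exact h
    · rintro ⟨b, c, ⟨hb, hc⟩, ⟨⟨aA, aB, w⟩, ⟨xA', xB'⟩⟩, h, he⟩
      simp only [Prod.mk.injEq] at he
      obtain ⟨rfl, rfl⟩ := he
      refine ⟨aA, aB, w, ?_⟩
      simp only [hb, hc]
      exact h
  have hlab : Measurable lab := by
    unfold lab
    exact Measurable.ite measurableSet_Ioi measurable_const measurable_const
  rw [heq]
  refine MeasurableSet.iUnion fun b => MeasurableSet.iUnion fun c =>
    MeasurableSet.inter (MeasurableSet.inter ?_ ?_) (hTm b c)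
  · simp only [Set.ofPred_forall]
    refine MeasurableSet.iInter fun i => ?_
    have : Measurable fun p : (A → F) × (B → F) => (inner ℝ v (p.1 i) : ℝ) :=
      Continuous.measurable (by fun_prop)
    exact (hlab.comp this) (measurableSet_singleton _)
  · simp only [Set.ofPred_forall]
    refine MeasurableSet.iInter fun i => ?_
    have : Measurable fun p : (A → F) × (B → F) => (inner ℝ v (p.2 i) : ℝ) :=
      Continuous.measurable (by fun_prop)
    exact (hlab.comp this) (measurableSet_singleton _)

end measA

section transfer

lemma enorm2_eq_s11 {k : ℕ} (w : Fin k → ℝ) : enorm2 w = ‖WithLp.toLp 2 w‖ := by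
  rw [enorm2, EuclideanSpace.norm_eq]
  simp

lemma inner_eq_dot {k : ℕ} (a b : Fin k → ℝ) :
    inner ℝ (WithLp.toLp 2 a) (WithLp.toLp 2 b) = a ⬝ᵥ b := by
  rw [EuclideanSpace.inner_toLp_toLp, dotProduct_comm]
  simp

lemma svp_cert {n d : ℕ} (X : Matrix (Fin n) (Fin d) ℝ) (v : Fin d → ℝ) (p : Fin n → Prop)
    [DecidablePred p]
    (h : SVPholds X (fun i => if 0 < v ⬝ᵥ X i then (1 : ℝ) else -1)) :
    DualCert (WithLp.toLp 2 v) (fun i : {i // p i} => WithLp.toLp 2 (X i))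
      (fun i : {i // ¬ p i} => WithLp.toLp 2 (X i)) := by
  obtain ⟨w, h1, h2, h3, -⟩ := h
  let z : Fin n → EuclideanSpace ℝ (Fin d) := fun i =>
    lab (inner ℝ (WithLp.toLp 2 v) (WithLp.toLp 2 (X i))) • WithLp.toLp 2 (X i)
  have hz : ∀ i (w' : Fin d → ℝ), inner ℝ (z i) (WithLp.toLp 2 w') =
      (if 0 < v ⬝ᵥ X i then (1 : ℝ) else -1) * (X i ⬝ᵥ w') := by
    intro i w'
    simp only [z]
    rw [real_inner_smul_left, inner_eq_dot, inner_eq_dot, lab]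
  have hzw : ∀ i, inner ℝ (z i) (WithLp.toLp 2 w) = 1 := fun i => by rw [hz]; exact h3 i
  obtain ⟨a, ha, hw⟩ := kkt z (WithLp.toLp 2 w) hzw (by
    intro w' hw'
    have h4 := h2 w'.ofLp (fun i => by
      have := hw' i
      rw [← WithLp.toLp_ofLp 2 w', hz] at this
      exact this)
    rw [enorm2_eq_s11, enorm2_eq_s11, WithLp.toLp_ofLp] at h4
    exact h4)
  refine ⟨fun i => a i, fun i => a i, WithLp.toLp 2 w, fun i => ha i, fun i => ha i, ?_,
    fun i => hzw i, fun i => hzw i⟩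
  rw [hw]
  exact (Fintype.sum_subtype_add_sum_subtype p (fun i => a i • z i)).symm

lemma law_rows {Ω : Type*} [MeasurableSpace Ω] (μ : Measure Ω) [IsProbabilityMeasure μ]
    {n d : ℕ} (X : Ω → Matrix (Fin n) (Fin d) ℝ) (hX : IsGaussSample μ X) :
    MeasurePreserving (fun ω (i : Fin n) => (WithLp.toLp 2 (X ω i) : EuclideanSpace ℝ (Fin d))) μ
      (Measure.pi (fun _ : Fin n => stdGaussian (EuclideanSpace ℝ (Fin d)))) := by
  have h1 : MeasurePreserving (fun ω (p : Fin n × Fin d) => X ω p.1 p.2) μ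
      (Measure.pi (fun _ : Fin n × Fin d => gaussianReal 0 1)) := by
    refine ⟨measurable_pi_lambda _ fun p => hX.meas p.1 p.2, ?_⟩
    refine ((iIndepFun_iff_map_fun_eq_pi_map
      (fun p : Fin n × Fin d => (hX.meas p.1 p.2).aemeasurable)).1 hX.indep).trans ?_
    congr 1
    ext1 p
    exact hX.law p.1 p.2
  have h2 : MeasurePreserving (MeasurableEquiv.curry (Fin n) (Fin d) ℝ)
      (Measure.pi (fun _ : Fin n × Fin d => gaussianReal 0 1))
      (Measure.pi (fun _ : Fin n => Measure.pi (fun _ : Fin d => gaussianReal 0 1))) := by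
    refine ⟨MeasurableEquiv.measurable _, ?_⟩
    have := Measure.infinitePi_map_curry (fun (_ : Fin n) (_ : Fin d) => gaussianReal 0 1)
    simpa only [Measure.infinitePi_eq_pi] using this
  have h3 : MeasurePreserving (fun (x : Fin n → Fin d → ℝ) (i : Fin n) =>
      (WithLp.toLp 2 (x i) : EuclideanSpace ℝ (Fin d)))
      (Measure.pi (fun _ : Fin n => Measure.pi (fun _ : Fin d => gaussianReal 0 1)))
      (Measure.pi (fun _ : Fin n => stdGaussian (EuclideanSpace ℝ (Fin d)))) := by
    have hm : Measurable (fun x : Fin d → ℝ => (WithLp.toLp 2 x : EuclideanSpace ℝ (Fin d))) :=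
      WithLp.measurable_toLp 2 _
    refine ⟨measurable_pi_lambda _ fun i => hm.comp (measurable_pi_apply i), ?_⟩
    have hs : ∀ i : Fin n, SigmaFinite (Measure.map
      (fun x : Fin d → ℝ => (WithLp.toLp 2 x : EuclideanSpace ℝ (Fin d)))
        (Measure.pi (fun _ : Fin d => gaussianReal 0 1))) := by
      intro i
      rw [map_pi_eq_stdGaussian]
      infer_instance
    rw [Measure.pi_map_pi (hμ := hs) (fun i => hm.aemeasurable)]
    simp only [map_pi_eq_stdGaussian]
  exact h3.comp (h2.comp h1)

lemma prob_bound {Ω : Type*} [MeasurableSpace Ω] (μ : Measure Ω) [IsProbabilityMeasure μ]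
    {n d : ℕ} (X : Ω → Matrix (Fin n) (Fin d) ℝ) (hX : IsGaussSample μ X) (v : Fin d → ℝ)
    (p : Fin n → Prop) [DecidablePred p] (τ₁ τ₂ : ENNReal)
    (h1 : (Measure.pi (fun _ : {i // p i} => stdGaussian (EuclideanSpace ℝ (Fin d))))
      (badA {i // p i} d) ≤ τ₁)
    (h2 : ∀ xA : {i // p i} → EuclideanSpace ℝ (Fin d), xA ∉ badA {i // p i} d →
      (Measure.pi (fun _ : {i // ¬ p i} => stdGaussian (EuclideanSpace ℝ (Fin d))))
        {xB | DualCert (WithLp.toLp 2 v) xA xB} ≤ τ₂) :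
    μ {ω | SVPholds (X ω) (fun i => if 0 < v ⬝ᵥ X ω i then (1 : ℝ) else -1)} ≤ τ₁ + τ₂ := by
  set E := EuclideanSpace ℝ (Fin d)
  set μA := Measure.pi (fun _ : {i // p i} => stdGaussian E)
  set μB := Measure.pi (fun _ : {i // ¬ p i} => stdGaussian E)
  have hmp := (measurePreserving_piEquivPiSubtypeProd (fun _ : Fin n => stdGaussian E) p).comp
    (law_rows μ X hX)
  have hS := cert_meas (A := {i // p i}) (B := {i // ¬ p i}) (F := E) (WithLp.toLp 2 v)
  set S := {q : ({i // p i} → E) × ({i // ¬ p i} → E) | DualCert (WithLp.toLp 2 v) q.1 q.2}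
    with hSdef
  calc _ ≤ μ ((MeasurableEquiv.piEquivPiSubtypeProd (fun _ : Fin n => E) p ∘
        fun ω (i : Fin n) => (WithLp.toLp 2 (X ω i) : E)) ⁻¹' S) := by
        apply measure_mono
        intro ω hω
        exact svp_cert (X ω) v p hω
    _ = (μA.prod μB) S := hmp.measure_preimage hS.nullMeasurableSet
    _ = ∫⁻ a, μB (Prod.mk a ⁻¹' S) ∂μA := Measure.prod_apply hS
    _ ≤ ∫⁻ a, ((badA {i // p i} d).indicator 1 a + τ₂) ∂μA := by
        apply lintegral_mono
        intro a
        by_cases ha : a ∈ badA {i // p i} d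
        · simp only [ha, Set.indicator_of_mem, Pi.one_apply]
          exact le_add_right prob_le_one
        · simp only [ha, not_false_eq_true, Set.indicator_of_notMem, zero_add]
          exact h2 a ha
    _ = μA (badA {i // p i} d) + τ₂ := by
        rw [lintegral_add_right _ measurable_const, lintegral_indicator_one (badA_meas d)]
        simp
    _ ≤ _ := by gcongr

end transfer

section final

lemma exists_root (n : ℕ) : ∃ k : ℕ, k ^ 10 ≤ n ∧ n < (k + 1) ^ 10 := by
  have h : ∃ k : ℕ, n < (k + 1) ^ 10 :=
    ⟨n, lt_of_lt_of_le (Nat.lt_succ_self n) (Nat.le_self_pow (by norm_num) _)⟩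
  refine ⟨Nat.find h, ?_, Nat.find_spec h⟩
  rcases Nat.eq_zero_or_pos (Nat.find h) with h0 | h0
  · rw [h0]; simp
  · have := Nat.find_min h (m := Nat.find h - 1) (by omega)
    rw [Nat.sub_add_cancel h0] at this
    omega

lemma num_q : Real.exp (-1) * √2 ≤ 3 / 5 := by
  have h1 : Real.exp (-1) ≤ 0.37 := by
    rw [Real.exp_neg]
    have := Real.exp_one_gt_d9
    rw [inv_le_comm₀ (Real.exp_pos _) (by norm_num)]
    norm_num at this ⊢
    linarith
  have h2 : √2 ≤ 1.5 := by
    rw [Real.sqrt_le_left (by norm_num)]; norm_num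
  calc _ ≤ (0.37 : ℝ) * 1.5 := by gcongr
    _ ≤ _ := by norm_num

lemma num_tau1 (n m d k : ℕ) (hmn : m ≤ n) (hd : 6 * n ≤ d) (hk : 0 < k) (hkn : k ≤ n) :
    (2 : ℝ) ^ m * (Real.exp (-1) * √2) ^ d ≤ 1 / k := by
  have hk0 : (0 : ℝ) < k := by exact_mod_cast hk
  have hkn' : (k : ℝ) ≤ n := by exact_mod_cast hkn
  calc (2 : ℝ) ^ m * (Real.exp (-1) * √2) ^ d ≤ 2 ^ n * (3 / 5) ^ d := by
        gcongr
        · norm_num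
        · exact num_q
    _ ≤ 2 ^ n * (3 / 5) ^ (6 * n) := by
        gcongr 2 ^ n * ?_
        exact pow_le_pow_of_le_one (by norm_num) (by norm_num) hd
    _ = (2 * (3 / 5) ^ 6) ^ n := by rw [mul_pow, pow_mul]
    _ ≤ (1 / 2) ^ n := by gcongr; norm_num
    _ ≤ 1 / k := by
        rw [_root_.one_div_pow]
        have h1 : (n : ℝ) ≤ 2 ^ n := by exact_mod_cast (Nat.lt_two_pow_self).le
        exact one_div_le_one_div_of_le hk0 (hkn'.trans h1)

lemma num_log (k : ℕ) (hk : 10 ^ 4 ≤ k) : 9 ≤ Real.log k := by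
  have hkR : (10 : ℝ) ^ 4 ≤ k := by exact_mod_cast hk
  rw [Real.le_log_iff_exp_le (by linarith)]
  have h1 : Real.exp 9 = Real.exp 1 ^ 9 := by rw [← Real.exp_nat_mul]; norm_num
  have h2 := Real.exp_one_lt_d9
  calc Real.exp 9 = Real.exp 1 ^ 9 := h1
    _ ≤ 2.7182818286 ^ 9 := by gcongr
    _ ≤ 10 ^ 4 := by norm_num
    _ ≤ k := hkR

lemma num_exp (q : ℝ) (hq : 100 ≤ q) : Real.exp (-(q * (2 * Real.pi)⁻¹)) ≤ 1 / q ^ 2 := by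
  have hpi := Real.pi_lt_d2
  have h0 : 0 < q := by linarith
  have h1 : q / 7 ≤ q * (2 * Real.pi)⁻¹ := by
    rw [← div_eq_mul_inv]
    have := Real.pi_pos
    gcongr
    linarith
  have h2 := Real.pow_div_factorial_le_exp (q / 7) (by positivity) 6
  have h6 : ((Nat.factorial 6 : ℕ) : ℝ) = 720 := by norm_num [Nat.factorial]
  rw [h6] at h2
  have h3 : q ^ 2 ≤ Real.exp (q / 7) := by
    refine le_trans ?_ h2
    have h4 : (100 : ℝ) ^ 4 ≤ q ^ 4 := by gcongr
    have h5 : q ^ 2 * 100 ^ 4 ≤ q ^ 2 * q ^ 4 := by gcongr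
    have h7 : (q / 7) ^ 6 / 720 = q ^ 2 * q ^ 4 / (7 ^ 6 * 720) := by ring
    rw [h7, le_div_iff₀ (by norm_num)]
    have : 0 < q ^ 2 := by positivity
    nlinarith
  rw [Real.exp_neg, one_div]
  exact inv_anti₀ (by positivity) (h3.trans (Real.exp_le_exp.2 h1))

lemma num_R (n m d l r : ℝ) (hm0 : 0 < m) (hl : 0 < l) (hmn : n ≤ 2 * m)
    (hdl : d ≤ n * l / 1024) (hr : 2 ≤ r) (hrsq : r ^ 2 = l / 2) :
    4 * √(4 * m * d) ≤ (r - 1) * m := by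
  have hs0 : 0 ≤ (r - 1) * m := mul_nonneg (by linarith) hm0.le
  have h1 : √(4 * m * d) ≤ (r - 1) * m / 4 := by
    rw [Real.sqrt_le_left (by linarith)]
    have h2 : l / 8 ≤ (r - 1) ^ 2 := by nlinarith
    have h3 : (l / 8) * m ^ 2 ≤ (r - 1) ^ 2 * m ^ 2 := by gcongr
    have h4 : d ≤ m * l / 512 := by
      have : n * l ≤ 2 * m * l := by gcongr
      linarith
    have h5 : 4 * m * d ≤ 4 * m * (m * l / 512) := by gcongr
    have h6 : ((r - 1) * m / 4) ^ 2 = (r - 1) ^ 2 * m ^ 2 / 16 := by ring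
    have h7 : 4 * m * (m * l / 512) = (l / 8) * m ^ 2 / 16 := by ring
    linarith
  linarith

end final

end helpers

set_option maxHeartbeats 1000000

/-- Theorem 5: lower bound on the SVP threshold for isotropic Gaussian features with
data-dependent labels `yᵢ = sign(vᵀxᵢ)`. -/
theorem stmt11 :
    ∃ C₁ > (0 : ℝ), ∃ C₂ > (0 : ℝ), ∃ C₃ > (0 : ℝ),
      ∀ (Ω : Type*) (_ : MeasurableSpace Ω) (μ : Measure Ω), IsProbabilityMeasure μ →
      ∀ (n d : ℕ), 0 < n → 0 < d →
      ∀ v : Fin d → ℝ, enorm2 v = 1 →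
      ∀ X : Ω → Matrix (Fin n) (Fin d) ℝ, IsGaussSample μ X →
      ∀ δ : ℝ, 0 < δ → δ < 1 / 2 →
        C₁ * (Real.log (1 / δ)) ^ 2 ≤ n →
        (d : ℝ) ≤ C₂ * n * Real.log n →
        C₃ * n * Real.log (1 / δ) ≤ d →
        μ {ω | SVPholds (X ω)
            (fun i => if 0 < v ⬝ᵥ X ω i then (1 : ℝ) else -1)} ≤ ENNReal.ofReal δ := by
  refine ⟨3 * 10 ^ 40, by norm_num, 1 / 20480, by norm_num, 10, by norm_num, ?_⟩
  intro Ω _ μ hμ n d hn hd v hv X hX δ hδ0 hδ1 hC1 hC2 hC3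
  set L := Real.log (1 / δ) with hL
  have hL2 : 0.69 ≤ L := by
    have h1 : Real.log 2 ≤ L := by
      apply Real.log_le_log (by norm_num)
      rw [le_div_iff₀ hδ0]; linarith
    have := Real.log_two_gt_d9
    norm_num at this ⊢
    linarith
  have hn0 : (0 : ℝ) < n := by exact_mod_cast hn
  have hnbig : (10 : ℝ) ^ 40 ≤ n := by
    have h1 : (0.69 : ℝ) ^ 2 ≤ L ^ 2 := by gcongr
    have h2 : (3 * 10 ^ 40 : ℝ) * 0.69 ^ 2 ≤ 3 * 10 ^ 40 * L ^ 2 := by gcongr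
    refine le_trans ?_ (h2.trans hC1)
    norm_num
  have hnbig' : 10 ^ 40 ≤ n := by exact_mod_cast hnbig
  have hd6 : 6 * n ≤ d := by
    have h1 : (10 : ℝ) * n * 0.69 ≤ 10 * n * L := by gcongr
    have h2 : (6 : ℝ) * n ≤ d := by
      have h3 := h1.trans hC3
      norm_num at h3
      linarith
    exact_mod_cast h2
  obtain ⟨k, hkn, hnk⟩ := exists_root n
  have hk4 : 10 ^ 4 ≤ k := by
    by_contra h
    push Not at h
    have h1 : (k + 1) ^ 10 ≤ (10 ^ 4) ^ 10 := Nat.pow_le_pow_left h 10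
    have h2 : (10 ^ 4) ^ 10 = 10 ^ 40 := by norm_num
    omega
  have hk2n : 2 * k ≤ n := by
    have h1 : (10 ^ 4) ^ 9 ≤ k ^ 9 := Nat.pow_le_pow_left hk4 9
    have h2 : k ^ 10 = k * k ^ 9 := by ring
    have h3 : k * 2 ≤ k * k ^ 9 := Nat.mul_le_mul_left k (le_trans (by norm_num) h1)
    omega
  have hk0 : (0 : ℝ) < k := by
    have : 0 < k := by omega
    exact_mod_cast this
  have hkR : (10 : ℝ) ^ 4 ≤ k := by exact_mod_cast hk4
  set l := Real.log k with hl
  have hl9 : 9 ≤ l := num_log k hk4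
  have hlogn : Real.log n ≤ 20 * l := by
    have h1 : k + 1 ≤ k ^ 2 := by nlinarith
    have h2 : n ≤ k ^ 20 := by
      calc n ≤ (k + 1) ^ 10 := hnk.le
        _ ≤ (k ^ 2) ^ 10 := Nat.pow_le_pow_left h1 10
        _ = k ^ 20 := by ring
    have h3 : (n : ℝ) ≤ (k : ℝ) ^ 20 := by exact_mod_cast h2
    calc Real.log n ≤ Real.log ((k : ℝ) ^ 20) := Real.log_le_log hn0 h3
      _ = 20 * l := by rw [Real.log_pow]; norm_num [hl]
  have hdl : (d : ℝ) ≤ n * l / 1024 := by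
    calc (d : ℝ) ≤ 1 / 20480 * n * Real.log n := hC2
      _ ≤ 1 / 20480 * n * (20 * l) := by gcongr
      _ = _ := by ring
  have hLl : L ≤ l / 2 := by
    have h1 : n * (10 * L) ≤ n * (l / 1024) := by linarith
    have h2 := le_of_mul_le_mul_left h1 hn0
    linarith
  -- the split
  let p : Fin n → Prop := fun i => k ≤ i.val
  have hcB : Fintype.card {i : Fin n // ¬ p i} = k := by
    have : Fintype.card {i : Fin n // ¬ p i} = Fintype.card {i : Fin n // i.val < k} := by
      apply Fintype.card_congr
      exact Equiv.subtypeEquivRight (fun i => not_le)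
    rw [this, Fintype.card_subtype]
    have h2 := Fin.card_filter_val_lt (n := n) (m := k)
    rw [h2]
    omega
  have hcA : Fintype.card {i : Fin n // p i} = n - k := by
    have := Fintype.card_subtype_compl p
    rw [hcB, Fintype.card_fin] at this
    have h3 := Fintype.card_subtype_le p
    rw [Fintype.card_fin] at h3
    omega
  have : Nonempty {i : Fin n // p i} := Fintype.card_pos_iff.1 (by omega)
  set m := n - k with hm
  have hmn : (n : ℝ) ≤ 2 * m := by
    have : n ≤ 2 * m := by omega
    exact_mod_cast this
  have hm0 : (0 : ℝ) < m := by linarith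
  have hd0 : (0 : ℝ) < d := by exact_mod_cast hd
  have hr : 2 ≤ √(l / 2) := Real.le_sqrt_of_sq_le (by linarith)
  have hrsq : √(l / 2) ^ 2 = l / 2 := Real.sq_sqrt (by linarith)
  set r := √(l / 2) with hrdef
  have hlk : l ≤ k := by
    have := Real.log_le_sub_one_of_pos hk0
    linarith
  have hEfin : Module.finrank ℝ (EuclideanSpace ℝ (Fin d)) = d := by simp
  have hmain := prob_bound μ X hX v p (ENNReal.ofReal (1 / k))
    (ENNReal.ofReal (3 / k + Real.exp (-(k * ((2 * Real.pi)⁻¹ * Real.exp (-(r - 1 + 1) ^ 2))))))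
    (by
      refine (badA_bound d).trans (ENNReal.ofReal_le_ofReal ?_)
      rw [hcA]
      exact num_tau1 n m d k (by omega) hd6 (by omega) (by omega))
    (by
      intro xA hxA
      refine B_bound (WithLp.toLp 2 v) (by rw [← enorm2_eq_s11, hv]) xA k (r - 1)
        (√(4 * (Fintype.card {i // p i} : ℝ) * d)) hcB (by omega) (by rw [hEfin]; omega)
        (by rw [hEfin, hcA]; omega) (by linarith) (by nlinarith) (not_badA _ xA hxA) ?_ ?_
      · rw [hcA]
        exact num_R n m d l r hm0 (by linarith) hmn hdl hr hrsq
      · rw [hcA]; positivity)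
  refine hmain.trans ?_
  rw [← ENNReal.ofReal_add (by positivity) (by positivity)]
  apply ENNReal.ofReal_le_ofReal
  rw [sub_add_cancel, hrsq]
  set q := Real.exp (l / 2) with hq
  have hqk : q ^ 2 = k := by
    rw [hq, ← Real.exp_nat_mul, show ((2 : ℕ) : ℝ) * (l / 2) = l by push_cast; ring, hl,
      Real.exp_log hk0]
  have hq0 : 0 < q := Real.exp_pos _
  have hq100 : 100 ≤ q := by
    refine le_of_pow_le_pow_left₀ (n := 2) (by norm_num) hq0.le ?_
    rw [hqk]; norm_num at hkR ⊢; linarith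
  have hkq : (k : ℝ) * ((2 * Real.pi)⁻¹ * Real.exp (-(l / 2))) = q * (2 * Real.pi)⁻¹ := by
    rw [Real.exp_neg, ← hq, ← hqk]
    field_simp
  rw [hkq, ← hqk]
  have h1 := num_exp q hq100
  have hδ : 1 / q ≤ δ := by
    have h2 : δ = Real.exp (-L) := by
      rw [hL, one_div, Real.log_inv, neg_neg, Real.exp_log hδ0]
    rw [h2, one_div, hq, ← Real.exp_neg]
    exact Real.exp_le_exp.2 (by linarith)
  have h5 : 5 / q ^ 2 ≤ 1 / q := by
    rw [div_le_div_iff₀ (by positivity) hq0]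
    nlinarith
  calc _ ≤ 1 / q ^ 2 + (3 / q ^ 2 + 1 / q ^ 2) := by gcongr
    _ = 5 / q ^ 2 := by ring
    _ ≤ δ := h5.trans hδ

end
end
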